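/- arXiv:math/0505058 — 6 statements merged into one kernel-verified Lean document; each statement's English description precedes it below -/
import Mathlib

section
/- For every positive integer r and every complex number x that is not a positive integer, ∑_{k₁ > k₂ > ⋯ > k_r > 0} (1/k₁) · ∏_{j=1}^r 1/(k_j − x) = ∑_{n=1}^∞ 1/(n^r (n − x)), where the left-hand sum ranges over all strictly decreasing r-tuples of positive integers. -/
open scoped BigOperators

/-!
For Pochhammer symbols `(a)ₙ` with `a = 1 - x`, put `C(m, n) = (a)ₘ (a)ₙ / (a)ₘ₊ₙ`. This connector
is symmetric, equals `1` when `m = 0` or `n = 0`, and satisfies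
`C(m, n) - C(m, n + 1) = m C(m, n + 1) / (n + 1 - x)`. Telescoping in `n`, one entry of the tuple
at a time, gives `∑ C(m, k₁) ∏ 1 / (kⱼ - x) = 1 / mʳ`. Telescoping in `m` gives
`∑_{n < N} C(n + 1, k) / (n + 1 - x) = (1 - C(N, k)) / k`. Summing `C(n + 1, k₁) ∏ 1 / (kⱼ - x)`
against `1 / (n + 1 - x)` over `n < N` therefore yields the `N`-th partial sum of the right-hand
side on the one hand, and the left-hand side weighted by `1 - C(N, k₁)` on the other. Since `C` is
bounded and `C(N, k) → 0` for `k > 0`, dominated convergence concludes.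
-/

open Filter Topology Asymptotics

section Connector

variable {K : Type*} [Field K] {x : K}

/-- The connector `(1 - x)ₘ (1 - x)ₙ / (1 - x)ₘ₊ₙ` of the connected-sum method, where `(a)ₙ` is the
rising factorial. It plays the role of a kernel linking the sum over tuples to the single sum. -/
noncomputable def connector (x : K) (m n : ℕ) : K :=
  (ascPochhammer K m).eval (1 - x) * (ascPochhammer K n).eval (1 - x) /
    (ascPochhammer K (m + n)).eval (1 - x)

lemma connector_comm (x : K) (m n : ℕ) : connector x m n = connector x n m := by
  rw [connector, connector, mul_comm, add_comm]

lemma connector_succ_right (x : K) (m n : ℕ) :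
    connector x m (n + 1) = connector x m n * ((n + 1 - x) / (m + n + 1 - x)) := by
  rw [connector, connector, ← add_assoc, ascPochhammer_succ_eval, ascPochhammer_succ_eval,
    div_mul_div_comm]
  push_cast
  ring_nf

lemma connector_succ_left (x : K) (m n : ℕ) :
    connector x (m + 1) n = connector x m n * ((m + 1 - x) / (m + n + 1 - x)) := by
  rw [connector_comm, connector_succ_right, connector_comm, add_comm (n : K)]

lemma connector_zero_right (hx : ∀ k : ℕ, x ≠ k + 1) (m : ℕ) : connector x m 0 = 1 := by
  have pochhammer_ne_zero : (ascPochhammer K m).eval (1 - x) ≠ 0 := by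
    rw [Ne, ascPochhammer_eval_eq_zero_iff]
    rintro ⟨k, -, hk⟩
    exact hx k (by linear_combination -hk)
  simp [connector, pochhammer_ne_zero]

lemma connector_zero_left (hx : ∀ k : ℕ, x ≠ k + 1) (n : ℕ) : connector x 0 n = 1 := by
  rw [connector_comm, connector_zero_right hx]

lemma connector_sub_connector_succ_right (hx : ∀ k : ℕ, x ≠ k + 1) (m n : ℕ) :
    connector x m n - connector x m (n + 1) = m * (connector x m (n + 1) / (n + 1 - x)) := by
  have hn : (n : K) + 1 - x ≠ 0 := sub_ne_zero.mpr (hx n).symm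
  have hmn : (m : K) + n + 1 - x ≠ 0 := by
    simpa only [Nat.cast_add] using sub_ne_zero.mpr (hx (m + n)).symm
  rw [connector_succ_right]
  field_simp
  ring

lemma sum_range_connector_succ_div (hx : ∀ k : ℕ, x ≠ k + 1) (N : ℕ) {k : ℕ}
    (hk : (k : K) ≠ 0) :
    ∑ n ∈ Finset.range N, connector x (n + 1) k / (n + 1 - x) = (1 - connector x N k) / k := by
  have term_eq (n : ℕ) :
      connector x n k - connector x (n + 1) k = k * (connector x (n + 1) k / (n + 1 - x)) := by
    simpa only [connector_comm x k] using connector_sub_connector_succ_right hx k n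
  rw [eq_div_iff hk, mul_comm, Finset.mul_sum]
  simp_rw [← term_eq]
  rw [Finset.sum_range_sub' (fun n ↦ connector x n k), connector_zero_left hx]

end Connector

lemma summable_mul_of_isBigO_inv {R : Type*} [NormedRing R] [CompleteSpace R] {u v : ℕ → R}
    (hu : u =O[atTop] fun n : ℕ ↦ (n : ℝ)⁻¹) (hv : v =O[atTop] fun n : ℕ ↦ (n : ℝ)⁻¹) :
    Summable fun n ↦ u n * v n := by
  refine summable_of_isBigO_nat (Real.summable_nat_pow_inv.mpr one_lt_two) ?_
  simpa only [pow_two, mul_inv] using hu.mul hv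

section ConnectorAsymptotics

variable {x : ℂ}

lemma isBigO_inv_natCast_sub (x : ℂ) :
    (fun n : ℕ ↦ ((n : ℂ) - x)⁻¹) =O[atTop] fun n : ℕ ↦ (n : ℝ)⁻¹ := by
  have norm_natCast_tendsto : Tendsto (norm ∘ fun n : ℕ ↦ (n : ℂ)) atTop atTop := by
    simpa only [Function.comp_def, Complex.norm_natCast] using
      tendsto_natCast_atTop_atTop (R := ℝ)
  have equiv : (fun n : ℕ ↦ (n : ℂ) - x) ~[atTop] fun n : ℕ ↦ (n : ℂ) := by
    simpa only [sub_eq_add_neg] using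
      IsEquivalent.refl.add_const_of_norm_tendsto_atTop (c := -x) norm_natCast_tendsto
  refine equiv.inv.isBigO.trans ?_
  exact isBigO_of_le _ fun n ↦ by simp

lemma isBigO_connector_succ_of_isBigO_one {m : ℕ}
    (hm : connector x m =O[atTop] fun _ ↦ (1 : ℝ)) :
    connector x (m + 1) =O[atTop] fun n : ℕ ↦ (n : ℝ)⁻¹ := by
  have := hm.mul ((isBigO_inv_natCast_sub (x - m - 1)).const_mul_left (m + 1 - x))
  refine this.congr (fun n ↦ ?_) fun n ↦ one_mul _
  rw [connector_succ_left, div_eq_mul_inv]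
  ring_nf

lemma isBigO_connector_one (hx : ∀ k : ℕ, x ≠ k + 1) (m : ℕ) :
    connector x m =O[atTop] fun _ ↦ (1 : ℝ) := by
  induction m with
  | zero => exact isBigO_of_le _ fun n ↦ by simp [connector_zero_left hx]
  | succ m ih =>
    exact (isBigO_connector_succ_of_isBigO_one ih).trans
      (tendsto_inv_atTop_nhds_zero_nat.isBigO_one ℝ)

lemma isBigO_connector_inv (hx : ∀ k : ℕ, x ≠ k + 1) {m : ℕ} (hm : m ≠ 0) :
    connector x m =O[atTop] fun n : ℕ ↦ (n : ℝ)⁻¹ := by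
  obtain ⟨m, rfl⟩ := Nat.exists_eq_add_one_of_ne_zero hm
  exact isBigO_connector_succ_of_isBigO_one (isBigO_connector_one hx m)

lemma tendsto_connector_atTop (hx : ∀ k : ℕ, x ≠ k + 1) {m : ℕ} (hm : m ≠ 0) :
    Tendsto (connector x m) atTop (𝓝 0) :=
  (isBigO_connector_inv hx hm).trans_tendsto tendsto_inv_atTop_nhds_zero_nat

lemma norm_connector_succ_left_le {m : ℕ} (hm : x.re ≤ m + 1) (n : ℕ) :
    ‖connector x (m + 1) n‖ ≤ ‖connector x m n‖ := by
  have factor_le : ‖(m : ℂ) + 1 - x‖ ≤ ‖(m : ℂ) + n + 1 - x‖ := by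
    rw [← sq_le_sq₀ (norm_nonneg _) (norm_nonneg _), Complex.sq_norm, Complex.sq_norm,
      Complex.normSq_apply, Complex.normSq_apply]
    simp only [Complex.sub_re, Complex.add_re, Complex.natCast_re, Complex.one_re,
      Complex.sub_im, Complex.add_im, Complex.natCast_im, Complex.one_im]
    nlinarith [Nat.cast_nonneg (α := ℝ) n]
  rw [connector_succ_left, norm_mul, norm_div]
  exact mul_le_of_le_one_right (norm_nonneg _) (div_le_one_of_le₀ factor_le (norm_nonneg _))

-- For `m ≥ re x` the norm decreases with `m`, which leaves only finitely many values of `m`.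
lemma exists_norm_connector_le (hx : ∀ k : ℕ, x ≠ k + 1) : ∃ B, ∀ m n, ‖connector x m n‖ ≤ B := by
  choose b hb using fun m ↦ isBigO_one_nat_atTop_iff.mp (isBigO_connector_one hx m)
  obtain ⟨M, hM⟩ := exists_nat_ge x.re
  obtain ⟨B, hB⟩ := ((Finset.range (M + 1)).image b).exists_le
  have le_of_le {m : ℕ} (hm : m ≤ M) (n : ℕ) : ‖connector x m n‖ ≤ B :=
    (hb m n).trans (hB _ (Finset.mem_image_of_mem b (Finset.mem_range_succ_iff.mpr hm)))
  refine ⟨B, fun m n ↦ (le_total m M).elim (le_of_le · n) fun hMm ↦ ?_⟩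
  induction m, hMm using Nat.le_induction with
  | base => exact le_of_le le_rfl n
  | succ m hMm ih =>
    have hm : x.re ≤ m + 1 := by linarith [(Nat.cast_le (α := ℝ)).mpr hMm]
    exact (norm_connector_succ_left_le hm n).trans ih

lemma hasSum_connector_div (hx : ∀ k : ℕ, x ≠ k + 1) {m : ℕ} (hm : m ≠ 0) (n : ℕ) :
    HasSum (fun i : ℕ ↦ connector x m (i + n + 1) / ((i + n + 1 : ℕ) - x))
      (connector x m n / m) := by
  have summable : Summable fun i : ℕ ↦ connector x m (i + n + 1) / ((i + n + 1 : ℕ) - x) := by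
    have := summable_mul_of_isBigO_inv (isBigO_connector_inv hx hm) (isBigO_inv_natCast_sub x)
    simpa only [div_eq_mul_inv, add_assoc] using (summable_nat_add_iff (n + 1)).mpr this
  have term_eq (i : ℕ) : connector x m (i + n + 1) / ((i + n + 1 : ℕ) - x) =
      (connector x m (i + n) - connector x m (i + 1 + n)) / m := by
    rw [eq_div_iff (Nat.cast_ne_zero.mpr hm), mul_comm, add_right_comm i 1 n,
      connector_sub_connector_succ_right hx, Nat.cast_succ (i + n)]
  have partial_sum (N : ℕ) :
      ∑ i ∈ Finset.range N, connector x m (i + n + 1) / ((i + n + 1 : ℕ) - x) =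
        (connector x m n - connector x m (N + n)) / m := by
    simp_rw [term_eq]
    rw [← Finset.sum_div, Finset.sum_range_sub' (fun i ↦ connector x m (i + n)), zero_add]
  have shifted_tendsto : Tendsto (fun N ↦ connector x m (N + n)) atTop (𝓝 0) :=
    (tendsto_connector_atTop hx hm).comp (tendsto_add_atTop_nat n)
  rw [summable.hasSum_iff_tendsto_nat]
  simp_rw [partial_sum]
  simpa only [sub_zero] using (shifted_tendsto.const_sub (connector x m n)).div_const (m : ℂ)

end ConnectorAsymptotics

/-- Strictly decreasing `r`-tuples of positive integers, the index set of the multiple sum. -/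
abbrev DecreasingTuple (r : ℕ) := {f : Fin r → ℕ // (∀ i, 0 < f i) ∧ StrictAnti f}

namespace DecreasingTuple

instance : Unique (DecreasingTuple 0) where
  default := ⟨Fin.elim0, fun i ↦ i.elim0, fun i ↦ i.elim0⟩
  uniq _ := Subsingleton.elim _ _

/-- The largest entry of a decreasing tuple. The empty tuple gets the value `0`, so that in all
lengths the numbers that can be put in front of `f` are exactly those exceeding `f.largest`. -/
def largest : {r : ℕ} → DecreasingTuple r → ℕ
  | 0, _ => 0
  | _ + 1, f => f.1 0

lemma le_largest {r : ℕ} (f : DecreasingTuple r) (i : Fin r) : f.1 i ≤ f.largest := by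
  cases r with
  | zero => exact i.elim0
  | succ r => exact f.2.2.antitone (Fin.zero_le i)

/-- The decreasing tuple without its largest entry. -/
def tail {r : ℕ} (f : DecreasingTuple (r + 1)) : DecreasingTuple r :=
  ⟨Fin.tail f.1, fun i ↦ f.2.1 i.succ, f.2.2.comp_strictMono Fin.strictMono_succ⟩

lemma largest_tail_lt {r : ℕ} (f : DecreasingTuple (r + 1)) : f.tail.largest < f.1 0 := by
  cases r with
  | zero => exact f.2.1 0
  | succ r => exact f.2.2 (Fin.succ_pos 0)

/-- Putting a new largest entry in front of a decreasing tuple `f`. The new entry is encoded by its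
excess over the least admissible one, `f.largest + 1`. -/
def consEquiv (r : ℕ) : DecreasingTuple r × ℕ ≃ DecreasingTuple (r + 1) where
  toFun p := ⟨Fin.cons (p.2 + p.1.largest + 1) p.1.1, Fin.cases (Nat.succ_pos _) p.1.2.1, by
    refine Fin.cases (Fin.cases (by simp) fun j _ ↦ ?_) fun i ↦ Fin.cases (by simp) fun j hij ↦ ?_
    · simpa using Nat.lt_succ_of_le ((p.1.le_largest j).trans (Nat.le_add_left _ p.2))
    · simpa using p.1.2.2 (Fin.succ_lt_succ_iff.mp hij)⟩
  invFun f := (f.tail, f.1 0 - f.tail.largest - 1)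
  left_inv p := by
    refine Prod.ext rfl ?_
    change p.2 + p.1.largest + 1 - p.1.largest - 1 = p.2
    omega
  right_inv f := by
    have := f.largest_tail_lt
    have head_eq : f.1 0 - f.tail.largest - 1 + f.tail.largest + 1 = f.1 0 := by omega
    refine Subtype.ext ?_
    simp only [head_eq]
    exact Fin.cons_self_tail f.1

end DecreasingTuple

lemma summable_prod_apply {ι : Type*} {g : ι → ℝ} (hg : Summable g) (hg₀ : 0 ≤ g) (r : ℕ) :
    Summable fun f : Fin r → ι ↦ ∏ j, g (f j) := by
  induction r with
  | zero => exact (hasSum_fintype _).summable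
  | succ r ih =>
    rw [← (Fin.consEquiv fun _ : Fin (r + 1) ↦ ι).summable_iff]
    refine (hg.mul_of_nonneg ih hg₀ fun f ↦ Finset.prod_nonneg fun i _ ↦ hg₀ _).congr fun p ↦ ?_
    simp [Fin.prod_univ_succ, Fin.consEquiv]

-- The extra decay `1 / k₁` is spread evenly over all entries, so that afterwards the sum over
-- tuples is dominated by a product of `r + 1` convergent series.
lemma inv_head_le_prod_rpow {r : ℕ} (f : DecreasingTuple (r + 1)) :
    (f.1 0 : ℝ)⁻¹ ≤ ∏ j, (f.1 j : ℝ) ^ (-(r + 1 : ℝ)⁻¹) := by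
  have head_pos : (0 : ℝ) < f.1 0 := Nat.cast_pos.mpr (f.2.1 0)
  calc (f.1 0 : ℝ)⁻¹ = ∏ _j : Fin (r + 1), (f.1 0 : ℝ) ^ (-(r + 1 : ℝ)⁻¹) := by
        rw [Finset.prod_const, Finset.card_univ, Fintype.card_fin,
          ← Real.rpow_mul_natCast head_pos.le, ← Real.rpow_neg_one]
        push_cast
        congr 1
        field_simp
    _ ≤ ∏ j, (f.1 j : ℝ) ^ (-(r + 1 : ℝ)⁻¹) := by
        refine Finset.prod_le_prod (fun _ _ ↦ by positivity) fun j _ ↦ ?_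
        exact Real.rpow_le_rpow_of_nonpos (Nat.cast_pos.mpr (f.2.1 j))
          (Nat.cast_le.mpr (f.le_largest j)) (neg_nonpos.mpr (by positivity))

lemma summable_inv_head_mul_prod_inv (r : ℕ) :
    Summable fun f : DecreasingTuple (r + 1) ↦ (f.1 0 : ℝ)⁻¹ * ∏ j, (f.1 j : ℝ)⁻¹ := by
  have summable_rpow : Summable fun n : ℕ ↦ (n : ℝ) ^ (-(r + 1 : ℝ)⁻¹ - 1) :=
    Real.summable_nat_rpow.mpr (by linarith [inv_pos.mpr (Nat.cast_add_one_pos (α := ℝ) r)])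
  refine .of_nonneg_of_le (fun _ ↦ by positivity) (fun f ↦ ?_)
    ((summable_prod_apply summable_rpow (fun _ ↦ by positivity) (r + 1)).subtype _)
  calc (f.1 0 : ℝ)⁻¹ * ∏ j, (f.1 j : ℝ)⁻¹
      ≤ (∏ j, (f.1 j : ℝ) ^ (-(r + 1 : ℝ)⁻¹)) * ∏ j, (f.1 j : ℝ)⁻¹ := by
        gcongr
        exact inv_head_le_prod_rpow f
    _ = ∏ j, (f.1 j : ℝ) ^ (-(r + 1 : ℝ)⁻¹ - 1) := by
        rw [← Finset.prod_mul_distrib]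
        refine Finset.prod_congr rfl fun j _ ↦ ?_
        rw [Real.rpow_sub_one (Nat.cast_ne_zero.mpr (f.2.1 j).ne'), div_eq_mul_inv]

lemma summable_head_mul_prod {R : Type*} [NormedCommRing R] [CompleteSpace R] {u v : ℕ → R}
    (hu : u =O[atTop] fun n : ℕ ↦ (n : ℝ)⁻¹) (hv : v =O[atTop] fun n : ℕ ↦ (n : ℝ)⁻¹) (r : ℕ) :
    Summable fun f : DecreasingTuple (r + 1) ↦ u (f.1 0) * ∏ j, v (f.1 j) := by
  obtain ⟨A, hA, hu⟩ := bound_of_isBigO_nat_atTop hu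
  obtain ⟨B, _hB, hv⟩ := bound_of_isBigO_nat_atTop hv
  have entry_ne_zero (f : DecreasingTuple (r + 1)) (j : Fin (r + 1)) : (f.1 j : ℝ)⁻¹ ≠ 0 :=
    inv_ne_zero (Nat.cast_ne_zero.mpr (f.2.1 j).ne')
  refine .of_norm_bounded ((summable_inv_head_mul_prod_inv r).mul_left (A * B ^ (r + 1)))
    fun f ↦ ?_
  calc ‖u (f.1 0) * ∏ j, v (f.1 j)‖ ≤ ‖u (f.1 0)‖ * ∏ j, ‖v (f.1 j)‖ := by
        refine (norm_mul_le _ _).trans ?_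
        gcongr
        exact Finset.norm_prod_le' _ Finset.univ_nonempty _
    _ ≤ A * ‖(f.1 0 : ℝ)⁻¹‖ * ∏ j, B * ‖(f.1 j : ℝ)⁻¹‖ := by
        gcongr with j
        · exact hu (entry_ne_zero f 0)
        · exact hv (entry_ne_zero f j)
    _ = A * B ^ (r + 1) * ((f.1 0 : ℝ)⁻¹ * ∏ j, (f.1 j : ℝ)⁻¹) := by
        simp only [norm_inv, Real.norm_natCast, Finset.prod_mul_distrib, Finset.prod_const,
          Finset.card_univ, Fintype.card_fin]
        ring

section TupleSums

variable {x : ℂ}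

lemma summable_connector_head_mul_prod (hx : ∀ k : ℕ, x ≠ k + 1) {m : ℕ} (hm : m ≠ 0) (r : ℕ) :
    Summable fun f : DecreasingTuple (r + 1) ↦
      connector x m (f.1 0) * ∏ j, 1 / ((f.1 j : ℂ) - x) := by
  simpa only [one_div] using
    summable_head_mul_prod (isBigO_connector_inv hx hm) (isBigO_inv_natCast_sub x) r

lemma tsum_connector_largest_mul_prod (hx : ∀ k : ℕ, x ≠ k + 1) {m : ℕ} (hm : m ≠ 0) (r : ℕ) :
    ∑' f : DecreasingTuple r, connector x m f.largest * ∏ j, 1 / ((f.1 j : ℂ) - x) =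
      1 / (m : ℂ) ^ r := by
  induction r with
  | zero => simp [DecreasingTuple.largest, connector_zero_right hx, tsum_fintype]
  | succ r ih =>
    let F (g : DecreasingTuple (r + 1)) : ℂ :=
      connector x m (g.1 0) * ∏ j, 1 / ((g.1 j : ℂ) - x)
    have summable : Summable (F ∘ DecreasingTuple.consEquiv r) :=
      (DecreasingTuple.consEquiv r).summable_iff.mpr (summable_connector_head_mul_prod hx hm r)
    have sum_over_head (f : DecreasingTuple r) : ∑' i, F (DecreasingTuple.consEquiv r (f, i)) =
        connector x m f.largest * (∏ j, 1 / ((f.1 j : ℂ) - x)) / m := by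
      rw [mul_div_right_comm, ← (hasSum_connector_div hx hm f.largest).tsum_eq, ← tsum_mul_right]
      refine tsum_congr fun i ↦ ?_
      simp only [F, DecreasingTuple.consEquiv, Equiv.coe_fn_mk, Fin.prod_univ_succ, Fin.cons_zero,
        Fin.cons_succ]
      ring
    calc ∑' g, F g = ∑' f, ∑' i, F (DecreasingTuple.consEquiv r (f, i)) := by
          rw [← (DecreasingTuple.consEquiv r).tsum_eq]
          exact summable.tsum_prod
      _ = 1 / (m : ℂ) ^ (r + 1) := by
          simp_rw [sum_over_head]
          rw [tsum_div_const, ih, div_div, pow_succ]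

lemma summable_inv_head_mul_prod (x : ℂ) (r : ℕ) :
    Summable fun f : DecreasingTuple (r + 1) ↦
      1 / (f.1 0 : ℂ) * ∏ j, 1 / ((f.1 j : ℂ) - x) := by
  simpa only [one_div, sub_zero] using
    summable_head_mul_prod (isBigO_inv_natCast_sub 0) (isBigO_inv_natCast_sub x) r

lemma tsum_one_sub_connector_mul (hx : ∀ k : ℕ, x ≠ k + 1) (r N : ℕ) :
    ∑' f : DecreasingTuple (r + 1), (1 - connector x N (f.1 0)) *
        (1 / (f.1 0 : ℂ) * ∏ j, 1 / ((f.1 j : ℂ) - x)) =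
      ∑ n ∈ Finset.range N, 1 / ((n + 1 : ℂ) ^ (r + 1) * ((n + 1 : ℂ) - x)) := by
  have expand (f : DecreasingTuple (r + 1)) : (1 - connector x N (f.1 0)) *
      (1 / (f.1 0 : ℂ) * ∏ j, 1 / ((f.1 j : ℂ) - x)) =
        ∑ n ∈ Finset.range N,
          connector x (n + 1) (f.1 0) * (∏ j, 1 / ((f.1 j : ℂ) - x)) / (n + 1 - x) := by
    rw [← mul_assoc, mul_one_div,
      ← sum_range_connector_succ_div hx N (Nat.cast_ne_zero.mpr (f.2.1 0).ne'), Finset.sum_mul]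
    exact Finset.sum_congr rfl fun n _ ↦ div_mul_eq_mul_div _ _ _
  simp_rw [expand]
  rw [Summable.tsum_finsetSum fun n _ ↦
    (summable_connector_head_mul_prod hx n.succ_ne_zero r).div_const _]
  refine Finset.sum_congr rfl fun n _ ↦ ?_
  have := tsum_connector_largest_mul_prod hx n.succ_ne_zero (r + 1)
  rw [tsum_div_const, ← div_div, ← Nat.cast_succ, ← this]
  rfl

lemma tendsto_tsum_one_sub_connector_mul (hx : ∀ k : ℕ, x ≠ k + 1) (r : ℕ) :
    Tendsto (fun N ↦ ∑' f : DecreasingTuple (r + 1), (1 - connector x N (f.1 0)) *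
        (1 / (f.1 0 : ℂ) * ∏ j, 1 / ((f.1 j : ℂ) - x))) atTop
      (𝓝 (∑' f : DecreasingTuple (r + 1), 1 / (f.1 0 : ℂ) * ∏ j, 1 / ((f.1 j : ℂ) - x))) := by
  obtain ⟨B, hB⟩ := exists_norm_connector_le hx
  refine tendsto_tsum_of_dominated_convergence
    ((summable_inv_head_mul_prod x r).norm.mul_left (1 + B)) (fun f ↦ ?_)
    (.of_forall fun N f ↦ ?_)
  · have connector_tendsto : Tendsto (fun N ↦ connector x N (f.1 0)) atTop (𝓝 0) := by
      simp_rw [connector_comm x _ (f.1 0)]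
      exact tendsto_connector_atTop hx (f.2.1 0).ne'
    simpa only [sub_zero, one_mul] using (connector_tendsto.const_sub 1).mul_const
      (1 / (f.1 0 : ℂ) * ∏ j, 1 / ((f.1 j : ℂ) - x))
  · rw [norm_mul]
    gcongr
    calc ‖1 - connector x N (f.1 0)‖ ≤ ‖(1 : ℂ)‖ + ‖connector x N (f.1 0)‖ := norm_sub_le _ _
      _ ≤ 1 + B := by rw [norm_one]; gcongr; exact hB _ _

lemma summable_one_div_pow_mul_sub (x : ℂ) {r : ℕ} (hr : r ≠ 0) :
    Summable fun n : ℕ ↦ 1 / ((n + 1 : ℂ) ^ r * ((n + 1 : ℂ) - x)) := by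
  have pow_isBigO : (fun n : ℕ ↦ ((n : ℂ) ^ r)⁻¹) =O[atTop] fun n : ℕ ↦ (n : ℝ)⁻¹ := by
    refine isBigO_of_le _ fun n ↦ ?_
    simpa using pow_le_of_le_one (inv_nonneg.mpr n.cast_nonneg) (Nat.cast_inv_le_one n) hr
  have := summable_mul_of_isBigO_inv pow_isBigO (isBigO_inv_natCast_sub x)
  simpa only [one_div, mul_inv, Nat.cast_add_one] using (summable_nat_add_iff 1).mpr this

end TupleSums

/-- For every positive integer `r` and complex `x` not a positive integer,
`∑_{k₁ > ⋯ > k_r > 0} (1/k₁) ∏_{j=1}^r 1/(k_j − x) = ∑_{n=1}^∞ 1/(n^r (n−x))`. -/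
theorem stmt_4 (r : ℕ) (hr : 0 < r) (x : ℂ) (hx : ∀ k : ℕ, x ≠ k + 1) :
    ∑' k : {f : Fin r → ℕ // (∀ i, 0 < f i) ∧ StrictAnti f},
        (1 / (k.1 ⟨0, hr⟩ : ℂ)) * ∏ j : Fin r, 1 / ((k.1 j : ℂ) - x) =
      ∑' n : ℕ, 1 / ((n + 1 : ℂ) ^ r * ((n + 1 : ℂ) - x)) := by
  obtain ⟨r, rfl⟩ := Nat.exists_eq_add_one_of_ne_zero hr.ne'
  have weighted_tendsto := tendsto_tsum_one_sub_connector_mul hx r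
  simp_rw [tsum_one_sub_connector_mul hx] at weighted_tendsto
  exact tendsto_nhds_unique weighted_tendsto
    (summable_one_div_pow_mul_sub x hr.ne').hasSum.tendsto_sum_nat
end

section
/- For every nonnegative integer n, ζ({2}ₙ) := ∑_{k₁ > k₂ > ⋯ > k_n > 0} ∏_{j=1}^n 1/k_j² = π^{2n}/(2n+1)!, where the sum ranges over strictly decreasing n-tuples of positive integers (and the empty sum for n = 0 is 1). -/
open scoped BigOperators Real

/-- The multiple zeta value `ζ(s 0, s 1, …, s (r-1))
  = ∑_{n₁ > n₂ > ⋯ > n_r > 0} ∏_i 1/n_i^{s i}`. -/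
noncomputable def mzv {r : ℕ} (s : Fin r → ℕ) : ℝ :=
  ∑' k : {f : Fin r → ℕ // (∀ i, 0 < f i) ∧ StrictAnti f},
    ∏ i : Fin r, (1 : ℝ) / (k.1 i : ℝ) ^ (s i)

/-! The sum `ζ({2}ₙ)` is the `n`-th elementary symmetric function of the family `1 / m²`, `m ≥ 1`,
whose generating function is `∏ (1 + w / m²)`. At `w = -z²` this is Euler's product for
`sin (π z) / (π z)`, so the value is read off by comparing coefficients with the sine series. -/

open Topology

section ElementarySymmetric

variable {ι R : Type*}

/-- The `n`-th elementary symmetric function of a possibly infinite family `a`: the sum over all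
`n`-element sets of indices of the products of the corresponding members of `a`. It is defined as an
unconditional sum, hence is `0` if these products are not summable. -/
noncomputable def tesymm [CommSemiring R] [TopologicalSpace R] (a : ι → R) (n : ℕ) : R :=
  ∑' s : Set.powersetCard ι n, ∏ i ∈ (s : Finset ι), a i

theorem hasSum_pow_mul_tesymm [NormedCommRing R] [NormOneClass R] [CompleteSpace R] {a : ι → R}
    (ha : Summable fun i => ‖a i‖) (w : R) :
    HasSum (fun n => w ^ n * tesymm a n) (∏' i, (1 + w * a i)) := by
  have summable_prod : Summable fun s : Finset ι => ∏ i ∈ s, a i :=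
    summable_finsetProd_of_summable_norm ha
  have summable_prod_mul : Summable fun s : Finset ι => ∏ i ∈ s, w * a i :=
    summable_finsetProd_of_summable_norm <|
      (ha.mul_left ‖w‖).of_nonneg_of_le (fun _ => norm_nonneg _) fun _ => norm_mul_le _ _
  have fiber (n : ℕ) : Finset.card ⁻¹' {n} = Set.powersetCard ι n := by ext; simp
  rw [tprod_one_add summable_prod_mul]
  refine (summable_prod_mul.hasSum.tsum_fiberwise Finset.card).congr_fun fun n => ?_
  calc
    w ^ n * tesymm a n = ∑' s : Set.powersetCard ι n, w ^ n * ∏ i ∈ (s : Finset ι), a i :=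
      ((summable_prod.subtype (Set.powersetCard ι n)).tsum_mul_left (w ^ n)).symm
    _ = ∑' s : Set.powersetCard ι n, ∏ i ∈ (s : Finset ι), w * a i := by
      simp only [Finset.prod_mul_distrib, Finset.prod_const, Set.powersetCard.card_eq]
    _ = ∑' s : (Finset.card ⁻¹' {n} : Set (Finset ι)), ∏ i ∈ s.1, w * a i :=
      tsum_congr_set_coe (fun s : Finset ι => ∏ i ∈ s, w * a i) (fiber n).symm

theorem tesymm_eq_tsum_orderEmbedding [LinearOrder ι] [CommSemiring R] [TopologicalSpace R]
    (a : ι → R) (n : ℕ) : tesymm a n = ∑' f : Fin n ↪o ι, ∏ i, a (f i) := by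
  rw [tesymm, ← Set.powersetCard.ofFinEmbEquiv.tsum_eq]
  simp [Set.powersetCard.ofFinEmbEquiv_apply]

theorem tesymm_ofReal (a : ι → ℝ) (n : ℕ) : tesymm (fun i => (a i : ℂ)) n = tesymm a n := by
  simp [tesymm, Complex.ofReal_tsum]

end ElementarySymmetric

theorem eq_of_eventually_hasSum_pow_smul {𝕜 E : Type*} [NontriviallyNormedField 𝕜]
    [NormedAddCommGroup E] [NormedSpace 𝕜 E] {a b : ℕ → E} {f : 𝕜 → E}
    (ha : ∀ᶠ w in 𝓝 0, HasSum (fun n => w ^ n • a n) (f w))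
    (hb : ∀ᶠ w in 𝓝 0, HasSum (fun n => w ^ n • b n) (f w)) : a = b := by
  have hasFPowerSeriesAt {c : ℕ → E} (hc : ∀ᶠ w in 𝓝 0, HasSum (fun n => w ^ n • c n) (f w)) :
      HasFPowerSeriesAt f (fun n => .mkPiRing 𝕜 (Fin n) (c n)) 0 := by
    refine hasFPowerSeriesAt_iff.2 ?_
    simpa only [FormalMultilinearSeries.coeff, ContinuousMultilinearMap.mkPiRing_apply,
      Pi.one_apply, Finset.prod_const_one, one_smul, zero_add] using hc
  funext n
  simpa [FormalMultilinearSeries.coeff] using congrArg (·.coeff n)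
    ((hasFPowerSeriesAt ha).eq_formalMultilinearSeries (hasFPowerSeriesAt hb))

/-- Positive strictly decreasing `n`-tuples of natural numbers, read backwards, are the strictly
increasing `n`-tuples in `ℕ+`. -/
def strictAntiEquivOrderEmbedding (n : ℕ) :
    {f : Fin n → ℕ // (∀ i, 0 < f i) ∧ StrictAnti f} ≃ (Fin n ↪o ℕ+) where
  toFun f := OrderEmbedding.ofStrictMono (fun i => ⟨f.1 i.rev, f.2.1 i.rev⟩)
    fun _ _ hij => f.2.2 (Fin.rev_lt_rev.2 hij)
  invFun g := ⟨fun i => g i.rev, fun _ => PNat.pos _,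
    fun _ _ hij => g.strictMono (Fin.rev_lt_rev.2 hij)⟩
  left_inv f := Subtype.ext <| funext fun i => congrArg f.1 i.rev_rev
  right_inv g := RelEmbedding.ext fun i => congrArg g i.rev_rev

theorem mzv_const (n k : ℕ) :
    mzv (fun _ : Fin n => k) = tesymm (fun m : ℕ+ => 1 / (m : ℝ) ^ k) n := by
  rw [tesymm_eq_tsum_orderEmbedding, ← (strictAntiEquivOrderEmbedding n).tsum_eq, mzv]
  exact tsum_congr fun f =>
    (Equiv.prod_comp Fin.revPerm fun i => 1 / (f.1 i : ℝ) ^ k).symm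

theorem tprod_one_sub_sq_div_pnat_sq {z : ℂ} (hz : z ≠ 0) :
    ∏' m : ℕ+, (1 - z ^ 2 / (m : ℂ) ^ 2) = Complex.sin (π * z) / (π * z) := by
  have euler : HasProd (fun m => 1 + sineTerm z m) (Complex.sin (π * z) / (π * z)) :=
    (multipliable_sineTerm z).hasProd_iff_tendsto_nat.2 (tendsto_euler_sin_prod' hz)
  rw [tprod_pnat_eq_tprod_succ (f := fun m => 1 - z ^ 2 / (m : ℂ) ^ 2), ← euler.tprod_eq]
  simp [sineTerm, neg_div, sub_eq_add_neg]

theorem hasSum_sin_div {z : ℂ} (hz : z ≠ 0) :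
    HasSum (fun n : ℕ => (-z ^ 2) ^ n / (2 * n + 1).factorial) (Complex.sin z / z) := by
  refine ((Complex.hasSum_sin z).div_const z).congr_fun fun n => ?_
  rw [neg_pow, ← pow_mul, pow_succ]
  field_simp

theorem hasSum_tprod_one_add_mul_one_div_pnat_sq (w : ℂ) :
    HasSum (fun n : ℕ => w ^ n * (π ^ (2 * n) / (2 * n + 1).factorial))
      (∏' m : ℕ+, (1 + w * (1 / (m : ℂ) ^ 2))) := by
  rcases eq_or_ne w 0 with rfl | hw
  · simpa using hasSum_single (f := fun n : ℕ =>
      (0 : ℂ) ^ n * (π ^ (2 * n) / (2 * n + 1).factorial)) 0 fun n hn => by simp [hn]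
  obtain ⟨z, hz⟩ := IsAlgClosed.exists_pow_nat_eq (-w) two_pos
  obtain rfl : w = -z ^ 2 := by rw [hz, neg_neg]
  have z_ne_zero : z ≠ 0 := by rintro rfl; simp at hw
  have pi_mul_z_ne_zero : π * z ≠ 0 :=
    mul_ne_zero (Complex.ofReal_ne_zero.2 Real.pi_ne_zero) z_ne_zero
  have euler_product :
      ∏' m : ℕ+, (1 + -z ^ 2 * (1 / (m : ℂ) ^ 2)) = Complex.sin (π * z) / (π * z) := by
    simp only [mul_one_div, neg_div, ← sub_eq_add_neg, tprod_one_sub_sq_div_pnat_sq z_ne_zero]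
  rw [euler_product]
  refine (hasSum_sin_div pi_mul_z_ne_zero).congr_fun fun n => ?_
  rw [mul_pow, ← mul_neg, mul_pow, ← pow_mul]
  ring

theorem tesymm_one_div_pnat_sq (n : ℕ) :
    tesymm (fun m : ℕ+ => 1 / (m : ℝ) ^ 2) n = π ^ (2 * n) / (2 * n + 1).factorial := by
  have summable_norm : Summable fun m : ℕ+ => ‖1 / (m : ℂ) ^ 2‖ := by
    simpa using summable_pnat_iff_summable_nat.2 (Real.summable_one_div_nat_pow.2 one_lt_two)
  have coeff_eq : tesymm (fun m : ℕ+ => 1 / (m : ℂ) ^ 2) =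
      fun n : ℕ => (π : ℂ) ^ (2 * n) / (2 * n + 1).factorial :=
    eq_of_eventually_hasSum_pow_smul (.of_forall (hasSum_pow_mul_tesymm summable_norm))
      (.of_forall hasSum_tprod_one_add_mul_one_div_pnat_sq)
  rw [← Complex.ofReal_inj, ← tesymm_ofReal]
  simpa using congrFun coeff_eq n

/-- For every nonnegative integer `n`, `ζ({2}ₙ) = π^{2n}/(2n+1)!`. -/
theorem stmt_8 (n : ℕ) :
    mzv (fun _ : Fin n => 2) = π ^ (2 * n) / (Nat.factorial (2 * n + 1)) := by
  rw [mzv_const, tesymm_one_div_pnat_sq]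
end

section
/- For every nonnegative integer n, ζ({3}ₙ) = ζ({2,1}ₙ); that is, ∑_{k₁ > ⋯ > k_n > 0} ∏_{j=1}^n 1/k_j³ equals the depth-2n multiple zeta value ζ(2,1,2,1,…,2,1) whose exponent string consists of n consecutive copies of (2,1). -/
open scoped BigOperators

/-!
The connected sum method of Seki and Yamamoto. Encode an exponent string `(s₁, …, s_r)` as the word
`x^(s₁-1) y ⋯ x^(s_r-1) y`, and let the letters act on sequences by `(x F)(m) = F(m) / m` and
`(y F)(m) = (∑_{q < m} F(q)) / m`; then `ζ(s)` is the total mass of its word applied to the unit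
mass `δ` at `0`. For the pairing `⟨F, G⟩ = ∑_{m,q} F(m) G(q) / (m+q choose m)`, the telescoping sum
`∑_{p > q} 1 / (p (m+p choose m)) = 1 / (m (m+q choose m))` for `m > 0` gives `⟨x F, G⟩ = ⟨F, y G⟩`
whenever `F(0) = 0`. Since `⟨F, δ⟩` is the total mass of `F`, moving the letters of a word one by
one across `⟨w δ, δ⟩` reverses the word and exchanges `x` with `y`; the condition at `0` holds along
the way because `w` starts with `x` and ends with `y`. This is the duality of multiple zeta values,
and it takes `(xxy)ⁿ`, the word of `{3}ₙ`, to `(xyy)ⁿ`, the word of `{2,1}ₙ`.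
-/

namespace MultipleZeta

open Filter
open Finset (range mem_range sum_congr sum_eq_zero sum_range_succ)
open scoped ENNReal NNReal Topology

section Sums

lemma hasSum_of_add_eq_of_tendsto_zero {f g : ℕ → ℝ≥0} (hfg : ∀ n, f n + g (n + 1) = g n)
    (hg : Tendsto g atTop (𝓝 0)) : HasSum f (g 0) := by
  have partial_sum (n : ℕ) : ∑ j ∈ range n, f j = g 0 - g n := by
    refine eq_tsub_of_add_eq ?_
    induction n with
    | zero => simp
    | succ n ih => rw [sum_range_succ, add_assoc, hfg, ih]
  rw [NNReal.hasSum_iff_tendsto_nat]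
  simpa [partial_sum] using tendsto_const_nhds.sub hg

lemma tsum_ite_lt_eq_sum_range {M : Type*} [AddCommMonoid M] [TopologicalSpace M] (F : ℕ → M)
    (m : ℕ) :
    ∑' q, (if q < m then F q else 0) = ∑ q ∈ range m, F q := by
  rw [tsum_eq_sum (s := range m) fun q hq => if_neg (by simpa using hq)]
  exact sum_congr rfl fun q hq => if_pos (by simpa using hq)

lemma tsum_ite_gt_eq_tsum_add (F : ℕ → ℝ≥0∞) (q : ℕ) :
    ∑' p, (if q < p then F p else 0) = ∑' j, F (j + (q + 1)) := by
  rw [← ENNReal.summable.sum_add_tsum_nat_add' (k := q + 1), sum_eq_zero, zero_add]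
  · exact tsum_congr fun j => if_pos (by lia)
  · exact fun p hp => if_neg (by have := mem_range.1 hp; lia)

lemma tsum_fin_succ_eq_tsum_cons {α : Type*} {r : ℕ} (F : (Fin (r + 1) → α) → ℝ≥0∞) :
    ∑' f, F f = ∑' b, ∑' g : Fin r → α, F (Fin.cons b g) := by
  rw [← (Fin.consEquiv fun _ : Fin (r + 1) => α).tsum_eq]
  exact ENNReal.tsum_prod (f := fun b g => F (Fin.cons b g))

lemma tsum_mul_sum_range (F G : ℕ → ℝ≥0∞) :
    ∑' p, F p * ∑ q ∈ range p, G q = ∑' q, (∑' j, F (j + (q + 1))) * G q := by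
  simp only [← tsum_ite_lt_eq_sum_range, ← tsum_ite_gt_eq_tsum_add, ← ENNReal.tsum_mul_left,
    ← ENNReal.tsum_mul_right, mul_ite, ite_mul, mul_zero, zero_mul]
  exact ENNReal.tsum_comm

end Sums

section Connector

/-- The reciprocal `1 / m`, extended by `0` at `m = 0` (whereas `(0 : ℝ≥0∞)⁻¹ = ∞`). -/
noncomputable def recip (m : ℕ) : ℝ≥0∞ := ((m : ℝ≥0)⁻¹ : ℝ≥0)

@[simp]
lemma recip_zero : recip 0 = 0 := by simp [recip]

lemma toReal_recip (m : ℕ) : (recip m).toReal = 1 / (m : ℝ) := by simp [recip]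

/-- The connector `m! n! / (m + n)!` of Seki and Yamamoto. -/
noncomputable def connector (m n : ℕ) : ℝ≥0 := ((m + n).choose m : ℝ≥0)⁻¹

lemma connector_comm (m n : ℕ) : connector m n = connector n m := by
  rw [connector, connector, Nat.choose_symm_add, add_comm]

@[simp]
lemma connector_zero_right (m : ℕ) : connector m 0 = 1 := by simp [connector]

lemma inv_mul_connector_add {m : ℕ} (hm : m ≠ 0) (p : ℕ) :
    ((p + 1 : ℕ) : ℝ≥0)⁻¹ * connector m (p + 1) + (m : ℝ≥0)⁻¹ * connector m (p + 1) =
      (m : ℝ≥0)⁻¹ * connector m p := by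
  have choose_succ :
      ((m + p).choose m : ℝ≥0) * (m + p + 1) = (m + (p + 1)).choose m * (p + 1) := by
    have := Nat.choose_mul_succ_eq (m + p) m
    rw [show m + p + 1 - m = p + 1 by lia] at this
    exact_mod_cast this
  have hchoose : ((m + p).choose m : ℝ≥0) ≠ 0 := by
    exact_mod_cast (Nat.choose_pos (Nat.le_add_right m p)).ne'
  have hchoose' : ((m + (p + 1)).choose m : ℝ≥0) ≠ 0 := by
    exact_mod_cast (Nat.choose_pos (Nat.le_add_right m (p + 1))).ne'
  have hm' : (m : ℝ≥0) ≠ 0 := by exact_mod_cast hm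
  simp only [connector]
  push_cast
  field_simp
  linear_combination choose_succ

lemma connector_le_inv {m : ℕ} (hm : m ≠ 0) (n : ℕ) : connector m n ≤ ((n : ℝ≥0) + 1)⁻¹ := by
  have succ_le_choose : n + 1 ≤ (m + n).choose m := by
    rw [Nat.choose_symm_add]
    simpa using Nat.choose_le_choose n (show n + 1 ≤ m + n by lia)
  exact inv_anti₀ (by positivity) (by exact_mod_cast succ_le_choose)

lemma tendsto_connector_atTop {m : ℕ} (hm : m ≠ 0) : Tendsto (connector m) atTop (𝓝 0) := by
  refine tendsto_of_tendsto_of_tendsto_of_le_of_le tendsto_const_nhds ?_ (fun _ => zero_le)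
    (connector_le_inv hm)
  simpa [Function.comp_def] using
    (tendsto_inv_atTop_nhds_zero_nat (𝕜 := ℝ≥0)).comp (tendsto_add_atTop_nat 1)

lemma tsum_recip_mul_connector {m : ℕ} (hm : m ≠ 0) (q : ℕ) :
    ∑' j, recip (j + (q + 1)) * connector m (j + (q + 1)) = recip m * connector m q := by
  have hsum := hasSum_of_add_eq_of_tendsto_zero
    (f := fun j => ((j + q + 1 : ℕ) : ℝ≥0)⁻¹ * connector m (j + q + 1))
    (g := fun j => (m : ℝ≥0)⁻¹ * connector m (j + q))
    (fun j => by simpa [add_right_comm] using inv_mul_connector_add hm (j + q))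
    (by simpa using ((tendsto_connector_atTop hm).comp (tendsto_add_atTop_nat q)).const_mul _)
  simpa [recip, add_assoc] using (ENNReal.hasSum_coe.2 hsum).tsum_eq

end Connector

section Letters

/-- The alphabet of the words that encode exponent strings. -/
inductive Letter
  | x
  | y

/-- The involution exchanging the two letters. -/
def Letter.dual : Letter → Letter
  | x => y
  | y => x

/-- The action of a letter on sequences: `x` divides by the index, `y` forms the partial sums over
smaller indices and then divides by the index. -/
noncomputable def Letter.act : Letter → (ℕ → ℝ≥0∞) → ℕ → ℝ≥0∞
  | x, F, m => recip m * F m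
  | y, F, m => recip m * ∑ q ∈ range m, F q

/-- The action of a word on sequences; its last letter acts first. -/
noncomputable def actWord (w : List Letter) (F : ℕ → ℝ≥0∞) : ℕ → ℝ≥0∞ := w.foldr Letter.act F

/-- The dual of a word: the word read backwards, with the two letters exchanged. -/
def dualWord (w : List Letter) : List Letter := (w.map Letter.dual).reverse

/-- The unit mass at `0`, on which words act to produce multiple zeta values. -/
noncomputable def unitMass : ℕ → ℝ≥0∞ := Pi.single 0 1

/-- The pairing `⟨F, G⟩ = ∑_{m,q} F(m) G(q) m! q! / (m + q)!`, which expresses the connected sums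
of Seki and Yamamoto. -/
noncomputable def pairing (F G : ℕ → ℝ≥0∞) : ℝ≥0∞ := ∑' m, ∑' q, F m * connector m q * G q

@[simp]
lemma Letter.dual_dual (a : Letter) : a.dual.dual = a := by cases a <;> rfl

@[simp]
lemma Letter.act_apply_zero (a : Letter) (F : ℕ → ℝ≥0∞) : a.act F 0 = 0 := by
  cases a <;> simp [act]

lemma actWord_apply_zero (w : List Letter) {F : ℕ → ℝ≥0∞} (hF : F 0 = 0) : actWord w F 0 = 0 := by
  cases w with
  | nil => exact hF
  | cons a w => exact a.act_apply_zero _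

lemma actWord_append (u v : List Letter) (F : ℕ → ℝ≥0∞) :
    actWord (u ++ v) F = actWord u (actWord v F) := List.foldr_append

lemma actWord_replicate_x (k : ℕ) (F : ℕ → ℝ≥0∞) (m : ℕ) :
    actWord (List.replicate k .x) F m = recip m ^ k * F m := by
  induction k with
  | zero => simp [actWord]
  | succ k ih =>
    calc actWord (List.replicate (k + 1) .x) F m
        = recip m * actWord (List.replicate k .x) F m := rfl
      _ = recip m ^ (k + 1) * F m := by rw [ih]; ring

@[simp]
lemma dualWord_dualWord (w : List Letter) : dualWord (dualWord w) = w := by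
  simp [dualWord, Function.comp_def]

lemma dualWord_cons (a : Letter) (w : List Letter) :
    dualWord (a :: w) = dualWord w ++ [a.dual] := by
  simp [dualWord]

lemma dualWord_append (u v : List Letter) : dualWord (u ++ v) = dualWord v ++ dualWord u := by
  simp [dualWord]

lemma pairing_comm (F G : ℕ → ℝ≥0∞) : pairing F G = pairing G F := by
  rw [pairing, ENNReal.tsum_comm]
  refine tsum_congr fun q => tsum_congr fun m => ?_
  rw [connector_comm]
  ring

lemma pairing_unitMass (F : ℕ → ℝ≥0∞) : pairing F unitMass = ∑' m, F m := by
  refine tsum_congr fun m => ?_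
  rw [tsum_eq_single 0 fun q hq => by simp [unitMass, hq]]
  simp [unitMass]

lemma pairing_act_x {F : ℕ → ℝ≥0∞} (hF : F 0 = 0) (G : ℕ → ℝ≥0∞) :
    pairing (Letter.x.act F) G = pairing F (Letter.y.act G) := by
  refine tsum_congr fun m => ?_
  rcases eq_or_ne m 0 with rfl | hm
  · simp [hF]
  calc ∑' q, recip m * F m * connector m q * G q
      = F m * ∑' q, recip m * connector m q * G q := by
        rw [← ENNReal.tsum_mul_left]
        exact tsum_congr fun q => by ring
    _ = F m * ∑' p, recip p * connector m p * ∑ q ∈ range p, G q := by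
        simp_rw [tsum_mul_sum_range (fun p => recip p * connector m p) G,
          tsum_recip_mul_connector hm]
    _ = ∑' p, F m * connector m p * (recip p * ∑ q ∈ range p, G q) := by
        rw [← ENNReal.tsum_mul_left]
        exact tsum_congr fun p => by ring

lemma pairing_act_y (F : ℕ → ℝ≥0∞) {G : ℕ → ℝ≥0∞} (hG : G 0 = 0) :
    pairing (Letter.y.act F) G = pairing F (Letter.x.act G) := by
  rw [pairing_comm, ← pairing_act_x hG, pairing_comm]

lemma pairing_actWord (w : List Letter) {F G : ℕ → ℝ≥0∞} (hF : F 0 = 0) (hG : G 0 = 0) :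
    pairing (actWord w F) G = pairing F (actWord (dualWord w) G) := by
  induction w generalizing G with
  | nil => rfl
  | cons a w ih =>
    have moved : pairing (actWord w F) (a.dual.act G) =
        pairing F (actWord (dualWord (a :: w)) G) := by
      rw [ih (a.dual.act_apply_zero G), dualWord_cons, actWord_append]
      rfl
    rw [← moved]
    cases a with
    | x => exact pairing_act_x (actWord_apply_zero w hF) G
    | y => exact pairing_act_y _ hG

theorem tsum_actWord_dualWord (u : List Letter) :
    ∑' m, actWord (dualWord (.x :: u ++ [.y])) unitMass m =
      ∑' m, actWord (.x :: u ++ [.y]) unitMass m := by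
  let δ := unitMass
  have hdual : dualWord (.x :: u ++ [.y]) = .x :: dualWord u ++ [.y] := by
    simp [dualWord, Letter.dual]
  have hy : Letter.y.act δ 0 = 0 := Letter.act_apply_zero _ _
  symm
  calc ∑' m, actWord (.x :: u ++ [.y]) δ m
      = pairing (Letter.x.act (actWord u (Letter.y.act δ))) δ := by
        rw [← pairing_unitMass, actWord_append]
        rfl
    _ = pairing (actWord u (Letter.y.act δ)) (Letter.y.act δ) :=
        pairing_act_x (actWord_apply_zero u hy) δ
    _ = pairing (Letter.y.act δ) (actWord (dualWord u) (Letter.y.act δ)) :=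
        pairing_actWord u hy hy
    _ = pairing δ (Letter.x.act (actWord (dualWord u) (Letter.y.act δ))) :=
        pairing_act_y δ (actWord_apply_zero _ hy)
    _ = ∑' m, actWord (dualWord (.x :: u ++ [.y])) δ m := by
        rw [hdual, pairing_comm, pairing_unitMass, actWord_append]
        rfl

end Letters

section ExponentStrings

/-- The word `x^(s₁-1) y ⋯ x^(s_r-1) y` of an exponent string `(s₁, …, s_r)`; an exponent `0` is
encoded like the exponent `1`. -/
def word {r : ℕ} (s : Fin r → ℕ) : List Letter :=
  (List.ofFn s).flatMap fun k => List.replicate (k - 1) .x ++ [.y]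

lemma word_succ {r : ℕ} (s : Fin (r + 1) → ℕ) :
    word s = List.replicate (s 0 - 1) .x ++ .y :: word (Fin.tail s) := by
  simp [word, Fin.tail_def]

lemma word_eq_nil_or_append_y {r : ℕ} (s : Fin r → ℕ) : word s = [] ∨ ∃ u, word s = u ++ [.y] := by
  induction r with
  | zero => simp [word]
  | succ r ih =>
    rw [word_succ]
    rcases ih (Fin.tail s) with h | ⟨u, h⟩
    · simp [h]
    · exact .inr ⟨List.replicate (s 0 - 1) .x ++ .y :: u, by simp [h]⟩

lemma word_eq_x_append_y_of_word_eq_dualWord {r l : ℕ} {s : Fin r → ℕ} {t : Fin l → ℕ}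
    (h : word t = dualWord (word s)) (hs : word s ≠ []) : ∃ u, word s = .x :: u ++ [.y] := by
  obtain ⟨u, hu⟩ := (word_eq_nil_or_append_y s).resolve_left hs
  have ht : word t ≠ [] := by simp [h, dualWord, hs]
  obtain ⟨v, hv⟩ := (word_eq_nil_or_append_y t).resolve_left ht
  have hx : word s = .x :: dualWord v := by
    rw [← dualWord_dualWord (word s), ← h, hv, dualWord_append]
    rfl
  cases u with
  | nil => simp [hu] at hx
  | cons a u =>
    obtain rfl : a = .x := by simpa using List.head_eq_of_cons_eq (hu.symm.trans hx)
    exact ⟨u, hu⟩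

lemma actWord_word_succ {r : ℕ} {s : Fin (r + 1) → ℕ} (hs : 0 < s 0) (F : ℕ → ℝ≥0∞) (m : ℕ) :
    actWord (word s) F m =
      recip m ^ s 0 * ∑ q ∈ range m, actWord (word (Fin.tail s)) F q := by
  rw [word_succ, actWord_append, actWord_replicate_x]
  calc recip m ^ (s 0 - 1) * (recip m * ∑ q ∈ range m, actWord (word (Fin.tail s)) F q)
      = recip m ^ (s 0 - 1 + 1) * ∑ q ∈ range m, actWord (word (Fin.tail s)) F q := by ring
    _ = _ := by rw [Nat.sub_add_cancel hs]

/-- The summation indices `N > n₁ > ⋯ > n_r > 0` of a truncated multiple zeta value; `N = ⊤` gives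
those of the full series. -/
def decreasingBelow (r : ℕ) (N : ℕ∞) : Set (Fin r → ℕ) :=
  {f | (∀ i, 0 < f i) ∧ StrictAnti f ∧ ∀ i, (f i : ℕ∞) < N}

/-- The truncated multiple zeta value `∑_{N > n₁ > ⋯ > n_r > 0} ∏_i 1 / n_i ^ s_i`. -/
noncomputable def truncatedMZV {r : ℕ} (s : Fin r → ℕ) (N : ℕ∞) : ℝ≥0∞ :=
  ∑' f : decreasingBelow r N, ∏ i, recip (f.1 i) ^ s i

lemma cons_mem_decreasingBelow {r : ℕ} {N : ℕ∞} {b : ℕ} {g : Fin r → ℕ} :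
    (Fin.cons b g : Fin (r + 1) → ℕ) ∈ decreasingBelow (r + 1) N ↔
      0 < b ∧ (b : ℕ∞) < N ∧ g ∈ decreasingBelow r b := by
  have entries_lt (hb : (b : ℕ∞) < N) (hg : ∀ i, g i < b) (i : Fin r) : (g i : ℕ∞) < N :=
    (Nat.cast_lt.2 (hg i)).trans hb
  simp only [decreasingBelow, StrictAnti, Set.mem_ofPred_eq, Fin.forall_fin_succ, Fin.cons_zero,
    Fin.cons_succ, Nat.cast_lt, Fin.succ_lt_succ_iff, Fin.succ_pos, Fin.not_lt_zero, lt_irrefl]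
  grind

lemma truncatedMZV_zero (s : Fin 0 → ℕ) (N : ℕ∞) : truncatedMZV s N = 1 := by
  simp [truncatedMZV, decreasingBelow, Subsingleton.strictAnti]

lemma truncatedMZV_succ {r : ℕ} {s : Fin (r + 1) → ℕ} (hs : 0 < s 0) (N : ℕ∞) :
    truncatedMZV s N =
      ∑' b : ℕ, if (b : ℕ∞) < N then recip b ^ s 0 * truncatedMZV (Fin.tail s) b else 0 := by
  rw [truncatedMZV, tsum_subtype _ fun f : Fin (r + 1) → ℕ => ∏ i, recip (f i) ^ s i,
    tsum_fin_succ_eq_tsum_cons]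
  refine tsum_congr fun b => ?_
  rw [truncatedMZV, tsum_subtype _ fun f : Fin r → ℕ => ∏ i, recip (f i) ^ Fin.tail s i,
    ← ENNReal.tsum_mul_left]
  rcases Nat.eq_zero_or_pos b with rfl | hb
  · simp [cons_mem_decreasingBelow, hs.ne']
  classical
  split_ifs with hbN
  · refine tsum_congr fun g => ?_
    simp [Set.indicator_apply, cons_mem_decreasingBelow, hb, hbN, Fin.prod_univ_succ, Fin.tail]
  · simp [cons_mem_decreasingBelow, hbN]

lemma truncatedMZV_eq_tsum_actWord {r : ℕ} {s : Fin r → ℕ} (hs : ∀ i, 0 < s i) {N : ℕ∞}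
    (hN : 0 < N) :
    truncatedMZV s N = ∑' m : ℕ, if (m : ℕ∞) < N then actWord (word s) unitMass m else 0 := by
  induction r generalizing N with
  | zero =>
    rw [truncatedMZV_zero, tsum_eq_single 0 fun m hm => by simp [word, actWord, unitMass, hm]]
    simp [word, actWord, unitMass, hN]
  | succ r ih =>
    rw [truncatedMZV_succ (hs 0)]
    refine tsum_congr fun b => ?_
    rw [actWord_word_succ (hs 0)]
    rcases Nat.eq_zero_or_pos b with rfl | hb
    · simp [(hs 0).ne']
    · rw [ih (s := Fin.tail s) (fun i => hs i.succ) (N := b) (by exact_mod_cast hb)]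
      simp only [Nat.cast_lt, tsum_ite_lt_eq_sum_range]

lemma mzv_eq_toReal_truncatedMZV {r : ℕ} (s : Fin r → ℕ) : mzv s = (truncatedMZV s ⊤).toReal := by
  have hindices : decreasingBelow r ⊤ = {f | (∀ i, 0 < f i) ∧ StrictAnti f} := by
    simp [decreasingBelow]
  have summand_ne_top (f : Fin r → ℕ) : ∏ i, recip (f i) ^ s i ≠ ∞ :=
    ENNReal.prod_ne_top fun i _ => ENNReal.pow_ne_top ENNReal.coe_ne_top
  rw [truncatedMZV, hindices, ENNReal.tsum_toReal_eq fun _ => summand_ne_top _]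
  simp only [ENNReal.toReal_prod, ENNReal.toReal_pow, toReal_recip, one_div_pow]
  rfl

lemma mzv_eq_toReal_tsum_actWord {r : ℕ} {s : Fin r → ℕ} (hs : ∀ i, 0 < s i) :
    mzv s = (∑' m, actWord (word s) unitMass m).toReal := by
  simp [mzv_eq_toReal_truncatedMZV, truncatedMZV_eq_tsum_actWord hs]

lemma word_two_one_eq_dualWord_word_three (n : ℕ) :
    word (fun i : Fin (2 * n) => if (i : ℕ) % 2 = 0 then 2 else 1) =
      dualWord (word fun _ : Fin n => 3) := by
  have word_two_one : word (fun i : Fin (2 * n) => if (i : ℕ) % 2 = 0 then 2 else 1) =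
      (List.replicate n [Letter.x, .y, .y]).flatten := by
    simp [word, List.ofFn_mul', List.flatMap, List.flatten_flatten]
  have word_three : word (fun _ : Fin n => 3) = (List.replicate n [Letter.x, .x, .y]).flatten := by
    simp [word, List.flatMap]
  rw [word_two_one, word_three]
  simp [dualWord, List.reverse_flatten, Letter.dual]

end ExponentStrings

end MultipleZeta

open MultipleZeta in
/-- The duality of multiple zeta values. Nonempty strings `s` and `t` are automatically admissible:
the word of each ends in `y`, so the word of its dual, which is the other one, starts with `x`. -/
theorem stmt_9_general {r l : ℕ} {s : Fin r → ℕ} {t : Fin l → ℕ} (hs : ∀ i, 0 < s i)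
    (ht : ∀ i, 0 < t i) (hst : word t = dualWord (word s)) : mzv s = mzv t := by
  rw [mzv_eq_toReal_tsum_actWord hs, mzv_eq_toReal_tsum_actWord ht, hst]
  rcases eq_or_ne (word s) [] with h | h
  · simp [h, dualWord]
  · obtain ⟨u, hu⟩ := word_eq_x_append_y_of_word_eq_dualWord hst h
    rw [hu, tsum_actWord_dualWord]

/-- For every nonnegative integer `n`, `ζ({3}ₙ) = ζ({2,1}ₙ)`. -/
theorem stmt_9 (n : ℕ) :
    mzv (fun _ : Fin n => 3) =
      mzv (fun i : Fin (2 * n) => if (i : ℕ) % 2 = 0 then 2 else 1) :=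
  stmt_9_general (fun _ => by norm_num) (fun _ => by split_ifs <;> norm_num)
    (MultipleZeta.word_two_one_eq_dualWord_word_three n)
end

section
/- (Zagier's identity) For every nonnegative integer n, ζ({3,1}ₙ) = 2π^{4n}/(4n+2)!. -/
open scoped BigOperators Real

/-!
The generating function, in a variable `x`, of the truncated values of `ζ({3,1}ₙ)` is a partial sum
at `X = 1` of the power series solution `H` of `((1 - X) d/dX)² (X d/dX)² H = x H`. For `x = -4 z⁴`
this solution is the product `₂F₁(z, -z; 1; X) ₂F₁(iz, -iz; 1; X)`, whose factors solve the
second-order equations `(1 - X) d/dX (X d/dX F) = ∓z² F`, with opposite eigenvalues. The partial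
sums of each factor at `X = 1` are those of Euler's product for the sine, so that for `x = t⁴` the
limit is `(cosh (π t) - cos (π t)) / (π t)²`. Comparing coefficients of `x ^ n` gives the identity.
-/

namespace MultipleZeta

open Filter Finset PowerSeries
open scoped Topology Nat

section FormalPowerSeries

variable (R : Type*) [CommRing R]

/-- The derivation `x d/dx` of `R⟦X⟧`, inverse to integration against the form `dx/x` of the
iterated integrals for multiple zeta values. -/
noncomputable def xDeriv : Derivation R R⟦X⟧ R⟦X⟧ := (X : R⟦X⟧) • d⁄dX R

/-- The derivation `(1 - x) d/dx` of `R⟦X⟧`, inverse to integration against the form `dx/(1 - x)` of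
the iterated integrals for multiple zeta values. -/
noncomputable def oneSubXDeriv : Derivation R R⟦X⟧ R⟦X⟧ := (1 - X : R⟦X⟧) • d⁄dX R

variable {R} {F G : R⟦X⟧} {w : R}

lemma one_sub_X_mul_xDeriv (F : R⟦X⟧) : (1 - X) * xDeriv R F = X * oneSubXDeriv R F := by
  simp only [xDeriv, oneSubXDeriv, Derivation.smul_apply, smul_eq_mul]
  ring

lemma xDeriv_mul_oneSubXDeriv (F G : R⟦X⟧) :
    xDeriv R F * oneSubXDeriv R G = oneSubXDeriv R F * xDeriv R G := by
  simp only [xDeriv, oneSubXDeriv, Derivation.smul_apply, smul_eq_mul]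
  ring

lemma coeff_xDeriv (F : R⟦X⟧) (m : ℕ) : coeff m (xDeriv R F) = m * coeff m F := by
  cases m with
  | zero => simp [xDeriv]
  | succ m =>
    simp only [xDeriv, Derivation.smul_apply, smul_eq_mul, coeff_succ_X_mul, coeff_derivative]
    push_cast
    ring

lemma coeff_oneSubXDeriv (F : R⟦X⟧) (m : ℕ) :
    coeff m (oneSubXDeriv R F) = (m + 1 : ℕ) * coeff (m + 1) F - m * coeff m F := by
  have hsplit : oneSubXDeriv R F = d⁄dX R F - xDeriv R F := by
    simp only [xDeriv, oneSubXDeriv, Derivation.smul_apply, smul_eq_mul]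
    ring
  rw [hsplit, map_sub, coeff_xDeriv, coeff_derivative]
  push_cast
  ring

lemma sum_coeff_oneSubXDeriv (F : R⟦X⟧) (m : ℕ) :
    ∑ l ∈ range m, coeff l (oneSubXDeriv R F) = m * coeff m F := by
  simp only [coeff_oneSubXDeriv]
  rw [sum_range_sub (fun l => (l : R) * coeff l F)]
  simp

lemma xDeriv_xDeriv_mul_of_eigen (hF : oneSubXDeriv R (xDeriv R F) = -(w • F))
    (hG : oneSubXDeriv R (xDeriv R G) = w • G) :
    xDeriv R (xDeriv R (F * G)) = 2 * (xDeriv R F * xDeriv R G) := by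
  have isUnit_one_sub_X : IsUnit (1 - X : R⟦X⟧) := isUnit_iff_constantCoeff.2 (by simp)
  have hF' := one_sub_X_mul_xDeriv (xDeriv R F)
  have hG' := one_sub_X_mul_xDeriv (xDeriv R G)
  rw [hF, smul_eq_C_mul] at hF'
  rw [hG, smul_eq_C_mul] at hG'
  apply isUnit_one_sub_X.mul_left_cancel
  simp only [Derivation.leibniz, map_add, smul_eq_mul]
  linear_combination G * hF' + F * hG'

lemma oneSubXDeriv_xDeriv_mul_xDeriv_of_eigen (hF : oneSubXDeriv R (xDeriv R F) = -(w • F))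
    (hG : oneSubXDeriv R (xDeriv R G) = w • G) :
    oneSubXDeriv R (xDeriv R F * xDeriv R G) = w • (G * xDeriv R F - F * xDeriv R G) := by
  simp only [Derivation.leibniz, smul_eq_mul, hF, hG, smul_eq_C_mul]
  ring

lemma oneSubXDeriv_wronskian_of_eigen (hF : oneSubXDeriv R (xDeriv R F) = -(w • F))
    (hG : oneSubXDeriv R (xDeriv R G) = w • G) :
    oneSubXDeriv R (G * xDeriv R F - F * xDeriv R G) = -((2 * w) • (F * G)) := by
  simp only [Derivation.leibniz, map_sub, smul_eq_mul, hF, hG, smul_eq_C_mul, map_mul, map_ofNat]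
  linear_combination xDeriv_mul_oneSubXDeriv F G

/-- The product solves `((1 - x) d/dx)² (x d/dx)² H = -4w² H`; this is the equation on coefficients,
where each `(1 - x) d/dx` has been inverted by a summation. -/
lemma coeff_mul_of_eigen {K : Type*} [Field K] [CharZero K] {F G : K⟦X⟧} {w : K}
    (hF : oneSubXDeriv K (xDeriv K F) = -(w • F))
    (hG : oneSubXDeriv K (xDeriv K G) = w • G) {m : ℕ} (hm : 0 < m) :
    coeff m (F * G) = -4 * w ^ 2 * (1 / (m : K) ^ 3 *
      ∑ k ∈ Ico 1 m, 1 / (k : K) * ∑ l ∈ range k, coeff l (F * G)) := by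
  set V := G * xDeriv K F - F * xDeriv K G with hV
  have coeff_zero_V : coeff 0 V = 0 := by
    simp only [hV, map_sub, coeff_mul, Nat.antidiagonal_zero, sum_singleton, coeff_xDeriv,
      Nat.cast_zero, zero_mul, mul_zero, sub_zero]
  have coeff_V {k : ℕ} (hk : 1 ≤ k) :
      coeff k V = -(2 * w) * (1 / (k : K) * ∑ l ∈ range k, coeff l (F * G)) := by
    have hk' : (k : K) ≠ 0 := by exact_mod_cast (Nat.one_le_iff_ne_zero.mp hk)
    have h := sum_coeff_oneSubXDeriv V k
    simp only [hV, oneSubXDeriv_wronskian_of_eigen hF hG, map_neg, coeff_smul, smul_eq_mul,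
      sum_neg_distrib, ← mul_sum] at h
    field_simp
    linear_combination -h
  have hcube : (m : K) ^ 3 * coeff m (F * G) = 2 * w * ∑ k ∈ Ico 1 m, coeff k V := by
    have h := sum_coeff_oneSubXDeriv (xDeriv K (xDeriv K (F * G))) m
    rw [coeff_xDeriv, coeff_xDeriv, xDeriv_xDeriv_mul_of_eigen hF hG, two_mul, map_add,
      oneSubXDeriv_xDeriv_mul_xDeriv_of_eigen hF hG, ← hV, sum_range_eq_add_Ico _ hm] at h
    simp only [map_add, coeff_smul, smul_eq_mul, coeff_zero_V, sum_add_distrib, ← mul_sum] at h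
    linear_combination -h
  have hm' : (m : K) ≠ 0 := by exact_mod_cast hm.ne'
  rw [sum_congr rfl fun k hk => coeff_V (mem_Ico.mp hk).1, ← mul_sum] at hcube
  rw [one_div_mul_eq_div, ← mul_div_assoc, eq_div_iff (pow_ne_zero 3 hm')]
  linear_combination hcube

end FormalPowerSeries

section Hypergeometric

variable {K : Type*} [Field K]

/-- The hypergeometric series `₂F₁(z, -z; 1; X)` as a formal power series, whose value at `1` is
`sin (π z) / (π z)`. -/
noncomputable def hypergeometric (z : K) : K⟦X⟧ :=
  PowerSeries.mk (ordinaryHypergeometricCoefficient z (-z) 1)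

lemma coeff_zero_hypergeometric (z : K) : coeff 0 (hypergeometric z) = 1 := by
  simp [hypergeometric, ordinaryHypergeometricCoefficient]

variable [CharZero K]

lemma coeff_succ_hypergeometric (z : K) (m : ℕ) :
    ((m : K) + 1) ^ 2 * coeff (m + 1) (hypergeometric z) =
      ((m : K) ^ 2 - z ^ 2) * coeff m (hypergeometric z) := by
  have hm : (m : K) + 1 ≠ 0 := Nat.cast_add_one_ne_zero m
  have hfact : (m ! : K) ≠ 0 := by exact_mod_cast m.factorial_ne_zero
  simp only [hypergeometric, coeff_mk, ordinaryHypergeometricCoefficient, ascPochhammer_succ_eval,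
    ascPochhammer_eval_one, Nat.factorial_succ]
  push_cast
  rw [add_comm 1 (m : K)]
  field_simp
  ring

lemma oneSubXDeriv_xDeriv_hypergeometric (z : K) :
    oneSubXDeriv K (xDeriv K (hypergeometric z)) = -(z ^ 2 • hypergeometric z) := by
  ext m
  simp only [coeff_oneSubXDeriv, coeff_xDeriv, map_neg, coeff_smul, smul_eq_mul]
  push_cast
  linear_combination coeff_succ_hypergeometric z m

lemma coeff_succ_hypergeometric_eq_prod (z : K) (m : ℕ) :
    coeff (m + 1) (hypergeometric z) =
      -z ^ 2 / ((m : K) + 1) ^ 2 * ∏ j ∈ range m, (1 + -z ^ 2 / ((j : K) + 1) ^ 2) := by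
  have hcast (k : ℕ) : (k : K) + 1 ≠ 0 := Nat.cast_add_one_ne_zero k
  induction m with
  | zero =>
    have h := coeff_succ_hypergeometric z 0
    rw [coeff_zero_hypergeometric] at h
    simpa using h
  | succ m ih =>
    have h := coeff_succ_hypergeometric z (m + 1)
    have := hcast m
    have := hcast (m + 1)
    rw [ih] at h
    rw [prod_range_succ]
    push_cast at *
    field_simp at h ⊢
    linear_combination h

lemma sum_coeff_hypergeometric (z : K) (m : ℕ) :
    ∑ k ∈ range (m + 1), coeff k (hypergeometric z) =
      ∏ j ∈ range m, (1 + -z ^ 2 / ((j : K) + 1) ^ 2) := by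
  induction m with
  | zero => simp [coeff_zero_hypergeometric]
  | succ m ih =>
    rw [sum_range_succ, ih, coeff_succ_hypergeometric_eq_prod, prod_range_succ]
    ring

end Hypergeometric

section ValueAtOne

lemma summable_norm_coeff_hypergeometric (z : ℂ) :
    Summable fun m => ‖coeff m (hypergeometric z)‖ := by
  obtain ⟨B, hB⟩ := (multipliable_sineTerm z).hasProd.tendsto_prod_nat.norm.bddAbove_range
  rw [← summable_nat_add_iff 1]
  refine .of_nonneg_of_le (fun _ => norm_nonneg _) (fun m => ?_)
    ((summable_pow_div_add (-z ^ 2) 2 1 Nat.one_lt_two).norm.mul_right B)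
  rw [coeff_succ_hypergeometric_eq_prod, norm_mul]
  have hprod : ‖∏ j ∈ range m, (1 + sineTerm z j)‖ ≤ B := hB ⟨m, rfl⟩
  simp only [norm_norm, Nat.cast_one]
  gcongr

lemma tsum_coeff_hypergeometric {z : ℂ} (hz : z ≠ 0) :
    ∑' m, coeff m (hypergeometric z) = Complex.sin (π * z) / (π * z) := by
  have h := (summable_norm_coeff_hypergeometric z).of_norm.hasSum.tendsto_sum_nat
  refine tendsto_nhds_unique ((tendsto_add_atTop_iff_nat 1).2 h) ?_
  simpa only [sum_coeff_hypergeometric] using tendsto_euler_sin_prod' hz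

lemma hasSum_coeff_hypergeometric_mul {a b : ℂ} (ha : a ≠ 0) (hb : b ≠ 0) :
    HasSum (fun m => coeff m (hypergeometric a * hypergeometric b))
      (Complex.sin (π * a) / (π * a) * (Complex.sin (π * b) / (π * b))) := by
  have sa := summable_norm_coeff_hypergeometric a
  have sb := summable_norm_coeff_hypergeometric b
  simp only [coeff_mul]
  rw [← tsum_coeff_hypergeometric ha, ← tsum_coeff_hypergeometric hb,
    tsum_mul_tsum_eq_tsum_sum_antidiagonal_of_summable_norm sa sb]
  exact (summable_norm_sum_mul_antidiagonal_of_summable_norm sa sb).of_norm.hasSum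

end ValueAtOne

section TruncatedSums

open Classical in
/-- The indices `N > k₀ > k₁ > ⋯ > k_{r-1} > 0` of the truncated multiple zeta values. -/
noncomputable def truncIndices (r N : ℕ) : Finset (Fin r → ℕ) :=
  {k ∈ Fintype.piFinset fun _ => Ico 1 N | StrictAnti k}

/-- The truncation of the multiple zeta value `mzv s` to indices smaller than `N`. -/
noncomputable def mzvTrunc {r : ℕ} (s : Fin r → ℕ) (N : ℕ) : ℝ :=
  ∑ k ∈ truncIndices r N, ∏ i, (1 : ℝ) / (k i : ℝ) ^ s i

variable {r : ℕ}

lemma mem_truncIndices {N : ℕ} {k : Fin r → ℕ} :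
    k ∈ truncIndices r N ↔ (∀ i, 0 < k i ∧ k i < N) ∧ StrictAnti k := by
  simp [truncIndices, Nat.one_le_iff_ne_zero, Nat.pos_iff_ne_zero]

lemma cons_mem_truncIndices {N a : ℕ} {k : Fin r → ℕ} :
    (Fin.cons a k : Fin (r + 1) → ℕ) ∈ truncIndices (r + 1) N ↔
      a ∈ Ico 1 N ∧ k ∈ truncIndices r a := by
  have strictAnti_cons : StrictAnti (Fin.cons a k : Fin (r + 1) → ℕ) ↔
      (∀ i, k i < a) ∧ StrictAnti k := Fin.liftFun_cons (· > ·)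
  simp only [mem_truncIndices, strictAnti_cons, Fin.forall_fin_succ, Fin.cons_zero, Fin.cons_succ,
    mem_Ico]
  grind

lemma truncIndices_mono : Monotone (truncIndices r) := fun M N hMN k hk => by
  rw [mem_truncIndices] at hk ⊢
  exact ⟨fun i => ⟨(hk.1 i).1, (hk.1 i).2.trans_le hMN⟩, hk.2⟩

lemma prod_one_div_pow_nonneg (s k : Fin r → ℕ) : 0 ≤ ∏ i, (1 : ℝ) / (k i : ℝ) ^ s i :=
  prod_nonneg fun _ _ => by positivity

lemma mzvTrunc_nonneg (s : Fin r → ℕ) (N : ℕ) : 0 ≤ mzvTrunc s N :=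
  sum_nonneg fun k _ => prod_one_div_pow_nonneg s k

lemma mzvTrunc_mono (s : Fin r → ℕ) : Monotone (mzvTrunc s) := fun _ _ hMN =>
  sum_le_sum_of_subset_of_nonneg (truncIndices_mono hMN) fun k _ _ => prod_one_div_pow_nonneg s k

lemma mzvTrunc_zero (s : Fin 0 → ℕ) (N : ℕ) : mzvTrunc s N = 1 := by
  have : truncIndices 0 N = univ := eq_univ_of_forall fun k =>
    mem_truncIndices.2 ⟨finZeroElim, finZeroElim⟩
  simp [mzvTrunc, this]

lemma mzvTrunc_succ (s : Fin (r + 1) → ℕ) (N : ℕ) :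
    mzvTrunc s N = ∑ a ∈ Ico 1 N, 1 / (a : ℝ) ^ s 0 * mzvTrunc (Fin.tail s) a := by
  simp only [mzvTrunc, mul_sum]
  rw [sum_sigma']
  refine sum_bij' (fun k _ => ⟨k 0, Fin.tail k⟩) (fun q _ => Fin.cons q.1 q.2)
    (fun k hk => ?_) (fun q hq => ?_) (fun k _ => Fin.cons_self_tail k) (fun q _ => ?_)
    (fun k _ => ?_)
  · rwa [mem_sigma, ← cons_mem_truncIndices, Fin.cons_self_tail]
  · rwa [cons_mem_truncIndices, ← mem_sigma]
  · simp
  · rw [Fin.prod_univ_succ]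
    rfl

lemma tendsto_mzvTrunc {s : Fin r → ℕ} (hs : BddAbove (Set.range (mzvTrunc s))) :
    Tendsto (mzvTrunc s) atTop (𝓝 (mzv s)) := by
  let indices (N : ℕ) : Finset {k : Fin r → ℕ // (∀ i, 0 < k i) ∧ StrictAnti k} :=
    (truncIndices r N).subtype _
  have mem_indices {N : ℕ} {k : {k : Fin r → ℕ // (∀ i, 0 < k i) ∧ StrictAnti k}} :
      k ∈ indices N ↔ ∀ i, k.1 i < N := by
    simp [indices, mem_truncIndices, k.2.1, k.2.2]
  have sum_indices (N : ℕ) :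
      ∑ k ∈ indices N, ∏ i, (1 : ℝ) / (k.1 i : ℝ) ^ s i = mzvTrunc s N :=
    sum_subtype_of_mem (fun k : Fin r → ℕ => ∏ i, (1 : ℝ) / (k i : ℝ) ^ s i) fun k hk =>
      ⟨fun i => ((mem_truncIndices.1 hk).1 i).1, (mem_truncIndices.1 hk).2⟩
  have exhaust : Tendsto indices atTop atTop := by
    refine tendsto_atTop_finset_of_monotone (fun M N hMN k hk => ?_) fun k => ?_
    · exact mem_indices.2 fun i => (mem_indices.1 hk i).trans_le hMN
    · exact ⟨∑ i, k.1 i + 1, mem_indices.2 fun i => Nat.lt_succ_of_le <|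
        single_le_sum (f := k.1) (fun _ _ => Nat.zero_le _) (mem_univ i)⟩
  obtain ⟨B, hB⟩ := hs
  have summable : Summable fun k : {k : Fin r → ℕ // (∀ i, 0 < k i) ∧ StrictAnti k} =>
      ∏ i, (1 : ℝ) / (k.1 i : ℝ) ^ s i := by
    refine summable_of_sum_le (c := B) (fun k => prod_one_div_pow_nonneg s k.1) fun u => ?_
    obtain ⟨N, hN⟩ := (exhaust.eventually_ge_atTop u).exists
    calc _ ≤ ∑ k ∈ indices N, ∏ i, (1 : ℝ) / (k.1 i : ℝ) ^ s i :=
          sum_le_sum_of_subset_of_nonneg hN fun k _ _ => prod_one_div_pow_nonneg s k.1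
      _ = mzvTrunc s N := sum_indices N
      _ ≤ B := hB ⟨N, rfl⟩
  exact (summable.hasSum.comp exhaust).congr sum_indices

end TruncatedSums

section GeneratingFunction

/-- The exponent string `3, 1, 3, 1, …` of length `r`. -/
def threeOne (r : ℕ) : Fin r → ℕ := fun i => if (i : ℕ) % 2 = 0 then 3 else 1

lemma mzvTrunc_threeOne_add_two (r N : ℕ) :
    mzvTrunc (threeOne (r + 2)) N =
      ∑ m ∈ Ico 1 N, 1 / (m : ℝ) ^ 3 * ∑ k ∈ Ico 1 m, 1 / (k : ℝ) * mzvTrunc (threeOne r) k := by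
  have tail_tail : Fin.tail (Fin.tail (threeOne (r + 2))) = threeOne r := by
    ext i
    simp [Fin.tail, threeOne, Nat.add_assoc]
  simp only [mzvTrunc_succ, tail_tail]
  simp [Fin.tail, threeOne]

/-- Peeling off the two outermost summation indices of `mzvTrunc (threeOne (2 * n + 2))` gives the
recursion for `h`, with one more factor `x`. -/
lemma hasSum_pow_mul_mzvTrunc {x : ℂ} {h : ℕ → ℂ} (h_zero : h 0 = 1)
    (h_rec : ∀ m, 0 < m → h m =
      x * (1 / (m : ℂ) ^ 3 * ∑ k ∈ Ico 1 m, 1 / (k : ℂ) * ∑ l ∈ range k, h l))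
    {N : ℕ} (hN : 0 < N) :
    HasSum (fun n => x ^ n * (mzvTrunc (threeOne (2 * n)) N : ℂ)) (∑ l ∈ range N, h l) := by
  induction N using Nat.strong_induction_on with
  | _ N ih =>
    rw [sum_range_eq_add_Ico _ hN, h_zero, add_comm, ← hasSum_nat_add_iff' 1]
    simp only [sum_range_one, pow_zero, mzvTrunc_zero, Complex.ofReal_one, mul_one,
      add_sub_cancel_right]
    rw [sum_congr rfl fun m hm => h_rec m (mem_Ico.1 hm).1, ← mul_sum]
    have hasSum_Ico : HasSum (fun n => x * ∑ m ∈ Ico 1 N, 1 / (m : ℂ) ^ 3 *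
        ∑ k ∈ Ico 1 m, 1 / (k : ℂ) * (x ^ n * (mzvTrunc (threeOne (2 * n)) k : ℂ)))
        (x * ∑ m ∈ Ico 1 N, 1 / (m : ℂ) ^ 3 *
          ∑ k ∈ Ico 1 m, 1 / (k : ℂ) * ∑ l ∈ range k, h l) :=
      .mul_left _ <| hasSum_sum fun m hm => .mul_left _ <| hasSum_sum fun k hk => .mul_left _ <|
        ih k ((mem_Ico.1 hk).2.trans (mem_Ico.1 hm).2) (mem_Ico.1 hk).1
    refine hasSum_Ico.congr_fun fun n => ?_
    rw [Nat.mul_add, mul_one, mzvTrunc_threeOne_add_two]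
    push_cast
    simp only [mul_sum]
    refine sum_congr rfl fun m _ => sum_congr rfl fun k _ => ?_
    ring

end GeneratingFunction

section Limits

lemma hasSum_of_tendsto_of_monotone {ι : Type*} {f : ℕ → ι → ℝ} {g : ι → ℝ} {S : ℕ → ℝ} {L : ℝ}
    (f_nonneg : ∀ N i, 0 ≤ f N i) (f_mono : ∀ i, Monotone (f · i))
    (f_hasSum : ∀ᶠ N in atTop, HasSum (f N) (S N)) (hS : Tendsto S atTop (𝓝 L))
    (hg : ∀ i, Tendsto (f · i) atTop (𝓝 (g i))) : HasSum g L := by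
  have f_le_g (N : ℕ) (i : ι) : f N i ≤ g i := (f_mono i).ge_of_tendsto (hg i) N
  have summable_g : Summable g := by
    refine summable_of_sum_le (c := L) (fun i => (f_nonneg 0 i).trans (f_le_g 0 i)) fun u => ?_
    refine le_of_tendsto_of_tendsto (tendsto_finsetSum u fun i _ => hg i) hS ?_
    filter_upwards [f_hasSum] with N hN using sum_le_hasSum u (fun i _ => f_nonneg N i) hN
  have tendsto_tsum : Tendsto (fun N => ∑' i, f N i) atTop (𝓝 (∑' i, g i)) :=
    tendsto_tsum_of_dominated_convergence summable_g hg <| .of_forall fun N i => by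
      simpa [abs_of_nonneg (f_nonneg N i)] using f_le_g N i
  have tsum_eq : ∑' i, g i = L := tendsto_nhds_unique tendsto_tsum <|
    hS.congr' (f_hasSum.mono fun N hN => hN.tsum_eq.symm)
  exact tsum_eq ▸ summable_g.hasSum

lemma eq_of_frequently_hasSum {𝕜 : Type*} [NontriviallyNormedField 𝕜] [CompleteSpace 𝕜]
    {a b : ℕ → 𝕜} (h : ∃ᶠ x in 𝓝[≠] (0 : 𝕜), ∃ L,
      HasSum (fun n => a n * x ^ n) L ∧ HasSum (fun n => b n * x ^ n) L) : a = b := by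
  let p := FormalMultilinearSeries.ofScalars 𝕜 (a - b)
  have h_zero : ∃ᶠ x in 𝓝[≠] (0 : 𝕜), HasSum (fun n => (a - b) n * x ^ n) 0 :=
    h.mono fun x ⟨L, ha, hb⟩ => by simpa [sub_mul] using ha.sub hb
  obtain ⟨x, hx, x_ne_zero⟩ := (h_zero.and_eventually eventually_mem_nhdsWithin).exists
  have radius_pos : 0 < p.radius := by
    refine lt_of_lt_of_le ?_ (p.le_radius_of_tendsto (r := ‖x‖₊) (l := 0) ?_)
    · simpa using x_ne_zero
    · simpa [p, FormalMultilinearSeries.ofScalars_norm] using hx.summable.tendsto_atTop_zero.norm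
  have hp : HasFPowerSeriesAt p.sum p 0 := (p.hasFPowerSeriesOnBall radius_pos).hasFPowerSeriesAt
  rw [← sub_eq_zero, ← FormalMultilinearSeries.ofScalars_series_eq_zero (E := 𝕜)]
  by_contra p_ne_zero
  refine h_zero ((hp.locally_ne_zero p_ne_zero).mono fun y hy hsum => hy ?_)
  simpa [p, FormalMultilinearSeries.sum, mul_comm] using hsum.tsum_eq

lemma eq_of_forall_pos_hasSum {a b : ℕ → ℝ} (h : ∀ x : ℝ, 0 < x → ∃ L,
    HasSum (fun n => a n * x ^ n) L ∧ HasSum (fun n => b n * x ^ n) L) : a = b :=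
  eq_of_frequently_hasSum <|
    ((eventually_mem_nhdsWithin (s := Set.Ioi (0 : ℝ))).mono h).frequently.filter_mono
      (nhdsGT_le_nhdsNE 0)

end Limits

section Evaluation

lemma hasSum_pow_mul_mzvTrunc_threeOne (z : ℂ) {N : ℕ} (hN : 0 < N) :
    HasSum (fun n => (-4 * (z ^ 2) ^ 2) ^ n * (mzvTrunc (threeOne (2 * n)) N : ℂ))
      (∑ l ∈ range N, coeff l (hypergeometric z * hypergeometric (Complex.I * z))) := by
  refine hasSum_pow_mul_mzvTrunc ?_ (fun m hm => coeff_mul_of_eigen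
    (oneSubXDeriv_xDeriv_hypergeometric z) ?_ hm) hN
  · simp only [coeff_mul, Nat.antidiagonal_zero, sum_singleton, coeff_zero_hypergeometric, mul_one]
  · rw [oneSubXDeriv_xDeriv_hypergeometric, mul_pow, Complex.I_sq, neg_one_mul, neg_smul, neg_neg]

lemma sin_mul_sin_I_mul (u : ℂ) : Complex.sin u * Complex.sin (Complex.I * u) =
    (Complex.cos ((1 - Complex.I) * u) - Complex.cos ((1 + Complex.I) * u)) / 2 := by
  simp only [sub_mul, add_mul, one_mul, Complex.cos_sub, Complex.cos_add]
  ring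

/-- The factor `(1 + i) / 2` is chosen so that `-4 z⁴ = t⁴` for `z = (1 + i) t / 2`. -/
lemma hasSum_coeff_hypergeometric_mul_I {t : ℝ} (ht : t ≠ 0) {z : ℂ}
    (hz : z = (1 + Complex.I) * t / 2) :
    HasSum (fun m => coeff m (hypergeometric z * hypergeometric (Complex.I * z)))
      (((Real.cosh (π * t) - Real.cos (π * t)) / (π * t) ^ 2 : ℝ) : ℂ) := by
  have ht' : (t : ℂ) ≠ 0 := by exact_mod_cast ht
  have hpi : (π : ℂ) ≠ 0 := by exact_mod_cast Real.pi_ne_zero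
  have one_add_I_ne_zero : 1 + Complex.I ≠ 0 := fun h => by simpa using congrArg Complex.re h
  have hz0 : z ≠ 0 := hz ▸ div_ne_zero (mul_ne_zero one_add_I_ne_zero ht') two_ne_zero
  have one_sub_I_mul : (1 - Complex.I) * (π * z) = π * t := by
    rw [hz]; linear_combination -(π : ℂ) * t / 2 * Complex.I_sq
  have one_add_I_mul : (1 + Complex.I) * (π * z) = π * t * Complex.I := by
    rw [hz]; linear_combination (π : ℂ) * t / 2 * Complex.I_sq
  have denominator : π * z * (Complex.I * (π * z)) = -(π * t) ^ 2 / 2 := by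
    rw [hz]; linear_combination (π : ℂ) ^ 2 * t ^ 2 / 4 * (2 + Complex.I) * Complex.I_sq
  have numerator := sin_mul_sin_I_mul (π * z)
  rw [one_sub_I_mul, one_add_I_mul, Complex.cos_mul_I] at numerator
  convert hasSum_coeff_hypergeometric_mul hz0 (mul_ne_zero Complex.I_ne_zero hz0) using 1
  rw [mul_left_comm (π : ℂ) Complex.I z, div_mul_div_comm, denominator, numerator]
  push_cast
  field_simp
  ring

lemma exists_hasSum_mzvTrunc_threeOne {t : ℝ} (ht : t ≠ 0) : ∃ S : ℕ → ℝ,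
    (∀ᶠ N in atTop, HasSum (fun n => mzvTrunc (threeOne (2 * n)) N * (t ^ 4) ^ n) (S N)) ∧
      Tendsto S atTop (𝓝 ((Real.cosh (π * t) - Real.cos (π * t)) / (π * t) ^ 2)) := by
  set z : ℂ := (1 + Complex.I) * t / 2 with hz
  have quartic : -4 * (z ^ 2) ^ 2 = ((t ^ 4 : ℝ) : ℂ) := by
    rw [hz]
    push_cast
    linear_combination -(t : ℂ) ^ 4 / 4 * (Complex.I ^ 2 + 4 * Complex.I + 5) * Complex.I_sq
  have tendsto_partialSum := (hasSum_coeff_hypergeometric_mul_I ht hz).tendsto_sum_nat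
  refine ⟨_, ?_, (Complex.continuous_re.tendsto _).comp tendsto_partialSum⟩
  filter_upwards [eventually_gt_atTop 0] with N hN
  have h := Complex.hasSum_re (hasSum_pow_mul_mzvTrunc_threeOne z hN)
  rw [quartic] at h
  refine h.congr_fun fun n => ?_
  rw [← Complex.ofReal_pow, ← Complex.ofReal_mul, Complex.ofReal_re, mul_comm]

lemma bddAbove_mzvTrunc_threeOne (n : ℕ) :
    BddAbove (Set.range (mzvTrunc (threeOne (2 * n)))) := by
  obtain ⟨S, hasSum_S, tendsto_S⟩ := exists_hasSum_mzvTrunc_threeOne one_ne_zero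
  refine tendsto_S.isBoundedUnder_le.mono_le ?_ |>.bddAbove_range
  filter_upwards [hasSum_S] with N hN
  simpa using le_hasSum hN n fun k _ => mul_nonneg (mzvTrunc_nonneg _ N) (by positivity)

lemma hasSum_mzv_threeOne {t : ℝ} (ht : t ≠ 0) :
    HasSum (fun n => mzv (threeOne (2 * n)) * (t ^ 4) ^ n)
      ((Real.cosh (π * t) - Real.cos (π * t)) / (π * t) ^ 2) := by
  obtain ⟨S, hasSum_S, tendsto_S⟩ := exists_hasSum_mzvTrunc_threeOne ht
  refine hasSum_of_tendsto_of_monotone (fun N n => ?_) (fun n => ?_) hasSum_S tendsto_S fun n => ?_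
  · exact mul_nonneg (mzvTrunc_nonneg _ N) (by positivity)
  · exact (mzvTrunc_mono _).mul_const (by positivity)
  · exact (tendsto_mzvTrunc (bddAbove_mzvTrunc_threeOne n)).mul_const _

lemma hasSum_cosh_sub_cos_div_sq {u : ℝ} (hu : u ≠ 0) :
    HasSum (fun n : ℕ => 2 / ((4 * n + 2)! : ℝ) * u ^ (4 * n))
      ((Real.cosh u - Real.cos u) / u ^ 2) := by
  have h := ((Real.hasSum_cosh u).sub (Real.hasSum_cos u)).div_const (u ^ 2)
  have odd_injective : Function.Injective fun n : ℕ => 2 * n + 1 := fun a b hab => by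
    simpa using hab
  rw [← odd_injective.hasSum_iff] at h
  · refine h.congr_fun fun n => ?_
    have index : 2 * (2 * n + 1) = 4 * n + 2 := by ring
    have sign : (-1 : ℝ) ^ (2 * n + 1) = -1 := Odd.neg_one_pow ⟨n, rfl⟩
    simp only [Function.comp_apply, index, sign, pow_add u]
    field_simp
    ring
  · intro k hk
    have even_k : Even k := Nat.not_odd_iff_even.1 fun ⟨n, hn⟩ => hk ⟨n, hn.symm⟩
    simp [even_k.neg_one_pow]

end Evaluation

end MultipleZeta

/-- Zagier's identity: for every nonnegative integer `n`,
`ζ({3,1}ₙ) = 2π^{4n}/(4n+2)!`. -/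
theorem stmt_10 (n : ℕ) :
    mzv (fun i : Fin (2 * n) => if (i : ℕ) % 2 = 0 then 3 else 1) =
      2 * π ^ (4 * n) / (Nat.factorial (4 * n + 2)) := by
  suffices h : (fun n => mzv (MultipleZeta.threeOne (2 * n))) =
      fun n => 2 * π ^ (4 * n) / (Nat.factorial (4 * n + 2)) from congrFun h n
  refine MultipleZeta.eq_of_forall_pos_hasSum fun x hx => ?_
  obtain ⟨t, ht, rfl⟩ : ∃ t : ℝ, 0 < t ∧ t ^ 4 = x :=
    ⟨x ^ (4⁻¹ : ℝ), by positivity, Real.rpow_inv_natCast_pow hx.le four_ne_zero⟩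
  have closed_form := MultipleZeta.hasSum_cosh_sub_cos_div_sq (mul_ne_zero Real.pi_ne_zero ht.ne')
  refine ⟨_, MultipleZeta.hasSum_mzv_threeOne ht.ne', closed_form.congr_fun fun n => ?_⟩
  rw [mul_pow, pow_mul t]
  ring
end

section
/- For every nonzero real number x, ∑_{n=0}^∞ ζ({3,1}ₙ)·x^{4n} = (cosh(πx) − cos(πx))/(π² x²). -/
open scoped BigOperators Real

/-!
Let `D = d/dt`. The polylogarithm generating function `Y(t) = ∑ n, Li_{3,1,…,3,1}(t) x ^ (4 * n)`
is the power series solution of `((1 - t) D)² (t D)² Y = x⁴ Y` with constant term `1`. The series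
`F_z = ₂F₁(z, -z; 1; t)` is an eigenfunction of `(1 - t) D t D` with eigenvalue `-z²`, and the
product of two eigenfunctions with opposite eigenvalues `∓z²` satisfies the fourth order equation
with eigenvalue `-4 z⁴`. For `z = (1 + i) x / 2` this gives `Y = F_z F_{iz}`. The partial sums of
the coefficients of `F_z` are those of Euler's sine product, so
`Y(1) = sin(πz) sin(πiz) / (π² i z²) = (cosh(πx) - cos(πx)) / (π² x²)`. Analytic questions are
avoided by comparing coefficient recursions: as the coefficients of `Y` are nonnegative, every
rearrangement takes place in `ℝ≥0∞`.
-/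

open Finset
open scoped ENNReal NNReal

section Derivation

variable {R A : Type*} [CommRing R] [CommRing A] [Algebra R A] (D : Derivation R A A)
  {t c F G : A}

theorem derivation_sq_mul_of_eigen (ht : IsLeftRegular (1 - t))
    (hF : (1 - t) * D (t * D F) = -(c * F)) (hG : (1 - t) * D (t * D G) = c * G) :
    t * D (t * D (F * G)) = 2 * ((t * D F) * (t * D G)) := by
  have cancel : D (t * D F) * G + F * D (t * D G) = 0 := by
    apply ht
    beta_reduce
    linear_combination G * hF + F * hG
  have leibniz : t * D (F * G) = t * D F * G + F * (t * D G) := by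
    rw [D.leibniz, smul_eq_mul, smul_eq_mul]
    ring
  rw [leibniz, map_add, D.leibniz (t * D F) G, D.leibniz F (t * D G)]
  simp only [smul_eq_mul]
  linear_combination t * cancel

theorem derivation_cube_mul_of_eigen (ht : IsLeftRegular (1 - t))
    (hF : (1 - t) * D (t * D F) = -(c * F)) (hG : (1 - t) * D (t * D G) = c * G) :
    (1 - t) * D (t * D (t * D (F * G))) = 2 * c * (t * D F * G - F * (t * D G)) := by
  rw [derivation_sq_mul_of_eigen D ht hF hG, two_mul, map_add, D.leibniz]
  simp only [smul_eq_mul]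
  linear_combination 2 * (t * D F) * hG + 2 * (t * D G) * hF

theorem derivation_quartic_mul_of_eigen (ht : IsLeftRegular (1 - t)) (hc : D c = 0)
    (hF : (1 - t) * D (t * D F) = -(c * F)) (hG : (1 - t) * D (t * D G) = c * G) :
    (1 - t) * D ((1 - t) * D (t * D (t * D (F * G)))) = -4 * c ^ 2 * (F * G) := by
  have hD2c : D (2 * c) = 0 := by rw [two_mul, map_add, hc, add_zero]
  rw [derivation_cube_mul_of_eigen D ht hF hG, D.leibniz, hD2c,
    map_sub, D.leibniz (t * D F) G, D.leibniz F (t * D G)]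
  simp only [smul_eq_mul]
  linear_combination 2 * c * G * hF - 2 * c * F * hG

end Derivation

section PowerSeries
open PowerSeries

variable {R : Type*} [CommRing R]

theorem isUnit_one_sub_X : IsUnit (1 - X : R⟦X⟧) := by
  simp [PowerSeries.isUnit_iff_constantCoeff]

theorem coeff_X_mul_derivative (F : R⟦X⟧) (n : ℕ) :
    coeff n (X * d⁄dX R F) = n * coeff n F := by
  cases n with
  | zero => simp
  | succ n => rw [coeff_succ_X_mul, coeff_derivative, mul_comm, Nat.cast_succ]

theorem sum_range_coeff_one_sub_X_mul_derivative (F : R⟦X⟧) (n : ℕ) :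
    ∑ k ∈ range n, coeff k ((1 - X) * d⁄dX R F) = n * coeff n F := by
  induction n with
  | zero => simp
  | succ n ih =>
    rw [sum_range_succ, ih, sub_mul, one_mul, map_sub, coeff_X_mul_derivative, coeff_derivative]
    push_cast
    ring

end PowerSeries

theorem sum_range_eq_add_sum_Ioo {M : Type*} [AddCommMonoid M] (f : ℕ → M) {n : ℕ} (hn : 0 < n) :
    ∑ k ∈ range n, f k = f 0 + ∑ k ∈ Ioo 0 n, f k := by
  rw [range_eq_Ico, ← Ioo_insert_left hn, sum_insert left_notMem_Ioo]

section FieldPowerSeries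
open PowerSeries

variable {K : Type*} [Field K] [CharZero K]

theorem cube_mul_coeff_of_derivative_quartic {c : K} {Y S : K⟦X⟧}
    (hS : (1 - X) * d⁄dX K (X * d⁄dX K (X * d⁄dX K Y)) = S) (hS0 : coeff 0 S = 0)
    (hY : (1 - X) * d⁄dX K S = C c * Y) (n : ℕ) :
    (n : K) ^ 3 * coeff n Y = c * ∑ p ∈ Ioo 0 n, (p : K)⁻¹ * ∑ q ∈ range p, coeff q Y := by
  rcases n.eq_zero_or_pos with rfl | hn
  · simp
  have coeff_S {p : ℕ} (hp : 0 < p) :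
      coeff p S = c * ((p : K)⁻¹ * ∑ q ∈ range p, coeff q Y) := by
    have hp' : (p : K) ≠ 0 := Nat.cast_ne_zero.2 hp.ne'
    rw [mul_left_comm, eq_inv_mul_iff_mul_eq₀ hp', ← sum_range_coeff_one_sub_X_mul_derivative,
      hY, mul_sum]
    simp only [coeff_C_mul]
  calc (n : K) ^ 3 * coeff n Y = n * coeff n (X * d⁄dX K (X * d⁄dX K Y)) := by
        rw [coeff_X_mul_derivative, coeff_X_mul_derivative]
        ring
    _ = ∑ p ∈ Ioo 0 n, coeff p S := by
        rw [← sum_range_coeff_one_sub_X_mul_derivative, hS, sum_range_eq_add_sum_Ioo _ hn, hS0,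
          zero_add]
    _ = c * ∑ p ∈ Ioo 0 n, (p : K)⁻¹ * ∑ q ∈ range p, coeff q Y := by
        rw [mul_sum]
        exact sum_congr rfl fun p hp => coeff_S (mem_Ioo.1 hp).1

end FieldPowerSeries

section GaussSeries
open PowerSeries

variable {K : Type*} [Field K]

/-- The Gauss hypergeometric series `₂F₁(z, -z; 1; X)`. -/
noncomputable def gaussSeries (z : K) : K⟦X⟧ :=
  mk (ordinaryHypergeometricCoefficient z (-z) 1)

theorem coeff_zero_gaussSeries (z : K) : coeff 0 (gaussSeries z) = 1 := by
  simp [gaussSeries, ordinaryHypergeometricCoefficient]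

variable [CharZero K]

theorem coeff_succ_gaussSeries (z : K) (n : ℕ) :
    (n + 1 : K) ^ 2 * coeff (n + 1) (gaussSeries z) =
      (n ^ 2 - z ^ 2) * coeff n (gaussSeries z) := by
  have hn : (n + 1 : K) ≠ 0 := n.cast_add_one_ne_zero
  have hfac : (n.factorial : K) ≠ 0 := Nat.cast_ne_zero.2 n.factorial_ne_zero
  simp only [gaussSeries, coeff_mk, ordinaryHypergeometricCoefficient, ascPochhammer_eval_one]
  simp only [ascPochhammer_succ_eval, Nat.factorial_succ]
  push_cast
  field_simp
  ring

theorem gaussSeries_derivative_eigen (z : K) :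
    (1 - X) * d⁄dX K (X * d⁄dX K (gaussSeries z)) = -(C (z ^ 2) * gaussSeries z) := by
  ext n
  rw [sub_mul, one_mul, map_sub, map_neg, coeff_C_mul, coeff_derivative, coeff_X_mul_derivative,
    coeff_X_mul_derivative, coeff_X_mul_derivative]
  push_cast
  linear_combination coeff_succ_gaussSeries z n

theorem sq_mul_coeff_gaussSeries (z : K) (n : ℕ) :
    (n : K) ^ 2 * coeff n (gaussSeries z) = -z ^ 2 * ∑ k ∈ range n, coeff k (gaussSeries z) := by
  have sum_range_eq := sum_range_coeff_one_sub_X_mul_derivative (X * d⁄dX K (gaussSeries z)) n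
  simp only [gaussSeries_derivative_eigen, map_neg, coeff_C_mul, sum_neg_distrib, ← mul_sum,
    coeff_X_mul_derivative] at sum_range_eq
  linear_combination -sum_range_eq

theorem sum_range_succ_coeff_gaussSeries (z : K) (n : ℕ) :
    ∑ k ∈ range (n + 1), coeff k (gaussSeries z) = ∏ j ∈ range n, (1 - z ^ 2 / (j + 1) ^ 2) := by
  induction n with
  | zero => simp [coeff_zero_gaussSeries]
  | succ n ih =>
    have hn : (n + 1 : K) ≠ 0 := n.cast_add_one_ne_zero
    have next_coeff := sq_mul_coeff_gaussSeries z (n + 1)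
    push_cast at next_coeff
    rw [sum_range_succ, prod_range_succ, ← ih]
    field_simp
    linear_combination next_coeff

theorem cube_mul_coeff_gaussSeries_mul_gaussSeries {z w : K} (hzw : w ^ 2 = -z ^ 2) (n : ℕ) :
    (n : K) ^ 3 * coeff n (gaussSeries z * gaussSeries w) =
      -4 * z ^ 4 * ∑ p ∈ Ioo 0 n, (p : K)⁻¹ *
        ∑ q ∈ range p, coeff q (gaussSeries z * gaussSeries w) := by
  have hz := gaussSeries_derivative_eigen z
  have hw : (1 - X) * d⁄dX K (X * d⁄dX K (gaussSeries w)) = C (z ^ 2) * gaussSeries w := by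
    rw [gaussSeries_derivative_eigen, hzw, map_neg, neg_mul, neg_neg]
  have regular : IsLeftRegular (1 - X : K⟦X⟧) := isUnit_one_sub_X.isRegular.left
  have C_eq : (C (-4 * z ^ 4) : K⟦X⟧) = -4 * C (z ^ 2) ^ 2 := by
    rw [← map_pow, ← pow_mul, map_mul, map_neg, map_ofNat]
  refine cube_mul_coeff_of_derivative_quartic rfl ?_ ?_ n
  · rw [derivation_cube_mul_of_eigen _ regular hz hw]
    simp
  · rw [C_eq, derivation_quartic_mul_of_eigen _ regular derivative_C hz hw]

end GaussSeries

section GaussValue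
open PowerSeries Filter Complex

variable {z : ℂ}

theorem tendsto_sum_coeff_gaussSeries (hz : z ≠ 0) :
    Tendsto (fun n => ∑ k ∈ range n, coeff k (gaussSeries z)) atTop
      (nhds (sin (π * z) / (π * z))) := by
  have hπz : (π * z : ℂ) ≠ 0 := mul_ne_zero (mod_cast Real.pi_ne_zero) hz
  rw [← tendsto_add_atTop_iff_nat 1]
  refine ((tendsto_euler_sin_prod z).div_const (π * z)).congr fun n => ?_
  rw [sum_range_succ_coeff_gaussSeries, mul_div_cancel_left₀ _ hπz]

theorem summable_norm_coeff_gaussSeries (hz : z ≠ 0) :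
    Summable fun n => ‖coeff n (gaussSeries z)‖ := by
  have coeff_eq : (fun n => coeff n (gaussSeries z)) =ᶠ[atTop] fun n : ℕ =>
      -z ^ 2 * (∑ k ∈ range n, coeff k (gaussSeries z)) * (1 / (n : ℂ) ^ 2) := by
    filter_upwards [eventually_ne_atTop 0] with n hn
    rw [← sq_mul_coeff_gaussSeries]
    field_simp
  have isBigO_partialSum := (tendsto_sum_coeff_gaussSeries hz).isBigO_one ℝ
  have isBigO_inv_sq : (fun n : ℕ => 1 / (n : ℂ) ^ 2) =O[atTop] fun n : ℕ => 1 / (n : ℝ) ^ 2 :=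
    Asymptotics.isBigO_of_le _ fun n => by simp
  have isBigO_coeff := coeff_eq.trans_isBigO
    ((isBigO_partialSum.const_mul_left (-z ^ 2)).mul isBigO_inv_sq)
  simp only [one_mul] at isBigO_coeff
  exact summable_of_isBigO_nat (Real.summable_one_div_nat_pow.2 one_lt_two) isBigO_coeff.norm_left

theorem tsum_coeff_gaussSeries (hz : z ≠ 0) :
    ∑' n, coeff n (gaussSeries z) = sin (π * z) / (π * z) :=
  ((summable_norm_coeff_gaussSeries hz).of_norm.hasSum_iff_tendsto_nat.2
    (tendsto_sum_coeff_gaussSeries hz)).tsum_eq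

theorem hasSum_coeff_mul {A : Type*} [NormedCommRing A] [CompleteSpace A] {F G : A⟦X⟧}
    (hF : Summable fun n => ‖coeff n F‖) (hG : Summable fun n => ‖coeff n G‖) :
    HasSum (fun n => coeff n (F * G)) ((∑' n, coeff n F) * ∑' n, coeff n G) := by
  rw [tsum_mul_tsum_eq_tsum_sum_antidiagonal_of_summable_norm hF hG]
  simp only [coeff_mul]
  exact (summable_norm_sum_mul_antidiagonal_of_summable_norm hF hG).of_norm.hasSum

theorem sin_mul_sin_I_mul (x : ℂ) :
    sin (π * ((1 + I) / 2 * x)) * sin (π * (I * ((1 + I) / 2 * x))) =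
      (cos (π * x) - cosh (π * x)) / 2 := by
  have half_add : (π * x + π * x * I) / 2 = π * ((1 + I) / 2 * x) := by ring
  have half_sub : (π * x - π * x * I) / 2 = -(π * (I * ((1 + I) / 2 * x))) := by
    linear_combination (π * x / 2) * I_sq
  rw [← cos_mul_I, cos_sub_cos, half_add, half_sub, sin_neg]
  ring

/-- The generating function `∑ n, Li_{3,1,…,3,1}(X) x ^ (4 * n)` of the polylogarithms that evaluate
to `ζ({3,1}ₙ)` at `X = 1`, in the closed form found by Borwein, Bradley, Broadhurst and Lisoněk. -/
noncomputable def threeOneSeries (x : ℂ) : ℂ⟦X⟧ :=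
  gaussSeries ((1 + I) / 2 * x) * gaussSeries (I * ((1 + I) / 2 * x))

theorem coeff_zero_threeOneSeries (x : ℂ) : coeff 0 (threeOneSeries x) = 1 := by
  simp [threeOneSeries, coeff_mul, coeff_zero_gaussSeries, -coeff_zero_eq_constantCoeff]

theorem coeff_threeOneSeries (x : ℂ) {n : ℕ} (hn : 0 < n) :
    coeff n (threeOneSeries x) = x ^ 2 / n ^ 3 *
      ∑ p ∈ Ioo 0 n, x ^ 2 / p * ∑ q ∈ range p, coeff q (threeOneSeries x) := by
  have hn' : (n : ℂ) ≠ 0 := Nat.cast_ne_zero.2 hn.ne'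
  have neg_four_mul_pow : -4 * ((1 + I) / 2 * x) ^ 4 = x ^ 4 := by
    have one_add_I_sq : (1 + I) ^ 2 = 2 * I := by linear_combination I_sq
    linear_combination
      (-(x ^ 4) / 4 * ((1 + I) ^ 2 + 2 * I)) * one_add_I_sq - x ^ 4 * I_sq
  have cube_mul := cube_mul_coeff_gaussSeries_mul_gaussSeries
    (z := (1 + I) / 2 * x) (w := I * ((1 + I) / 2 * x)) (by rw [mul_pow, I_sq, neg_one_mul]) n
  rw [neg_four_mul_pow, ← threeOneSeries] at cube_mul
  rw [(eq_div_iff (pow_ne_zero 3 hn')).2 ((mul_comm _ _).trans cube_mul)]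
  simp only [div_eq_mul_inv (x ^ 2), mul_assoc, ← mul_sum]
  ring

theorem hasSum_coeff_threeOneSeries {x : ℂ} (hx : x ≠ 0) :
    HasSum (fun n => coeff n (threeOneSeries x))
      ((cosh (π * x) - cos (π * x)) / (π ^ 2 * x ^ 2)) := by
  have one_add_I_ne : 1 + I ≠ 0 := fun h => by simpa using congrArg re h
  have hz : (1 + I) / 2 * x ≠ 0 := mul_ne_zero (div_ne_zero one_add_I_ne two_ne_zero) hx
  have hIz : I * ((1 + I) / 2 * x) ≠ 0 := mul_ne_zero I_ne_zero hz
  have denom : π * ((1 + I) / 2 * x) * (π * (I * ((1 + I) / 2 * x))) = -(π ^ 2 * x ^ 2) / 2 := by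
    linear_combination (π ^ 2 * x ^ 2 / 4 * (2 + I)) * I_sq
  have hasSum_mul := hasSum_coeff_mul (summable_norm_coeff_gaussSeries hz)
    (summable_norm_coeff_gaussSeries hIz)
  rwa [tsum_coeff_gaussSeries hz, tsum_coeff_gaussSeries hIz, div_mul_div_comm, sin_mul_sin_I_mul,
    denom, div_div_div_cancel_right₀ two_ne_zero, div_neg, ← neg_div, neg_sub] at hasSum_mul

end GaussValue

section NestedSum
open Set (Iio)

variable {α : Type*} [Preorder α]

theorem strictAnti_cons {r : ℕ} {p : α} {f : Fin r → α} :
    StrictAnti (Fin.cons p f : Fin (r + 1) → α) ↔ (∀ i, f i < p) ∧ StrictAnti f :=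
  Fin.liftFun_cons (· > ·)

/-- The strictly decreasing `r`-tuples with entries in `S`, the index set of an `r`-fold nested
sum. -/
def decreasingTuples (r : ℕ) (S : Set α) : Set (Fin r → α) :=
  {f | (∀ i, f i ∈ S) ∧ StrictAnti f}

theorem cons_mem_decreasingTuples {r : ℕ} {S : Set α} {p : α} {f : Fin r → α} :
    (Fin.cons p f : Fin (r + 1) → α) ∈ decreasingTuples (r + 1) S ↔
      p ∈ S ∧ f ∈ decreasingTuples r (S ∩ Iio p) := by
  simp only [decreasingTuples, Set.mem_ofPred_eq, strictAnti_cons, Fin.forall_fin_succ,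
    Fin.cons_zero, Fin.cons_succ, Set.mem_inter_iff, Set.mem_Iio, forall_and]
  tauto

/-- A decreasing tuple amounts to its largest entry `p` followed by a decreasing tuple below `p`. -/
def decreasingTuplesSuccEquiv (r : ℕ) (S : Set α) :
    decreasingTuples (r + 1) S ≃ Σ p : S, decreasingTuples r (S ∩ Iio (p : α)) where
  toFun f :=
    have h := cons_mem_decreasingTuples.1 ((Fin.cons_self_tail f.1).symm ▸ f.2)
    ⟨⟨f.1 0, h.1⟩, ⟨Fin.tail f.1, h.2⟩⟩
  invFun f := ⟨Fin.cons f.1.1 f.2.1, cons_mem_decreasingTuples.2 ⟨f.1.2, f.2.2⟩⟩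
  left_inv f := Subtype.ext (Fin.cons_self_tail f.1)
  right_inv _ := rfl

/-- The nested sum `∑_{n₁ > ⋯ > n_r} w₁(n₁) ⋯ w_r(n_r)` over entries in `S`. It takes values in
`ℝ≥0∞`, so that it always converges. -/
noncomputable def nestedSum {r : ℕ} (w : Fin r → α → ℝ≥0∞) (S : Set α) : ℝ≥0∞ :=
  ∑' f : decreasingTuples r S, ∏ i, w i (f.1 i)

theorem nestedSum_zero (w : Fin 0 → α → ℝ≥0∞) (S : Set α) : nestedSum w S = 1 := by
  have : Unique (decreasingTuples 0 S) :=
    { default := ⟨Fin.elim0, fun i => i.elim0, fun i => i.elim0⟩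
      uniq := fun _ => Subsingleton.elim _ _ }
  rw [nestedSum, tsum_fintype]
  simp

theorem nestedSum_succ {r : ℕ} (w : Fin (r + 1) → α → ℝ≥0∞) (S : Set α) :
    nestedSum w S = ∑' p : S, w 0 p * nestedSum (Fin.tail w) (S ∩ Iio (p : α)) := by
  rw [nestedSum, ← (decreasingTuplesSuccEquiv r S).symm.tsum_eq, ENNReal.tsum_sigma']
  simp only [nestedSum, ← ENNReal.tsum_mul_left, Fin.prod_univ_succ]
  rfl

/-- The weights `u, v, u, v, …` of a nested sum of depth `r`, starting at the largest entry. -/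
def alternatingWeights (u v : α → ℝ≥0∞) (r : ℕ) (i : Fin r) : α → ℝ≥0∞ :=
  if (i : ℕ) % 2 = 0 then u else v

/-- The sum over all `n` of the nested sums of depth `2 * n` with weights `u, v, …, u, v`. For
`u k = y / k ^ 3` and `v k = y / k` this is the generating function of the `ζ({3,1}ₙ)` in `y²`. -/
noncomputable def alternatingNestedSum (u v : α → ℝ≥0∞) (S : Set α) : ℝ≥0∞ :=
  ∑' n : ℕ, nestedSum (alternatingWeights u v (2 * n)) S

variable (u v : α → ℝ≥0∞)

theorem nestedSum_alternatingWeights_succ (n : ℕ) (S : Set α) :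
    nestedSum (alternatingWeights u v (2 * (n + 1))) S =
      ∑' m : S, u m * ∑' p : ↥(S ∩ Iio (m : α)),
        v p * nestedSum (alternatingWeights u v (2 * n)) (S ∩ Iio (p : α)) := by
  have tail_tail : Fin.tail (Fin.tail (alternatingWeights u v (2 * n + 1 + 1))) =
      alternatingWeights u v (2 * n) := by
    funext i
    simp [Fin.tail, alternatingWeights, add_assoc]
  have inter_Iio {m p : α} (hp : p < m) : S ∩ Iio m ∩ Iio p = S ∩ Iio p := by
    rw [Set.inter_assoc, Set.inter_eq_self_of_subset_right (Set.Iio_subset_Iio hp.le)]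
  change nestedSum (alternatingWeights u v (2 * n + 1 + 1)) S = _
  simp only [nestedSum_succ, tail_tail]
  refine tsum_congr fun m => ?_
  congr 1
  refine tsum_congr fun p => ?_
  rw [inter_Iio p.2.2]
  rfl

theorem alternatingNestedSum_eq_one_add_tsum (S : Set α) :
    alternatingNestedSum u v S =
      1 + ∑' m : S, u m * ∑' p : ↥(S ∩ Iio (m : α)),
        v p * alternatingNestedSum u v (S ∩ Iio (p : α)) := by
  rw [alternatingNestedSum, tsum_eq_zero_add' ENNReal.summable]
  congr 1
  · exact nestedSum_zero _ _
  · simp only [nestedSum_alternatingWeights_succ, alternatingNestedSum]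
    rw [ENNReal.tsum_comm]
    simp only [ENNReal.tsum_mul_left]
    refine tsum_congr fun m => ?_
    rw [ENNReal.tsum_comm]
    simp only [ENNReal.tsum_mul_left]

end NestedSum

section NestedSumNat

variable (u v : ℕ → ℝ≥0∞)

theorem alternatingNestedSum_eq_one_add_tsum_sum {S : Set ℕ}
    (hS : ∀ m ∈ S, S ∩ Set.Iio m = Set.Ioo 0 m) :
    alternatingNestedSum u v S =
      1 + ∑' m : S, u m * ∑ p ∈ Ioo 0 (m : ℕ), v p * alternatingNestedSum u v (Set.Ioo 0 p) := by
  rw [alternatingNestedSum_eq_one_add_tsum]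
  congr 1
  refine tsum_congr fun m => ?_
  rw [hS m m.2, ← coe_Ioo, Finset.tsum_subtype' (Ioo 0 (m : ℕ)) fun p =>
    v p * alternatingNestedSum u v (S ∩ Set.Iio p)]
  congr 1
  refine sum_congr rfl fun p hp => ?_
  have hpS : p ∈ S ∩ Set.Iio (m : ℕ) := by rwa [hS m m.2, ← coe_Ioo, mem_coe]
  rw [hS p hpS.1]

variable {u v} {b : ℕ → ℝ≥0∞}

theorem alternatingNestedSum_Ioo_of_recursion (hb0 : b 0 = 1)
    (hb : ∀ m, 0 < m → b m = u m * ∑ p ∈ Ioo 0 m, v p * ∑ q ∈ range p, b q)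
    {N : ℕ} (hN : 0 < N) :
    alternatingNestedSum u v (Set.Ioo 0 N) = ∑ q ∈ range N, b q := by
  induction N using Nat.strong_induction_on with
  | _ N ih =>
    have hS : ∀ m ∈ Set.Ioo 0 N, Set.Ioo 0 N ∩ Set.Iio m = Set.Ioo 0 m := fun m hm => by
      rw [Set.Ioo_inter_Iio, min_eq_right hm.2.le]
    rw [alternatingNestedSum_eq_one_add_tsum_sum u v hS, sum_range_eq_add_sum_Ioo b hN, hb0,
      ← coe_Ioo, Finset.tsum_subtype' (Ioo 0 N) fun m =>
        u m * ∑ p ∈ Ioo 0 m, v p * alternatingNestedSum u v (Set.Ioo 0 p)]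
    congr 1
    refine sum_congr rfl fun m hm => ?_
    rw [hb m (mem_Ioo.1 hm).1]
    congr 1
    refine sum_congr rfl fun p hp => ?_
    rw [ih p ((mem_Ioo.1 hp).2.trans (mem_Ioo.1 hm).2) (mem_Ioo.1 hp).1]

theorem alternatingNestedSum_Ioi_of_recursion (hb0 : b 0 = 1)
    (hb : ∀ m, 0 < m → b m = u m * ∑ p ∈ Ioo 0 m, v p * ∑ q ∈ range p, b q) :
    alternatingNestedSum u v (Set.Ioi 0) = ∑' m, b m := by
  have compl_zero : ({0}ᶜ : Set ℕ) = Set.Ioi 0 := by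
    ext m
    simp [pos_iff_ne_zero]
  rw [alternatingNestedSum_eq_one_add_tsum_sum u v fun _ _ => Set.Ioi_inter_Iio,
    ← ENNReal.summable.tsum_add_tsum_compl (f := b) (s := {0}) ENNReal.summable, compl_zero,
    tsum_singleton, hb0]
  congr 1
  refine tsum_congr fun m => ?_
  rw [hb m m.2]
  congr 1
  refine sum_congr rfl fun p hp => ?_
  rw [alternatingNestedSum_Ioo_of_recursion hb0 hb (mem_Ioo.1 hp).1]

end NestedSumNat

theorem mzv_mul_pow_eq_toReal_nestedSum {r : ℕ} (s : Fin r → ℕ) (y : ℝ≥0) :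
    mzv s * y ^ r =
      (nestedSum (fun i (k : ℕ) => ((y / k ^ s i : ℝ≥0) : ℝ≥0∞)) (Set.Ioi 0)).toReal := by
  have ne_top (f : decreasingTuples r (Set.Ioi 0)) :
      ∏ i, ((y / (f.1 i : ℕ) ^ s i : ℝ≥0) : ℝ≥0∞) ≠ ∞ :=
    ENNReal.prod_ne_top fun _ _ => ENNReal.coe_ne_top
  rw [nestedSum, ENNReal.tsum_toReal_eq ne_top, mzv, ← tsum_mul_right]
  refine tsum_congr fun f => ?_
  simp [ENNReal.toReal_prod, prod_mul_distrib, div_eq_inv_mul]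

theorem hasSum_mzv_three_one_mul_pow {y : ℝ≥0} {b : ℕ → ℝ≥0} {L : ℝ} (hb0 : b 0 = 1)
    (hb : ∀ m, 0 < m → b m = y / m ^ 3 * ∑ p ∈ Ioo 0 m, y / p * ∑ q ∈ range p, b q)
    (hL : HasSum (fun m => (b m : ℝ)) L) :
    HasSum (fun n => mzv (fun i : Fin (2 * n) => if (i : ℕ) % 2 = 0 then 3 else 1) *
      (y : ℝ) ^ (2 * n)) L := by
  let u : ℕ → ℝ≥0∞ := fun k => (y / k ^ 3 : ℝ≥0)
  let v : ℕ → ℝ≥0∞ := fun k => (y / k : ℝ≥0)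
  have mzv_eq (n : ℕ) : mzv (fun i : Fin (2 * n) => if (i : ℕ) % 2 = 0 then 3 else 1) *
      (y : ℝ) ^ (2 * n) = (nestedSum (alternatingWeights u v (2 * n)) (Set.Ioi 0)).toReal := by
    rw [mzv_mul_pow_eq_toReal_nestedSum]
    refine congrArg (fun w => (nestedSum w (Set.Ioi 0)).toReal) ?_
    funext i k
    simp only [alternatingWeights, u, v]
    split_ifs <;> simp
  lift L to ℝ≥0 using hL.nonneg fun m => (b m).coe_nonneg
  have generating_eq : ∑' n, nestedSum (alternatingWeights u v (2 * n)) (Set.Ioi 0) = L := by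
    rw [← ENNReal.tsum_coe_eq (NNReal.hasSum_coe.1 hL)]
    refine alternatingNestedSum_Ioi_of_recursion (by rw [hb0, ENNReal.coe_one]) fun m hm => ?_
    rw [hb m hm]
    push_cast
    rfl
  have ne_top : ∑' n, nestedSum (alternatingWeights u v (2 * n)) (Set.Ioi 0) ≠ ∞ := by
    rw [generating_eq]
    exact ENNReal.coe_ne_top
  have hasSum_toReal := ENNReal.hasSum_toReal ne_top
  rw [← ENNReal.tsum_toReal_eq (ENNReal.ne_top_of_tsum_ne_top ne_top), generating_eq]
    at hasSum_toReal
  simpa only [mzv_eq] using! hasSum_toReal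

theorem exists_nnreal_of_recursion {a : ℕ → ℂ} {y : ℝ≥0} (ha0 : a 0 = 1)
    (ha : ∀ m, 0 < m → a m = y / m ^ 3 * ∑ p ∈ Ioo 0 m, y / p * ∑ q ∈ range p, a q) :
    ∃ b : ℕ → ℝ≥0, ∀ m, (b m : ℂ) = a m := by
  suffices mem_range : ∀ m, a m ∈ (algebraMap ℝ≥0 ℂ).rangeS by
    choose b hb using mem_range
    exact ⟨b, hb⟩
  intro m
  induction m using Nat.strong_induction_on with
  | _ m ih =>
    rcases m.eq_zero_or_pos with rfl | hm
    · rw [ha0]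
      exact one_mem _
    have div_mem (n : ℕ) : (y / n : ℂ) ∈ (algebraMap ℝ≥0 ℂ).rangeS := by
      refine ⟨y / n, ?_⟩
      rw [map_div₀, map_natCast]
      rfl
    rw [ha m hm]
    exact mul_mem (mod_cast div_mem (m ^ 3)) (sum_mem fun p hp => mul_mem (div_mem p)
      (sum_mem fun q hq => ih q ((mem_range.1 hq).trans (mem_Ioo.1 hp).2)))

theorem hasSum_mzv_three_one_mul_pow_of_complex {y : ℝ≥0} {a : ℕ → ℂ} {L : ℝ} (ha0 : a 0 = 1)
    (ha : ∀ m, 0 < m → a m = y / m ^ 3 * ∑ p ∈ Ioo 0 m, y / p * ∑ q ∈ range p, a q)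
    (hL : HasSum a L) :
    HasSum (fun n => mzv (fun i : Fin (2 * n) => if (i : ℕ) % 2 = 0 then 3 else 1) *
      (y : ℝ) ^ (2 * n)) L := by
  obtain ⟨b, hb⟩ := exists_nnreal_of_recursion ha0 ha
  obtain rfl : (fun m => ((b m : ℝ) : ℂ)) = a := funext hb
  beta_reduce at ha0 ha
  exact hasSum_mzv_three_one_mul_pow (mod_cast ha0) (mod_cast ha) (mod_cast hL)

/-- For every nonzero real `x`,
`∑_{n=0}^∞ ζ({3,1}ₙ) x^{4n} = (cosh(πx) − cos(πx))/(π² x²)`. -/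
theorem stmt_11 (x : ℝ) (hx : x ≠ 0) :
    ∑' n : ℕ,
        mzv (fun i : Fin (2 * n) => if (i : ℕ) % 2 = 0 then 3 else 1) * x ^ (4 * n) =
      (Real.cosh (π * x) - Real.cos (π * x)) / (π ^ 2 * x ^ 2) := by
  let y : ℝ≥0 := ⟨x ^ 2, sq_nonneg x⟩
  have coe_y : (y : ℂ) = (x : ℂ) ^ 2 := Complex.ofReal_pow x 2
  have y_pow (n : ℕ) : (y : ℝ) ^ (2 * n) = x ^ (4 * n) := by
    rw [show (y : ℝ) = x ^ 2 from rfl, ← pow_mul, ← mul_assoc]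
    norm_num
  have hasSum_coeff := hasSum_coeff_threeOneSeries (Complex.ofReal_ne_zero.2 hx)
  have hasSum_mzv := hasSum_mzv_three_one_mul_pow_of_complex (y := y)
    (coeff_zero_threeOneSeries x) (fun m hm => coe_y ▸ coeff_threeOneSeries x hm)
    (L := (Real.cosh (π * x) - Real.cos (π * x)) / (π ^ 2 * x ^ 2)) (mod_cast hasSum_coeff)
  simpa only [y_pow] using hasSum_mzv.tsum_eq
end

section
/- The quadruple sum ∑_{k>m>p>q>0} 1/(k² m p² q) equals 64 · ∑_{k>m>p>q>0} (−1)^{k} (−1)^{p}/(k² m p² q), and both equal ζ(3,3) = ∑_{n>m>0} 1/(n³ m³). -/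
open scoped BigOperators

/-!
Let `S_N(z)` and `T_N(z)` be the generating functions, over the depth, of the nested sums up to `N`
with alternating weights `φ(n) = (1 + (-1)ⁿ) / n²` and `ψ(n) = (-1)ⁿ / n`, where the outermost
weight is `φ` for `S_N` and `ψ` for `T_N`. The limit of `T_N(-z) S_N(z) + S_N(-z) T_N(z)` as
`N → ∞` can be computed in two ways.

* Stuffle product: the recurrence in `N` gives `2 ∏ (1 - z² φ(n) ψ(n))`. Since `φ ψ` vanishes at odd
  integers and is `1 / (4 m³)` at `2 m`, the coefficient of `z²ⁿ` tends to `2 (-1/4)ⁿ ζ({3}ⁿ)`.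
* Shuffle product: replace `S_N` and `T_N` by the polylogarithms `A(t)` and `B(t)` whose
  coefficients of `tᴺ` are `S_N - S_{N-1}` and `T_N - T_{N-1}`. These solve a linear system of
  differential equations in `t`, from which `B' A + A' B` (a prime changing the sign of `z`)
  inherits a closed system whose solution is `2 ∑ (-2)ⁿ z²ⁿ Li({2̄, 1}ⁿ; t)`. Abel summation at
  `t = 1` gives the coefficient `2 (-2)ⁿ ζ({2̄, 1}ⁿ)`.

Hence `8ⁿ ζ({2̄, 1}ⁿ) = ζ({3}ⁿ)`. The duality `ζ({2, 1}ⁿ) = ζ({3}ⁿ)` follows by the transport of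
connected sums of Seki and Yamamoto: two nested sums are coupled by `1 / binom(m + n, m)`, whose
differences telescope, so that indices can be moved one at a time from one sum to the other.
-/

namespace EulerSum

open Finset Filter Topology PowerSeries
open scoped ENNReal

/-- The nested sum `∑_{N ≥ n₁ > n₂ > ⋯ > nₖ ≥ 1} φ(n₁) ψ(n₂) φ(n₃) ψ(n₄) ⋯` of depth `k` with two
alternating weights, the outermost being `φ`; the values `φ 0` and `ψ 0` are never used. -/
def nestedSum {R : Type*} [Semiring R] (φ ψ : ℕ → R) : ℕ → ℕ → R
  | 0, _ => 1
  | k + 1, N => ∑ m ∈ range N, φ (m + 1) * nestedSum ψ φ k m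

section Semiring

variable {R : Type*} [Semiring R] (φ ψ : ℕ → R) (k N : ℕ)

@[simp]
lemma nestedSum_zero_left : nestedSum φ ψ 0 N = 1 := rfl

lemma nestedSum_succ_left :
    nestedSum φ ψ (k + 1) N = ∑ m ∈ range N, φ (m + 1) * nestedSum ψ φ k m := rfl

@[simp]
lemma nestedSum_succ_zero : nestedSum φ ψ (k + 1) 0 = 0 := rfl

lemma nestedSum_succ_succ :
    nestedSum φ ψ (k + 1) (N + 1) =
      nestedSum φ ψ (k + 1) N + φ (N + 1) * nestedSum ψ φ k N :=
  sum_range_succ _ _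

end Semiring

lemma nestedSum_two_mul_of_odd_eq_zero {R : Type*} [Semiring R] {φ ψ : ℕ → R}
    (hφ : ∀ n, φ (2 * n + 1) = 0) (hψ : ∀ n, ψ (2 * n + 1) = 0) (k N : ℕ) :
    nestedSum φ ψ k (2 * N) = nestedSum (fun n => φ (2 * n)) (fun n => ψ (2 * n)) k N := by
  induction k generalizing φ ψ N with
  | zero => rfl
  | succ k ih =>
    have hodd (N : ℕ) : nestedSum ψ φ k (2 * N + 1) = nestedSum ψ φ k (2 * N) := by
      cases k with
      | zero => rfl
      | succ k => rw [nestedSum_succ_succ, hψ, zero_mul, add_zero]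
    induction N with
    | zero => rfl
    | succ N ihN =>
      rw [mul_add_one, nestedSum_succ_succ, nestedSum_succ_succ, nestedSum_succ_succ, hφ, hodd,
        ihN, ih hψ hφ, zero_mul, add_zero]
      rfl

lemma nestedSum_const_mul {R : Type*} [CommSemiring R] (c : R) (φ ψ : ℕ → R) (k N : ℕ) :
    nestedSum (fun n => c * φ n) (fun n => c * ψ n) k N = c ^ k * nestedSum φ ψ k N := by
  induction k generalizing φ ψ N with
  | zero => simp
  | succ k ih =>
    simp only [nestedSum_succ_left, ih, mul_sum]
    exact sum_congr rfl fun m _ => by ring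

lemma nestedSum_nonneg {φ ψ : ℕ → ℝ} (hφ : ∀ n, 0 ≤ φ n) (hψ : ∀ n, 0 ≤ ψ n) (k N : ℕ) :
    0 ≤ nestedSum φ ψ k N := by
  induction k generalizing φ ψ N with
  | zero => exact zero_le_one
  | succ k ih => exact sum_nonneg fun m _ => mul_nonneg (hφ _) (ih hψ hφ m)

lemma abs_nestedSum_le (φ ψ : ℕ → ℝ) (k N : ℕ) :
    |nestedSum φ ψ k N| ≤ nestedSum (fun n => |φ n|) (fun n => |ψ n|) k N := by
  induction k generalizing φ ψ N with
  | zero => simp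
  | succ k ih =>
    refine (abs_sum_le_sum_abs _ _).trans (sum_le_sum fun m _ => ?_)
    rw [abs_mul]
    exact mul_le_mul_of_nonneg_left (ih ψ φ m) (abs_nonneg _)

lemma ofReal_nestedSum {φ ψ : ℕ → ℝ} (hφ : ∀ n, 0 ≤ φ n) (hψ : ∀ n, 0 ≤ ψ n) (k N : ℕ) :
    ENNReal.ofReal (nestedSum φ ψ k N) =
      nestedSum (fun n => ENNReal.ofReal (φ n)) (fun n => ENNReal.ofReal (ψ n)) k N := by
  induction k generalizing φ ψ N with
  | zero => simp
  | succ k ih =>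
    simp only [nestedSum_succ_left]
    rw [ENNReal.ofReal_sum_of_nonneg
      fun m _ => mul_nonneg (hφ _) (nestedSum_nonneg hψ hφ k m)]
    exact sum_congr rfl fun m _ => by rw [ENNReal.ofReal_mul (hφ _), ih hψ hφ]

/-- The summand `1 / n ^ s` of a zeta value. -/
noncomputable def zetaTerm (s n : ℕ) : ℝ := 1 / (n : ℝ) ^ s

/-- The summand `(-1) ^ n / n ^ s` of an alternating zeta value. -/
noncomputable def altTerm (s n : ℕ) : ℝ := (-1) ^ n / (n : ℝ) ^ s

lemma zetaTerm_nonneg (s n : ℕ) : 0 ≤ zetaTerm s n := by unfold zetaTerm; positivity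

lemma abs_zetaTerm (s n : ℕ) : |zetaTerm s n| = zetaTerm s n := abs_of_nonneg (zetaTerm_nonneg s n)

lemma abs_altTerm (s n : ℕ) : |altTerm s n| = zetaTerm s n := by
  simp [altTerm, zetaTerm, abs_div]

lemma summable_zetaTerm {s : ℕ} (hs : 1 < s) : Summable (zetaTerm s) :=
  Real.summable_one_div_nat_pow.2 hs

lemma summable_altTerm {s : ℕ} (hs : 1 < s) : Summable (altTerm s) :=
  .of_abs (by simpa only [abs_altTerm] using summable_zetaTerm hs)

lemma zetaTerm_mul_pow (s n : ℕ) : zetaTerm s (n + 1) * ((n : ℝ) + 1) ^ s = 1 := by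
  simp only [zetaTerm, Nat.cast_add_one]
  field_simp

lemma altTerm_eq_neg_one_pow_mul (s n : ℕ) : altTerm s n = (-1) ^ n * zetaTerm s n := by
  rw [altTerm, zetaTerm, mul_one_div]

lemma neg_one_pow_mul_zetaTerm_add_altTerm (s n : ℕ) :
    (-1) ^ n * (zetaTerm s + altTerm s) n = (zetaTerm s + altTerm s) n := by
  rw [Pi.add_apply, altTerm_eq_neg_one_pow_mul, mul_add, ← mul_assoc,
    pow_mul_pow_eq_one n (by norm_num), one_mul, add_comm]

/-! ### Duality through connected sums -/

/-- The operator `f ↦ (m ↦ φ m * ∑_{j < m} f j)`, which prepends a new outermost index with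
weight `φ` to a nested sum. -/
def prependSum {R : Type*} [Semiring R] (φ f : ℕ → R) (m : ℕ) : R :=
  φ m * ∑ j ∈ range m, f j

section Semiring

variable {R : Type*} [Semiring R] (φ ψ f : ℕ → R)

@[simp]
lemma prependSum_apply_zero : prependSum φ f 0 = 0 := by simp [prependSum]

lemma mul_prependSum : φ * prependSum ψ f = prependSum (φ * ψ) f :=
  funext fun _ => (mul_assoc _ _ _).symm

lemma sum_range_succ_prependSum (N : ℕ) :
    ∑ m ∈ range (N + 1), prependSum φ f m =
      ∑ m ∈ range N, φ (m + 1) * ∑ j ∈ range (m + 1), f j := by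
  rw [sum_range_succ', prependSum_apply_zero, add_zero]
  rfl

lemma sum_range_succ_iterate_prependSum (n N : ℕ) :
    ∑ m ∈ range (N + 1), (prependSum φ)^[n] (Pi.single 0 1) m = nestedSum φ φ n N := by
  induction n generalizing N with
  | zero => simp
  | succ n ih =>
    simp only [Function.iterate_succ_apply', sum_range_succ_prependSum, ih]
    rfl

lemma sum_range_succ_iterate_prependSum_prependSum (n N : ℕ) :
    ∑ m ∈ range (N + 1), (fun f => prependSum φ (prependSum ψ f))^[n] (Pi.single 0 1) m =
      nestedSum φ ψ (2 * n) N := by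
  induction n generalizing N with
  | zero => simp
  | succ n ih =>
    simp only [Function.iterate_succ_apply', sum_range_succ_prependSum, ih]
    rfl

end Semiring

/-- The connector `1 / binom(m + n, m)` of Seki and Yamamoto. -/
noncomputable def connector (m n : ℕ) : ℝ := ((m + n).choose m : ℝ)⁻¹

lemma connector_comm (m n : ℕ) : connector m n = connector n m := by
  rw [connector, connector, add_comm m n, ← Nat.choose_symm_add]

lemma connector_nonneg (m n : ℕ) : 0 ≤ connector m n := inv_nonneg.2 (Nat.cast_nonneg _)

@[simp]
lemma connector_zero_right (m : ℕ) : connector m 0 = 1 := by simp [connector]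

lemma connector_sub_connector_succ (m n : ℕ) :
    connector m n - connector (m + 1) n = n / (m + 1 : ℕ) * connector (m + 1) n := by
  have h : ((m + n + 1 : ℕ) : ℝ) * (m + n).choose m = (m + 1 + n).choose (m + 1) * (m + 1 : ℕ) := by
    rw [add_right_comm m 1 n]
    exact_mod_cast Nat.add_one_mul_choose_eq (m + n) m
  have h₁ : ((m + n).choose m : ℝ) ≠ 0 := by
    exact_mod_cast (Nat.choose_pos (Nat.le_add_right m n)).ne'
  have h₂ : ((m + 1 + n).choose (m + 1) : ℝ) ≠ 0 := by
    exact_mod_cast (Nat.choose_pos (Nat.le_add_right (m + 1) n)).ne'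
  rw [connector, connector]
  push_cast at h ⊢
  field_simp
  linear_combination -h

lemma tendsto_connector_atTop {n : ℕ} (hn : n ≠ 0) :
    Tendsto (fun m => connector m n) atTop (𝓝 0) := by
  refine squeeze_zero (fun m => connector_nonneg m n) (fun m => ?_)
    (tendsto_one_div_add_atTop_nhds_zero_nat (𝕜 := ℝ))
  have h : m + 1 ≤ (m + n).choose m := by
    simpa using Nat.choose_le_choose m (show m + 1 ≤ m + n by lia)
  rw [connector, one_div]
  exact inv_anti₀ (by positivity) (by exact_mod_cast h)

/-- Since the differences of the connector are `n * connector / (m + 1)`, this sum telescopes. -/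
lemma hasSum_connector_div (m : ℕ) {n : ℕ} (hn : n ≠ 0) :
    HasSum (fun j : ℕ => connector (j + (m + 1)) n / (j + (m + 1) : ℕ)) (connector m n / n) := by
  refine (hasSum_iff_tendsto_nat_of_nonneg
    (fun j => div_nonneg (connector_nonneg _ _) (Nat.cast_nonneg _)) _).2 ?_
  have hterm (j : ℕ) : connector (j + (m + 1)) n / (j + (m + 1) : ℕ) =
      connector (j + m) n / n - connector (j + 1 + m) n / n := by
    have h := connector_sub_connector_succ (j + m) n
    rw [← sub_div, add_right_comm j 1 m, h, add_assoc]
    field_simp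
  simp_rw [hterm, sum_range_sub' fun j => connector (j + m) n / n, zero_add]
  simpa using tendsto_const_nhds.sub
    (((tendsto_add_atTop_iff_nat m).2 (tendsto_connector_atTop hn)).div_const (n : ℝ))

/-- The connected sum of `f` and `g`, the sum of `f m * g n` over all pairs weighted by the
connector. -/
noncomputable def connectedSum (f g : ℕ → ℝ≥0∞) : ℝ≥0∞ :=
  ∑' m, ∑' n, f m * g n * ENNReal.ofReal (connector m n)

lemma connectedSum_comm (f g : ℕ → ℝ≥0∞) : connectedSum f g = connectedSum g f := by
  rw [connectedSum, ENNReal.tsum_comm]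
  simp only [connectedSum, mul_comm (f _), connector_comm]

lemma connectedSum_single_zero (f : ℕ → ℝ≥0∞) :
    connectedSum f (Pi.single 0 1) = ∑' m, f m := by
  refine tsum_congr fun m => ?_
  rw [tsum_eq_single 0 fun n hn => by simp [hn]]
  simp

/-- The weight `m ↦ 1 / m`, with value `0` at `0`. -/
noncomputable def invWeight (m : ℕ) : ℝ≥0∞ := ENNReal.ofReal (1 / m)

lemma tsum_invWeight_mul_connector (m : ℕ) {n : ℕ} (hn : n ≠ 0) :
    ∑' a, (if m < a then invWeight a * ENNReal.ofReal (connector a n) else 0) =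
      invWeight n * ENNReal.ofReal (connector m n) := by
  rw [← ENNReal.summable.sum_add_tsum_nat_add' (k := m + 1)]
  rw [sum_eq_zero fun a ha => if_neg (by rw [mem_range] at ha; lia), zero_add]
  have hterm (a i : ℕ) : invWeight a * ENNReal.ofReal (connector i n) =
      ENNReal.ofReal (connector i n / a) := by
    rw [invWeight, ← ENNReal.ofReal_mul (by positivity), one_div_mul_eq_div]
  have hsum := hasSum_connector_div m hn
  rw [hterm, ← hsum.tsum_eq, ENNReal.ofReal_tsum_of_nonneg
    (fun j => div_nonneg (connector_nonneg _ _) (Nat.cast_nonneg _)) hsum.summable]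
  exact tsum_congr fun j => by rw [if_pos (by lia), hterm]

lemma connectedSum_prependSum_left (f : ℕ → ℝ≥0∞) {g : ℕ → ℝ≥0∞} (hg : g 0 = 0) :
    connectedSum (prependSum invWeight f) g = connectedSum f (invWeight * g) := by
  have hexpand (a n : ℕ) : prependSum invWeight f a * g n * ENNReal.ofReal (connector a n) =
      ∑' m, f m * g n * if m < a then invWeight a * ENNReal.ofReal (connector a n) else 0 := by
    rw [tsum_eq_sum (s := range a) fun m hm => by rw [if_neg (by simpa using hm), mul_zero],
      prependSum, mul_assoc, mul_comm (invWeight a), mul_assoc, sum_mul]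
    exact sum_congr rfl fun m hm => by rw [if_pos (mem_range.1 hm)]; ring
  calc connectedSum (prependSum invWeight f) g
      = ∑' a, ∑' m, ∑' n,
          f m * g n * if m < a then invWeight a * ENNReal.ofReal (connector a n) else 0 := by
        simp only [connectedSum, hexpand]
        exact tsum_congr fun a => ENNReal.tsum_comm
    _ = ∑' m, ∑' n, ∑' a,
          f m * g n * if m < a then invWeight a * ENNReal.ofReal (connector a n) else 0 := by
        rw [ENNReal.tsum_comm]
        exact tsum_congr fun m => ENNReal.tsum_comm
    _ = connectedSum f (invWeight * g) := by
        refine tsum_congr fun m => tsum_congr fun n => ?_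
        rw [ENNReal.tsum_mul_left]
        rcases eq_or_ne n 0 with rfl | hn
        · simp [hg]
        · rw [tsum_invWeight_mul_connector m hn, Pi.mul_apply]
          ring

lemma connectedSum_prependSum_right {f : ℕ → ℝ≥0∞} (hf : f 0 = 0) (g : ℕ → ℝ≥0∞) :
    connectedSum f (prependSum invWeight g) = connectedSum (invWeight * f) g := by
  rw [connectedSum_comm, connectedSum_prependSum_left g hf, connectedSum_comm]

lemma connectedSum_prependSum_prependSum (f g : ℕ → ℝ≥0∞) :
    connectedSum (prependSum (invWeight ^ 2) (prependSum invWeight f)) g =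
      connectedSum f (prependSum (invWeight ^ 3) g) := by
  rw [pow_two, ← mul_prependSum, ← connectedSum_prependSum_right (by simp),
    connectedSum_prependSum_left _ (by simp), connectedSum_prependSum_left, mul_prependSum,
    mul_prependSum, pow_three]
  rw [mul_prependSum, prependSum_apply_zero]

lemma tsum_iterate_prependSum_eq (n : ℕ) :
    ∑' m, (fun f => prependSum (invWeight ^ 2) (prependSum invWeight f))^[n] (Pi.single 0 1) m =
      ∑' m, (prependSum (invWeight ^ 3))^[n] (Pi.single 0 1) m := by
  have h (g : ℕ → ℝ≥0∞) : connectedSum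
      ((fun f => prependSum (invWeight ^ 2) (prependSum invWeight f))^[n] (Pi.single 0 1)) g =
        connectedSum (Pi.single 0 1) ((prependSum (invWeight ^ 3))^[n] g) := by
    induction n generalizing g with
    | zero => rfl
    | succ n ih =>
      rw [Function.iterate_succ_apply', connectedSum_prependSum_prependSum, ih,
        Function.iterate_succ_apply]
  rw [← connectedSum_single_zero, h, connectedSum_comm, connectedSum_single_zero]

lemma tendsto_nestedSum_tsum {φ ψ : ℕ → ℝ} (hφ : ∀ n, 0 ≤ φ n) (hψ : ∀ n, 0 ≤ ψ n) {k : ℕ}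
    {f : ℕ → ℝ≥0∞} (hf : ∑' m, f m ≠ ∞)
    (h : ∀ N, ∑ m ∈ range (N + 1), f m = ENNReal.ofReal (nestedSum φ ψ k N)) :
    Tendsto (nestedSum φ ψ k) atTop (𝓝 (∑' m, f m).toReal) := by
  have hlim := (tendsto_add_atTop_iff_nat 1).2 (ENNReal.tendsto_nat_tsum f)
  simp only [h] at hlim
  refine ((ENNReal.tendsto_toReal hf).comp hlim).congr fun N => ?_
  exact ENNReal.toReal_ofReal (nestedSum_nonneg hφ hψ k N)

lemma ofReal_zetaTerm (s : ℕ) : (fun n => ENNReal.ofReal (zetaTerm s n)) = invWeight ^ s := by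
  funext n
  rw [zetaTerm, Pi.pow_apply, invWeight, ← ENNReal.ofReal_pow (by positivity), one_div_pow]

lemma tsum_prependSum_le (φ f : ℕ → ℝ≥0∞) :
    ∑' m, prependSum φ f m ≤ (∑' m, φ m) * ∑' m, f m := by
  rw [← ENNReal.tsum_mul_right]
  exact ENNReal.tsum_le_tsum fun m => mul_le_mul_right (ENNReal.sum_le_tsum _) _

lemma tsum_iterate_prependSum_ne_top {φ f : ℕ → ℝ≥0∞} (hφ : ∑' m, φ m ≠ ∞)
    (hf : ∑' m, f m ≠ ∞) (n : ℕ) : ∑' m, (prependSum φ)^[n] f m ≠ ∞ := by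
  induction n with
  | zero => exact hf
  | succ n ih =>
    rw [Function.iterate_succ_apply']
    exact ne_top_of_le_ne_top (ENNReal.mul_ne_top hφ ih) (tsum_prependSum_le _ _)

/-- The duality `ζ({2, 1}ⁿ) = ζ({3}ⁿ)`. -/
theorem exists_tendsto_nestedSum_zetaTerm (n : ℕ) :
    ∃ Z, Tendsto (nestedSum (zetaTerm 2) (zetaTerm 1) (2 * n)) atTop (𝓝 Z) ∧
      Tendsto (nestedSum (zetaTerm 3) (zetaTerm 3) n) atTop (𝓝 Z) := by
  have hfinite : ∑' m, (prependSum (invWeight ^ 3))^[n] (Pi.single 0 1) m ≠ ∞ := by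
    refine tsum_iterate_prependSum_ne_top ?_ (by simp) n
    rw [← ofReal_zetaTerm]
    exact (summable_zetaTerm (by norm_num)).tsum_ofReal_ne_top
  refine ⟨_, ?_, tendsto_nestedSum_tsum (zetaTerm_nonneg 3) (zetaTerm_nonneg 3) hfinite
    fun N => ?_⟩
  · rw [← tsum_iterate_prependSum_eq] at hfinite ⊢
    refine tendsto_nestedSum_tsum (zetaTerm_nonneg 2) (zetaTerm_nonneg 1) hfinite fun N => ?_
    rw [sum_range_succ_iterate_prependSum_prependSum,
      ofReal_nestedSum (zetaTerm_nonneg 2) (zetaTerm_nonneg 1), ofReal_zetaTerm, ofReal_zetaTerm,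
      pow_one]
  · rw [sum_range_succ_iterate_prependSum,
      ofReal_nestedSum (zetaTerm_nonneg 3) (zetaTerm_nonneg 3), ofReal_zetaTerm]

/-! ### Generating functions of nested sums -/

section Recurrence

variable {R : Type*} [CommRing R]

/-- `a` and `b` are the truncated generating functions `∑ₖ nestedSum φ ψ k N * z ^ k` and
`∑ₖ nestedSum ψ φ k N * z ^ k`, characterised by their recurrence in `N`. -/
structure IsNestedPair (z : R) (φ ψ a b : ℕ → R) : Prop where
  zero_left : a 0 = 1
  zero_right : b 0 = 1
  succ_left (N : ℕ) : a (N + 1) = a N + z * φ (N + 1) * b N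
  succ_right (N : ℕ) : b (N + 1) = b N + z * ψ (N + 1) * a N

namespace IsNestedPair

variable {z : R} {φ ψ a b a' b' : ℕ → R}

lemma map {S : Type*} [CommRing S] (f : R →+* S) (h : IsNestedPair z φ ψ a b) :
    IsNestedPair (f z) (f ∘ φ) (f ∘ ψ) (f ∘ a) (f ∘ b) where
  zero_left := by simp [h.zero_left]
  zero_right := by simp [h.zero_right]
  succ_left N := by simp [h.succ_left]
  succ_right N := by simp [h.succ_right]

/-- In the product of the recurrences all terms which are linear in `z` cancel; this is the stuffle
side of the argument. -/
lemma mul_add_mul (h : IsNestedPair z φ ψ a b) (h' : IsNestedPair (-z) φ ψ a' b') (N : ℕ) :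
    b' N * a N + a' N * b N = 2 * ∏ n ∈ range N, (1 - z ^ 2 * (φ * ψ) (n + 1)) := by
  induction N with
  | zero => rw [h.zero_left, h.zero_right, h'.zero_left, h'.zero_right, prod_range_zero]; ring
  | succ N ih =>
    rw [h.succ_left, h.succ_right, h'.succ_left, h'.succ_right, prod_range_succ, ← mul_assoc,
      ← ih, Pi.mul_apply]
    ring

end IsNestedPair

/-- The truncated generating function `∑ₖ nestedSum φ ψ k N * X ^ k`. -/
noncomputable def nestedSeries (φ ψ : ℕ → R) (N : ℕ) : R⟦X⟧ :=
  PowerSeries.mk fun k => nestedSum φ ψ k N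

variable (φ ψ : ℕ → R) (k N : ℕ)

@[simp]
lemma coeff_nestedSeries : coeff k (nestedSeries φ ψ N) = nestedSum φ ψ k N := coeff_mk _ _

lemma nestedSeries_zero : nestedSeries φ ψ 0 = 1 := by
  ext k
  cases k <;> simp [coeff_one]

lemma nestedSeries_succ :
    nestedSeries φ ψ (N + 1) = nestedSeries φ ψ N + X * C (φ (N + 1)) * nestedSeries ψ φ N := by
  ext k
  cases k with
  | zero => simp [nestedSeries, mul_assoc]
  | succ k => simp [mul_assoc, coeff_succ_X_mul, nestedSum_succ_succ]

lemma isNestedPair_nestedSeries :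
    IsNestedPair (X : R⟦X⟧) (C ∘ φ) (C ∘ ψ) (nestedSeries φ ψ) (nestedSeries ψ φ) where
  zero_left := nestedSeries_zero φ ψ
  zero_right := nestedSeries_zero ψ φ
  succ_left := nestedSeries_succ φ ψ
  succ_right := nestedSeries_succ ψ φ

lemma evalNegHom_C (r : R) : evalNegHom (C r) = C r := by
  ext n
  rw [evalNegHom, coeff_rescale, coeff_C]
  split_ifs with hn <;> simp [hn]

lemma isNestedPair_evalNegHom_nestedSeries :
    IsNestedPair (-X : R⟦X⟧) (C ∘ φ) (C ∘ ψ) (evalNegHom ∘ nestedSeries φ ψ)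
      (evalNegHom ∘ nestedSeries ψ φ) := by
  have h := (isNestedPair_nestedSeries φ ψ).map evalNegHom
  simpa only [evalNegHom_X, Function.comp_def, evalNegHom_C] using h

lemma coeff_prod_one_sub_X_sq_mul (n : ℕ) :
    coeff (2 * n) (∏ m ∈ range N, (1 - X ^ 2 * C (φ (m + 1)))) =
      (-1) ^ n * nestedSum φ φ n N := by
  induction N generalizing n with
  | zero => cases n <;> simp [coeff_one]
  | succ N ih =>
    rw [prod_range_succ, mul_sub, mul_one, map_sub, ih, ← mul_assoc, mul_right_comm]
    cases n with
    | zero => simp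
    | succ n =>
      rw [mul_add_one, coeff_mul_X_pow, coeff_mul_C, ih, nestedSum_succ_succ]
      ring

lemma coeff_evalNegHom_nestedSeries_mul_add (n : ℕ) :
    coeff (2 * n) (evalNegHom (nestedSeries ψ φ N) * nestedSeries φ ψ N +
        evalNegHom (nestedSeries φ ψ N) * nestedSeries ψ φ N) =
      2 * ((-1) ^ n * nestedSum (φ * ψ) (φ * ψ) n N) := by
  have h := (isNestedPair_nestedSeries φ ψ).mul_add_mul
    (isNestedPair_evalNegHom_nestedSeries φ ψ) N
  simp only [Function.comp_apply, Pi.mul_apply, ← map_mul] at h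
  rw [h, ← map_ofNat (C (R := R)) 2, coeff_C_mul, ← coeff_prod_one_sub_X_sq_mul]
  rfl

end Recurrence

/-! ### The differential equations -/

section Differential

variable {R : Type*} [CommRing R]

/-- The power series `1 / (1 - X)`; multiplication by it turns coefficients into partial sums. -/
noncomputable def geometricSeries : R⟦X⟧ := PowerSeries.mk 1

lemma coeff_geometricSeries_mul (F : R⟦X⟧) (n : ℕ) :
    coeff n (geometricSeries * F) = ∑ m ∈ range (n + 1), coeff m F := by
  rw [mul_comm, coeff_mul, Nat.sum_antidiagonal_eq_sum_range_succ_mk]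
  simp [geometricSeries]

lemma coeff_zero_geometricSeries_mul (F : R⟦X⟧) :
    coeff 0 (geometricSeries * F) = constantCoeff F := by
  simp [coeff_geometricSeries_mul]

lemma coeff_succ_geometricSeries_mul (F : R⟦X⟧) (n : ℕ) :
    coeff (n + 1) (geometricSeries * F) = coeff n (geometricSeries * F) + coeff (n + 1) F := by
  rw [coeff_geometricSeries_mul, coeff_geometricSeries_mul, sum_range_succ]

/-- The power series whose coefficients have the partial sums `s`. -/
noncomputable def ofPartialSums (s : ℕ → R) : R⟦X⟧ := PowerSeries.mk s * (1 - X)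

lemma geometricSeries_mul_ofPartialSums (s : ℕ → R) :
    geometricSeries * ofPartialSums s = PowerSeries.mk s := by
  rw [ofPartialSums, mul_left_comm, geometricSeries, mk_one_mul_one_sub_eq_one, mul_one]

lemma constantCoeff_ofPartialSums (s : ℕ → R) : constantCoeff (ofPartialSums s) = s 0 := by
  simp [ofPartialSums]

lemma coeff_succ_ofPartialSums (s : ℕ → R) (n : ℕ) :
    coeff (n + 1) (ofPartialSums s) = s (n + 1) - s n := by
  rw [ofPartialSums, mul_one_sub, map_sub, coeff_succ_mul_X, coeff_mk, coeff_mk]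

lemma coeff_evalNegHom (F : R⟦X⟧) (n : ℕ) : coeff n (evalNegHom F) = (-1) ^ n * coeff n F :=
  coeff_rescale _ _ _

lemma evalNegHom_evalNegHom (F : R⟦X⟧) : evalNegHom (evalNegHom F) = F := by
  ext n
  rw [coeff_evalNegHom, coeff_evalNegHom, ← mul_assoc, ← mul_pow, neg_one_mul, neg_neg, one_pow,
    one_mul]

lemma derivative_evalNegHom (F : R⟦X⟧) : d⁄dX R (evalNegHom F) = -evalNegHom (d⁄dX R F) := by
  ext n
  rw [coeff_derivative, map_neg, coeff_evalNegHom, coeff_evalNegHom, coeff_derivative]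
  ring

/-- The differential equations of the generating series `A`, `B` of the multiple polylogarithms
attached to the weights `(1 + (-1) ^ n) / n ^ 2` and `(-1) ^ n / n`, with the generating variable
`z` marking the depth. -/
structure IsPolylogPair (z : R) (A B : R⟦X⟧) : Prop where
  evalNegHom_left : evalNegHom A = A
  derivative_left :
    d⁄dX R (X * d⁄dX R A) = C z * (geometricSeries * B - evalNegHom (geometricSeries * B))
  derivative_right : d⁄dX R B = -(C z * evalNegHom (geometricSeries * A))

/-- The combination of two polylogarithm pairs `(A₁, B₁)` and `(A₂, B₂)` which, together with
`companion`, satisfies a closed linear system of differential equations when the arguments of the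
pairs are opposite. -/
noncomputable def symmProduct (A₁ B₁ A₂ B₂ : R⟦X⟧) : R⟦X⟧ := B₂ * A₁ + A₂ * B₁

/-- The companion of `symmProduct` in the linear system that the latter satisfies. -/
noncomputable def companion (A₁ B₁ A₂ B₂ : R⟦X⟧) : R⟦X⟧ :=
  A₁ * (X * d⁄dX R A₂) - A₂ * (X * d⁄dX R A₁) + B₁ * evalNegHom B₂ - B₂ * evalNegHom B₁

namespace IsPolylogPair

variable {z : R} {A B A' B' : R⟦X⟧}

lemma derivative_evalNegHom_right (h : IsPolylogPair z A B) :
    d⁄dX R (evalNegHom B) = C z * (geometricSeries * A) := by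
  rw [derivative_evalNegHom, h.derivative_right, map_neg, neg_neg, map_mul, evalNegHom_C,
    evalNegHom_evalNegHom]

lemma X_mul_derivative_symmProduct (h : IsPolylogPair z A B) (h' : IsPolylogPair (-z) A' B') :
    X * d⁄dX R (symmProduct A B A' B') = B' * (X * d⁄dX R A) + B * (X * d⁄dX R A') := by
  simp only [symmProduct, map_add, Derivation.leibniz, smul_eq_mul, h.derivative_right,
    h'.derivative_right, map_mul, h.evalNegHom_left, h'.evalNegHom_left, map_neg]
  ring

lemma derivative_X_mul_derivative_symmProduct (h : IsPolylogPair z A B)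
    (h' : IsPolylogPair (-z) A' B') :
    d⁄dX R (X * d⁄dX R (symmProduct A B A' B')) =
      -(C z * evalNegHom (geometricSeries * companion A B A' B')) := by
  have hX (F G : R⟦X⟧) : evalNegHom (F * (X * d⁄dX R G)) =
      evalNegHom F * (X * d⁄dX R (evalNegHom G)) := by
    rw [derivative_evalNegHom, map_mul, map_mul, evalNegHom_X]
    ring
  rw [X_mul_derivative_symmProduct h h']
  simp only [companion, map_add, map_sub, map_mul, map_neg, hX,
    Derivation.leibniz (d⁄dX R) _ (X * _), smul_eq_mul, h.derivative_left, h'.derivative_left,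
    h.derivative_right, h'.derivative_right, h.evalNegHom_left, h'.evalNegHom_left,
    evalNegHom_evalNegHom]
  ring

lemma derivative_companion (h : IsPolylogPair z A B) (h' : IsPolylogPair (-z) A' B') :
    d⁄dX R (companion A B A' B') = -(2 * C z * (geometricSeries * symmProduct A B A' B')) := by
  simp only [companion, symmProduct, map_add, map_sub, map_neg, map_mul,
    Derivation.leibniz (d⁄dX R) _ (X * _), Derivation.leibniz (d⁄dX R) _ (evalNegHom _),
    smul_eq_mul, h.derivative_left, h'.derivative_left, h.derivative_right, h'.derivative_right,
    h.derivative_evalNegHom_right, h'.derivative_evalNegHom_right, h.evalNegHom_left,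
    h'.evalNegHom_left]
  ring

end IsPolylogPair

end Differential

section Coefficients

variable {R : Type*} [CommRing R] (f : ℝ →+* R) {z : R} {a b : ℕ → R} {A B A' B' : R⟦X⟧}

lemma map_zetaTerm_mul_pow (s n : ℕ) : f (zetaTerm s (n + 1)) * ((n : R) + 1) ^ s = 1 := by
  simpa using congrArg f (zetaTerm_mul_pow s n)

lemma map_altTerm (s n : ℕ) : f (altTerm s n) = (-1) ^ n * f (zetaTerm s n) := by
  simp [altTerm_eq_neg_one_pow_mul]

lemma IsNestedPair.isPolylogPair
    (h : IsNestedPair z (f ∘ (zetaTerm 2 + altTerm 2)) (f ∘ altTerm 1) a b) :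
    IsPolylogPair z (ofPartialSums a) (ofPartialSums b) where
  evalNegHom_left := by
    ext n
    cases n with
    | zero => simp [coeff_evalNegHom]
    | succ n =>
      have hv := congrArg f (neg_one_pow_mul_zetaTerm_add_altTerm 2 (n + 1))
      rw [map_mul, map_pow, map_neg, map_one] at hv
      rw [coeff_evalNegHom, coeff_succ_ofPartialSums, h.succ_left, add_sub_cancel_left,
        Function.comp_apply]
      linear_combination (z * b n) * hv
  derivative_left := by
    ext n
    simp only [coeff_derivative, coeff_succ_X_mul, coeff_succ_ofPartialSums, h.succ_left,
      add_sub_cancel_left, coeff_C_mul, map_sub, coeff_evalNegHom,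
      geometricSeries_mul_ofPartialSums, coeff_mk, Function.comp_apply, Pi.add_apply, map_add,
      map_altTerm]
    linear_combination (z * b n * (1 - (-1) ^ n)) * map_zetaTerm_mul_pow f 2 n
  derivative_right := by
    ext n
    simp only [coeff_derivative, coeff_succ_ofPartialSums, h.succ_right, add_sub_cancel_left,
      map_neg, coeff_C_mul, coeff_evalNegHom, geometricSeries_mul_ofPartialSums, coeff_mk,
      Function.comp_apply, map_altTerm]
    linear_combination (-z * a n * (-1) ^ n) * map_zetaTerm_mul_pow f 1 n

lemma constantCoeff_symmProduct (hA : constantCoeff A = 1) (hB : constantCoeff B = 1)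
    (hA' : constantCoeff A' = 1) (hB' : constantCoeff B' = 1) :
    constantCoeff (symmProduct A B A' B') = 2 := by
  rw [symmProduct, map_add, map_mul, map_mul, hA, hB, hA', hB', one_mul, one_add_one_eq_two]

lemma constantCoeff_companion (hB : constantCoeff B = 1) (hB' : constantCoeff B' = 1) :
    constantCoeff (companion A B A' B') = 0 := by
  have hneg (F : R⟦X⟧) : constantCoeff (evalNegHom F) = constantCoeff F := by
    simpa using coeff_evalNegHom F 0
  simp [companion, hneg, hB, hB']

namespace IsPolylogPair

lemma coeff_succ_symmProduct (h : IsPolylogPair z A B) (h' : IsPolylogPair (-z) A' B') (n : ℕ) :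
    coeff (n + 1) (symmProduct A B A' B') =
      z * f (altTerm 2 (n + 1)) * coeff n (geometricSeries * companion A B A' B') := by
  have hcoeff := congrArg (coeff n) (derivative_X_mul_derivative_symmProduct h h')
  rw [coeff_derivative, coeff_succ_X_mul, coeff_derivative, map_neg, coeff_C_mul,
    coeff_evalNegHom] at hcoeff
  rw [map_altTerm]
  linear_combination f (zetaTerm 2 (n + 1)) * hcoeff -
    coeff (n + 1) (symmProduct A B A' B') * map_zetaTerm_mul_pow f 2 n

lemma coeff_succ_companion (h : IsPolylogPair z A B) (h' : IsPolylogPair (-z) A' B') (n : ℕ) :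
    coeff (n + 1) (companion A B A' B') =
      -2 * (z * f (zetaTerm 1 (n + 1))) * coeff n (geometricSeries * symmProduct A B A' B') := by
  have hcoeff := congrArg (coeff n) (derivative_companion h h')
  rw [coeff_derivative, map_neg, ← map_ofNat (C (R := R)) 2, ← map_mul, coeff_C_mul] at hcoeff
  linear_combination f (zetaTerm 1 (n + 1)) * hcoeff -
    coeff (n + 1) (companion A B A' B') * map_zetaTerm_mul_pow f 1 n

/-- This is the shuffle side of the argument. -/
lemma coeff_geometricSeries_mul_symmProduct {A B A' B' : ℝ⟦X⟧⟦X⟧} (h : IsPolylogPair X A B)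
    (h' : IsPolylogPair (-X) A' B') (hA : constantCoeff A = 1) (hB : constantCoeff B = 1)
    (hA' : constantCoeff A' = 1) (hB' : constantCoeff B' = 1) (n N : ℕ) :
    coeff (2 * n) (coeff N (geometricSeries * symmProduct A B A' B')) =
      2 * ((-2) ^ n * nestedSum (altTerm 2) (zetaTerm 1) (2 * n) N) := by
  suffices hboth : ∀ N,
      (∀ n, coeff (2 * n) (coeff N (geometricSeries * symmProduct A B A' B')) =
        2 * ((-2) ^ n * nestedSum (altTerm 2) (zetaTerm 1) (2 * n) N)) ∧
      ∀ n, coeff (2 * n + 1) (coeff N (geometricSeries * companion A B A' B')) =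
        2 * ((-2) ^ (n + 1) * nestedSum (zetaTerm 1) (altTerm 2) (2 * n + 1) N) from (hboth N).1 n
  clear n N
  intro N
  induction N with
  | zero =>
    simp only [coeff_zero_geometricSeries_mul, constantCoeff_symmProduct hA hB hA' hB',
      constantCoeff_companion hB hB']
    refine ⟨fun n => ?_, by simp⟩
    rw [← map_ofNat (C (R := ℝ)) 2, coeff_C]
    cases n <;> simp [mul_add_one]
  | succ N ih =>
    simp only [coeff_succ_geometricSeries_mul, coeff_succ_symmProduct C h h',
      coeff_succ_companion C h h', map_add]
    refine ⟨fun n => ?_, fun n => ?_⟩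
    · rw [ih.1, mul_assoc]
      cases n with
      | zero => simp
      | succ n =>
        rw [mul_add_one, coeff_succ_X_mul, coeff_C_mul, ih.2, nestedSum_succ_succ]
        ring
    · rw [ih.2, show (-2 : ℝ⟦X⟧) = C (-2) by rw [map_neg, map_ofNat], mul_assoc, mul_assoc,
        coeff_C_mul, coeff_succ_X_mul, coeff_C_mul, ih.1, nestedSum_succ_succ]
      ring

end IsPolylogPair

end Coefficients

/-! ### Convergence of the alternating nested sums -/

section Convergence

lemma exists_tendsto_of_summable_sub {g : ℕ → ℝ} (hg : Summable fun m => g (m + 1) - g m) :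
    ∃ l, Tendsto g atTop (𝓝 l) :=
  ⟨_, by simpa only [sum_range_sub, sub_add_cancel] using hg.hasSum.tendsto_sum_nat.add_const (g 0)⟩

lemma exists_tendsto_sum_mul_of_summable_sub {f g : ℕ → ℝ}
    (hf : ∃ l, Tendsto (fun N => ∑ m ∈ range N, f m) atTop (𝓝 l))
    (hg : Summable fun m => g (m + 1) - g m) :
    ∃ l, Tendsto (fun N => ∑ m ∈ range N, f m * g m) atTop (𝓝 l) := by
  obtain ⟨F, hF⟩ := hf
  obtain ⟨G, hG⟩ := exists_tendsto_of_summable_sub hg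
  have hF' := (tendsto_add_atTop_iff_nat 1).2 hF
  have hsum := hg.norm.mul_tendsto_const (by rwa [Nat.cofinite_eq_atTop])
  refine ⟨_, (tendsto_add_atTop_iff_nat 1).1
    (((hG.mul hF').sub hsum.hasSum.tendsto_sum_nat).congr fun N => ?_)⟩
  have hparts := sum_range_by_parts g f (N + 1)
  simp only [smul_eq_mul, add_tsub_cancel_right] at hparts
  rw [← hparts]
  exact sum_congr rfl fun m _ => mul_comm _ _

lemma exists_tendsto_nestedSum {φ ψ : ℕ → ℝ} (hφ : Summable φ)
    (hψ : ∃ l, Tendsto (fun N => ∑ m ∈ range N, ψ (m + 1)) atTop (𝓝 l)) (k : ℕ) :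
    (∃ l, Tendsto (nestedSum φ ψ k) atTop (𝓝 l)) ∧ ∃ l, Tendsto (nestedSum ψ φ k) atTop (𝓝 l) := by
  suffices h : (Summable fun m => nestedSum φ ψ k (m + 1) - nestedSum φ ψ k m) ∧
      ∃ l, Tendsto (nestedSum ψ φ k) atTop (𝓝 l) from
    ⟨exists_tendsto_of_summable_sub h.1, h.2⟩
  induction k with
  | zero => exact ⟨by simp, 1, tendsto_const_nhds⟩
  | succ k ih =>
    obtain ⟨hsum, l, hl⟩ := ih
    refine ⟨?_, exists_tendsto_sum_mul_of_summable_sub hψ hsum⟩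
    simp only [nestedSum_succ_succ, add_sub_cancel_left]
    exact ((summable_nat_add_iff 1).2 hφ).norm.mul_tendsto_const (by rwa [Nat.cofinite_eq_atTop])

lemma exists_tendsto_nestedSum_of_abs {φ ψ : ℕ → ℝ} {k : ℕ}
    (h : ∃ l, Tendsto (nestedSum (fun n => |φ n|) (fun n => |ψ n|) k) atTop (𝓝 l)) :
    ∃ l, Tendsto (nestedSum φ ψ k) atTop (𝓝 l) := by
  cases k with
  | zero => exact ⟨1, tendsto_const_nhds⟩
  | succ k =>
    obtain ⟨l, hl⟩ := h
    have habs := (hasSum_iff_tendsto_nat_of_nonneg (fun m => mul_nonneg (abs_nonneg _)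
      (nestedSum_nonneg (fun n => abs_nonneg (ψ n)) (fun n => abs_nonneg (φ n)) k m)) l).2 hl
    refine ⟨_, (habs.summable.of_norm_bounded fun m => ?_).hasSum.tendsto_sum_nat⟩
    rw [Real.norm_eq_abs, abs_mul]
    exact mul_le_mul_of_nonneg_left (abs_nestedSum_le ψ φ k m) (abs_nonneg _)

lemma exists_tendsto_sum_altTerm_one :
    ∃ l, Tendsto (fun N => ∑ m ∈ range N, altTerm 1 (m + 1)) atTop (𝓝 l) := by
  obtain ⟨l, hl⟩ := Antitone.tendsto_alternating_series_of_tendsto_zero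
    (f := fun m : ℕ => 1 / ((m : ℝ) + 1)) (fun _ _ hmn => Nat.one_div_le_one_div hmn)
    tendsto_one_div_add_atTop_nhds_zero_nat
  refine ⟨-l, hl.neg.congr fun N => ?_⟩
  rw [← sum_neg_distrib]
  exact sum_congr rfl fun m _ => by rw [altTerm, pow_succ, Nat.cast_add_one, pow_one]; ring

end Convergence

section Abel

/-- The power series `F` converges on `(0, 1)` to a function which tends to `l` at `1`. -/
def HasAbelSum (F : ℝ⟦X⟧) (l : ℝ) : Prop :=
  (∀ t ∈ Set.Ioo (0 : ℝ) 1, Summable fun n => coeff n F * t ^ n) ∧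
    Tendsto (fun t : ℝ => ∑' n, coeff n F * t ^ n) (𝓝[<] 1) (𝓝 l)

namespace HasAbelSum

variable {F G : ℝ⟦X⟧} {l m : ℝ}

lemma unique (h : HasAbelSum F l) (h' : HasAbelSum F m) : l = m :=
  tendsto_nhds_unique h.2 h'.2

lemma eventually_mem_Ioo : ∀ᶠ t : ℝ in 𝓝[<] 1, t ∈ Set.Ioo (0 : ℝ) 1 :=
  Ioo_mem_nhdsLT one_pos

protected lemma zero : HasAbelSum 0 0 :=
  ⟨fun t _ => by simp, by simp⟩

protected lemma add (hF : HasAbelSum F l) (hG : HasAbelSum G m) : HasAbelSum (F + G) (l + m) := by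
  simp only [HasAbelSum, map_add, add_mul]
  refine ⟨fun t ht => (hF.1 t ht).add (hG.1 t ht), (hF.2.add hG.2).congr' ?_⟩
  filter_upwards [eventually_mem_Ioo] with t ht
  exact ((hF.1 t ht).tsum_add (hG.1 t ht)).symm

protected lemma mul (hF : HasAbelSum F l) (hG : HasAbelSum G m) : HasAbelSum (F * G) (l * m) := by
  have hcoeff (t : ℝ) (n : ℕ) : coeff n (F * G) * t ^ n =
      ∑ p ∈ antidiagonal n, coeff p.1 F * t ^ p.1 * (coeff p.2 G * t ^ p.2) := by
    rw [coeff_mul, sum_mul]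
    refine sum_congr rfl fun p hp => ?_
    rw [← mem_antidiagonal.1 hp, pow_add]
    ring
  simp only [HasAbelSum, hcoeff]
  refine ⟨fun t ht => (summable_norm_sum_mul_antidiagonal_of_summable_norm (hF.1 t ht).norm
    (hG.1 t ht).norm).of_norm, (hF.2.mul hG.2).congr' ?_⟩
  filter_upwards [eventually_mem_Ioo] with t ht
  exact tsum_mul_tsum_eq_tsum_sum_antidiagonal_of_summable_norm (hF.1 t ht).norm (hG.1 t ht).norm

protected lemma sum {ι : Type*} {s : Finset ι} {F : ι → ℝ⟦X⟧} {l : ι → ℝ}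
    (h : ∀ i ∈ s, HasAbelSum (F i) (l i)) : HasAbelSum (∑ i ∈ s, F i) (∑ i ∈ s, l i) := by
  classical
  induction s using Finset.induction_on with
  | empty => exact HasAbelSum.zero
  | insert i s hi ih =>
    rw [sum_insert hi, sum_insert hi]
    exact (h i (mem_insert_self i s)).add (ih fun j hj => h j (mem_insert_of_mem hj))

end HasAbelSum

lemma hasAbelSum_of_tendsto {F : ℝ⟦X⟧} {l : ℝ}
    (h : Tendsto (fun N => coeff N (geometricSeries * F)) atTop (𝓝 l)) : HasAbelSum F l := by
  simp only [coeff_geometricSeries_mul] at h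
  replace h := (tendsto_add_atTop_iff_nat (f := fun N => ∑ n ∈ range N, coeff n F) 1).1 h
  refine ⟨fun t ht => ?_, Real.tendsto_tsum_powerSeries_nhdsWithin_lt h⟩
  have hzero : Tendsto (fun n => coeff n F) atTop (𝓝 0) := by
    simpa [sum_range_succ] using ((tendsto_add_atTop_iff_nat 1).2 h).sub h
  simp_rw [mul_comm _ (t ^ _)]
  exact (summable_geometric_of_lt_one ht.1.le ht.2).norm.mul_tendsto_const
    (by rwa [Nat.cofinite_eq_atTop])

/-- The series of the `k`-th coefficients of a power series over `R⟦X⟧`. -/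
noncomputable def innerCoeff {R : Type*} [CommRing R] (k : ℕ) (F : R⟦X⟧⟦X⟧) : R⟦X⟧ :=
  PowerSeries.mk fun n => coeff k (coeff n F)

section InnerCoeff

variable {R : Type*} [CommRing R] (k : ℕ) (F G : R⟦X⟧⟦X⟧)

lemma innerCoeff_add : innerCoeff k (F + G) = innerCoeff k F + innerCoeff k G := by
  ext n
  simp [innerCoeff]

lemma innerCoeff_mul :
    innerCoeff k (F * G) = ∑ p ∈ antidiagonal k, innerCoeff p.1 F * innerCoeff p.2 G := by
  ext n
  simp only [innerCoeff, coeff_mk, coeff_mul, map_sum]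
  exact sum_comm

lemma coeff_geometricSeries_mul_innerCoeff (N : ℕ) :
    coeff N (geometricSeries * innerCoeff k F) = coeff k (coeff N (geometricSeries * F)) := by
  simp [coeff_geometricSeries_mul, innerCoeff]

end InnerCoeff

open scoped PowerSeries.WithPiTopology

/-- Coefficientwise Abel summation of a power series over `ℝ⟦X⟧`. -/
def HasInnerAbelSum (F : ℝ⟦X⟧⟦X⟧) (L : ℝ⟦X⟧) : Prop :=
  ∀ k, HasAbelSum (innerCoeff k F) (coeff k L)

lemma HasInnerAbelSum.add {F G : ℝ⟦X⟧⟦X⟧} {L M : ℝ⟦X⟧} (hF : HasInnerAbelSum F L)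
    (hG : HasInnerAbelSum G M) : HasInnerAbelSum (F + G) (L + M) := fun k => by
  rw [innerCoeff_add, map_add]
  exact (hF k).add (hG k)

lemma HasInnerAbelSum.mul {F G : ℝ⟦X⟧⟦X⟧} {L M : ℝ⟦X⟧} (hF : HasInnerAbelSum F L)
    (hG : HasInnerAbelSum G M) : HasInnerAbelSum (F * G) (L * M) := fun k => by
  rw [innerCoeff_mul, coeff_mul]
  exact HasAbelSum.sum fun p _ => (hF p.1).mul (hG p.2)

lemma hasInnerAbelSum_ofPartialSums {s : ℕ → ℝ⟦X⟧} {L : ℝ⟦X⟧} (h : Tendsto s atTop (𝓝 L)) :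
    HasInnerAbelSum (ofPartialSums s) L := fun k => by
  refine hasAbelSum_of_tendsto ?_
  simp only [coeff_geometricSeries_mul_innerCoeff, geometricSeries_mul_ofPartialSums, coeff_mk]
  exact (WithPiTopology.tendsto_iff_coeff_tendsto _ _ _ _).1 h k

end Abel

/-! ### Comparison of the shuffle and the stuffle product -/

section Zhao

open scoped PowerSeries.WithPiTopology

/-- The product of the two weights is supported on even numbers; this is the distribution
relation. -/
lemma nestedSum_mul_weights_two_mul (n N : ℕ) :
    nestedSum ((zetaTerm 2 + altTerm 2) * altTerm 1) ((zetaTerm 2 + altTerm 2) * altTerm 1) n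
        (2 * N) =
      (1 / 4) ^ n * nestedSum (zetaTerm 3) (zetaTerm 3) n N := by
  have hodd (m : ℕ) : ((zetaTerm 2 + altTerm 2) * altTerm 1) (2 * m + 1) = 0 := by
    simp [altTerm_eq_neg_one_pow_mul, pow_succ, pow_mul]
  have heven : (fun m => ((zetaTerm 2 + altTerm 2) * altTerm 1) (2 * m)) =
      fun m => 1 / 4 * zetaTerm 3 m := by
    funext m
    simp only [altTerm_eq_neg_one_pow_mul, Pi.add_apply, Pi.mul_apply, zetaTerm, pow_mul,
      neg_one_sq, one_pow, one_mul, Nat.cast_mul, Nat.cast_ofNat]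
    rcases eq_or_ne m 0 with rfl | hm
    · simp
    · field_simp
      norm_num
  rw [nestedSum_two_mul_of_odd_eq_zero hodd hodd, heven, nestedSum_const_mul]

lemma hasAbelSum_innerCoeff_symmProduct (n : ℕ) {W : ℝ}
    (hW : Tendsto (nestedSum (altTerm 2) (zetaTerm 1) (2 * n)) atTop (𝓝 W)) :
    HasAbelSum (innerCoeff (2 * n) (symmProduct
      (ofPartialSums (nestedSeries (zetaTerm 2 + altTerm 2) (altTerm 1)))
      (ofPartialSums (nestedSeries (altTerm 1) (zetaTerm 2 + altTerm 2)))
      (ofPartialSums (evalNegHom ∘ nestedSeries (zetaTerm 2 + altTerm 2) (altTerm 1)))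
      (ofPartialSums (evalNegHom ∘ nestedSeries (altTerm 1) (zetaTerm 2 + altTerm 2)))))
      (2 * ((-2) ^ n * W)) := by
  have h := isNestedPair_nestedSeries (zetaTerm 2 + altTerm 2) (altTerm 1)
  have h' := isNestedPair_evalNegHom_nestedSeries (zetaTerm 2 + altTerm 2) (altTerm 1)
  refine hasAbelSum_of_tendsto (((hW.const_mul _).const_mul 2).congr fun N => ?_)
  rw [coeff_geometricSeries_mul_innerCoeff,
    (h.isPolylogPair C).coeff_geometricSeries_mul_symmProduct (h'.isPolylogPair C)
      (constantCoeff_ofPartialSums _ |>.trans h.zero_left)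
      (constantCoeff_ofPartialSums _ |>.trans h.zero_right)
      (constantCoeff_ofPartialSums _ |>.trans h'.zero_left)
      (constantCoeff_ofPartialSums _ |>.trans h'.zero_right)]

lemma exists_tendsto_nestedSeries {φ ψ : ℕ → ℝ}
    (h : ∀ k, ∃ l, Tendsto (nestedSum φ ψ k) atTop (𝓝 l)) :
    ∃ L, Tendsto (nestedSeries φ ψ) atTop (𝓝 L) := by
  choose l hl using h
  refine ⟨PowerSeries.mk l, (WithPiTopology.tendsto_iff_coeff_tendsto _ _ _ _).2 fun k => ?_⟩
  simpa using hl k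

lemma tendsto_evalNegHom {s : ℕ → ℝ⟦X⟧} {L : ℝ⟦X⟧} (h : Tendsto s atTop (𝓝 L)) :
    Tendsto (evalNegHom ∘ s) atTop (𝓝 (evalNegHom L)) := by
  rw [WithPiTopology.tendsto_iff_coeff_tendsto] at h ⊢
  simpa only [Function.comp_apply, coeff_evalNegHom] using fun k => (h k).const_mul _

/-- Both sides are the limit of the same product of generating functions: at the left it is expanded
by the shuffle product, at the right by the stuffle product. -/
lemma shuffle_limit_eq_stuffle_limit (n : ℕ) {W Z : ℝ}
    (hW : Tendsto (nestedSum (altTerm 2) (zetaTerm 1) (2 * n)) atTop (𝓝 W))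
    (hZ : Tendsto (nestedSum (zetaTerm 3) (zetaTerm 3) n) atTop (𝓝 Z)) :
    (-2) ^ n * W = (-1) ^ n * ((1 / 4) ^ n * Z) := by
  have hlim := exists_tendsto_nestedSum (φ := zetaTerm 2 + altTerm 2)
    ((summable_zetaTerm one_lt_two).add (summable_altTerm one_lt_two))
    exists_tendsto_sum_altTerm_one
  obtain ⟨A, hA⟩ := exists_tendsto_nestedSeries fun k => (hlim k).1
  obtain ⟨B, hB⟩ := exists_tendsto_nestedSeries fun k => (hlim k).2
  have hA' := tendsto_evalNegHom hA
  have hB' := tendsto_evalNegHom hB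
  have hshuffle : HasAbelSum _ (coeff (2 * n) (evalNegHom B * A + evalNegHom A * B)) :=
    (((hasInnerAbelSum_ofPartialSums hB').mul (hasInnerAbelSum_ofPartialSums hA)).add
      ((hasInnerAbelSum_ofPartialSums hA').mul (hasInnerAbelSum_ofPartialSums hB))) (2 * n)
  have hstuffle := ((WithPiTopology.tendsto_iff_coeff_tendsto _ _ _ _).1
    ((hB'.mul hA).add (hA'.mul hB)) (2 * n)).comp (tendsto_id.const_mul_atTop' two_pos)
  have hW' := hasAbelSum_innerCoeff_symmProduct n hW
  have hZ' : Tendsto (fun N => 2 * ((-1) ^ n * ((1 / 4) ^ n *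
      nestedSum (zetaTerm 3) (zetaTerm 3) n N))) atTop _ := hstuffle.congr fun N => by
    rw [← nestedSum_mul_weights_two_mul, ← coeff_evalNegHom_nestedSeries_mul_add]
    rfl
  refine mul_left_cancel₀ two_ne_zero ?_
  exact (hW'.unique hshuffle).trans
    (tendsto_nhds_unique hZ' (((hZ.const_mul _).const_mul _).const_mul _))

end Zhao

/-! ### Sums over tuples -/

section Tuples

variable {β : Type*}

/-- The finite set of the pairs `(m, b)` with `m < N` and `b ∈ s m`. When `s m` consists of
decreasing tuples with entries below `m`, these are the decreasing tuples of one more entry. -/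
def prependIndex (s : ℕ → Finset β) (N : ℕ) : Finset (ℕ × β) :=
  ((range N).sigma s).map (Equiv.sigmaEquivProd ℕ β).toEmbedding

@[simp]
lemma mem_prependIndex {s : ℕ → Finset β} {N : ℕ} {v : ℕ × β} :
    v ∈ prependIndex s N ↔ v.1 < N ∧ v.2 ∈ s v.1 := by
  simp [prependIndex, mem_map_equiv]

lemma sum_prependIndex {R : Type*} [Semiring R] {s : ℕ → Finset β} (hs : s 0 = ∅) {φ ψ : ℕ → R}
    {g : β → R} {k : ℕ} (h : ∀ N, ∑ b ∈ s (N + 1), g b = nestedSum ψ φ k N) (N : ℕ) :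
    ∑ v ∈ prependIndex s (N + 1), φ v.1 * g v.2 = nestedSum φ ψ (k + 1) N := by
  simp only [prependIndex, sum_map, sum_sigma, Equiv.coe_toEmbedding, Equiv.sigmaEquivProd_apply,
    ← mul_sum]
  rw [sum_range_succ', hs, sum_empty, mul_zero, add_zero]
  exact sum_congr rfl fun m _ => by rw [h]

lemma sum_Ico_one_eq_nestedSum {R : Type*} [Semiring R] (φ ψ : ℕ → R) (N : ℕ) :
    ∑ n ∈ Ico 1 (N + 1), φ n = nestedSum φ ψ 1 N := by
  simp [nestedSum_succ_left, sum_Ico_eq_sum_range, add_comm 1]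

lemma sum_pairs_eq_nestedSum {R : Type*} [Semiring R] (φ ψ : ℕ → R) (N : ℕ) :
    ∑ v ∈ prependIndex (Ico 1) (N + 1), φ v.1 * ψ v.2 = nestedSum φ ψ 2 N :=
  sum_prependIndex rfl (sum_Ico_one_eq_nestedSum ψ φ) N

lemma sum_quadruples_eq_nestedSum {R : Type*} [Semiring R] (φ ψ : ℕ → R) (N : ℕ) :
    ∑ v ∈ prependIndex (prependIndex (prependIndex (Ico 1))) (N + 1),
      φ v.1 * (ψ v.2.1 * (φ v.2.2.1 * ψ v.2.2.2)) = nestedSum φ ψ 4 N :=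
  sum_prependIndex rfl (sum_prependIndex rfl (sum_pairs_eq_nestedSum φ ψ)) N

lemma hasSum_of_tendsto_sum_of_exhausting {s : ℕ → Finset β} (hmono : Monotone s)
    (hexh : ∀ b, ∃ N, b ∈ s N) {g : β → ℝ} {l : ℝ}
    (habs : ∃ M, Tendsto (fun N => ∑ b ∈ s N, |g b|) atTop (𝓝 M))
    (h : Tendsto (fun N => ∑ b ∈ s N, g b) atTop (𝓝 l)) : HasSum g l := by
  have hs := tendsto_atTop_finset_of_monotone hmono hexh
  obtain ⟨M, hM⟩ := habs
  have hsum : HasSum (fun b => |g b|) M := (tendsto_iff_tendsto_subseq_of_monotone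
    (fun _ _ hst => sum_le_sum_of_subset_of_nonneg hst fun _ _ _ => abs_nonneg _) hs).2 hM
  have hg := hsum.summable.of_abs.hasSum
  rwa [tendsto_nhds_unique h (hg.comp hs)]

lemma hasSum_subtype_of_tendsto_nestedSum {s : ℕ → Finset β} {P : β → Prop} {r : β → ℕ}
    (hs : ∀ N b, b ∈ s N ↔ P b ∧ r b < N) {g : β → ℝ} {φ ψ : ℕ → ℝ} {k : ℕ} {l : ℝ}
    (hg : ∀ N, ∑ b ∈ s (N + 1), g b = nestedSum φ ψ k N)
    (hgabs : ∀ N, ∑ b ∈ s (N + 1), |g b| = nestedSum (fun n => |φ n|) (fun n => |ψ n|) k N)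
    (habs : ∃ M, Tendsto (nestedSum (fun n => |φ n|) (fun n => |ψ n|) k) atTop (𝓝 M))
    (h : Tendsto (nestedSum φ ψ k) atTop (𝓝 l)) : HasSum (fun b : {b // P b} => g b) l := by
  classical
  have hsub (f : β → ℝ) (N : ℕ) : ∑ b ∈ (s N).subtype P, f b = ∑ b ∈ s N, f b :=
    sum_subtype_of_mem f fun b hb => ((hs N b).1 hb).1
  refine hasSum_of_tendsto_sum_of_exhausting (s := fun N => (s (N + 1)).subtype P)
    (fun M N hMN b => ?_) (fun b => ⟨r b, ?_⟩) ?_ ?_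
  · simp only [mem_subtype, hs]
    exact fun hb => ⟨hb.1, by lia⟩
  · simp [hs, b.2]
  · simpa only [hsub (fun b => |g b|), hgabs] using habs
  · simpa only [hsub, hg] using h

lemma hasSum_pairs {φ ψ : ℕ → ℝ} {l : ℝ}
    (habs : ∃ M, Tendsto (nestedSum (fun n => |φ n|) (fun n => |ψ n|) 2) atTop (𝓝 M))
    (h : Tendsto (nestedSum φ ψ 2) atTop (𝓝 l)) :
    HasSum (fun t : {v : ℕ × ℕ // 0 < v.2 ∧ v.2 < v.1} => φ t.1.1 * ψ t.1.2) l := by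
  refine hasSum_subtype_of_tendsto_nestedSum (s := prependIndex (Ico 1)) (r := Prod.fst)
    (g := fun v => φ v.1 * ψ v.2) (fun N v => ?_) (sum_pairs_eq_nestedSum φ ψ) (fun N => ?_) habs h
  · simp only [mem_prependIndex, mem_Ico]
    lia
  · simp only [abs_mul]
    exact sum_pairs_eq_nestedSum (fun n => |φ n|) (fun n => |ψ n|) N

lemma hasSum_quadruples {φ ψ : ℕ → ℝ} {l : ℝ}
    (habs : ∃ M, Tendsto (nestedSum (fun n => |φ n|) (fun n => |ψ n|) 4) atTop (𝓝 M))
    (h : Tendsto (nestedSum φ ψ 4) atTop (𝓝 l)) :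
    HasSum (fun t : {v : ℕ × ℕ × ℕ × ℕ //
        0 < v.2.2.2 ∧ v.2.2.2 < v.2.2.1 ∧ v.2.2.1 < v.2.1 ∧ v.2.1 < v.1} =>
      φ t.1.1 * (ψ t.1.2.1 * (φ t.1.2.2.1 * ψ t.1.2.2.2))) l := by
  refine hasSum_subtype_of_tendsto_nestedSum
    (s := prependIndex (prependIndex (prependIndex (Ico 1)))) (r := Prod.fst)
    (g := fun v => φ v.1 * (ψ v.2.1 * (φ v.2.2.1 * ψ v.2.2.2))) (fun N v => ?_)
    (sum_quadruples_eq_nestedSum φ ψ) (fun N => ?_) habs h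
  · simp only [mem_prependIndex, mem_Ico]
    lia
  · simp only [abs_mul]
    exact sum_quadruples_eq_nestedSum (fun n => |φ n|) (fun n => |ψ n|) N

end Tuples

section Summands

variable (k m p q : ℕ)

lemma one_div_eq_mul_zetaTerm :
    1 / ((k : ℝ) ^ 2 * m * (p : ℝ) ^ 2 * q) =
      zetaTerm 2 k * (zetaTerm 1 m * (zetaTerm 2 p * zetaTerm 1 q)) := by
  simp only [zetaTerm, pow_one, one_div_mul_one_div, mul_assoc]

lemma neg_one_pow_div_eq_mul_altTerm :
    (-1) ^ k * (-1) ^ p / ((k : ℝ) ^ 2 * m * (p : ℝ) ^ 2 * q) =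
      altTerm 2 k * (zetaTerm 1 m * (altTerm 2 p * zetaTerm 1 q)) := by
  rw [altTerm_eq_neg_one_pow_mul, altTerm_eq_neg_one_pow_mul, ← mul_one_div,
    one_div_eq_mul_zetaTerm]
  ring

lemma one_div_eq_zetaTerm_mul_zetaTerm :
    1 / ((k : ℝ) ^ 3 * (m : ℝ) ^ 3) = zetaTerm 3 k * zetaTerm 3 m :=
  (one_div_mul_one_div _ _).symm

end Summands

end EulerSum

open EulerSum Filter Topology in
/-- Zhao's theorem `ζ({2, 1}ⁿ) = 8ⁿ ζ({2̄, 1}ⁿ) = ζ({3}ⁿ)`. -/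
theorem stmt_13_general (n : ℕ) :
    ∃ Z, Tendsto (nestedSum (zetaTerm 2) (zetaTerm 1) (2 * n)) atTop (𝓝 Z) ∧
      Tendsto (nestedSum (altTerm 2) (zetaTerm 1) (2 * n)) atTop (𝓝 (Z / 8 ^ n)) ∧
      Tendsto (nestedSum (zetaTerm 3) (zetaTerm 3) n) atTop (𝓝 Z) := by
  obtain ⟨Z, hζ, hζ₃⟩ := exists_tendsto_nestedSum_zetaTerm n
  obtain ⟨W, hW⟩ : ∃ W, Tendsto (nestedSum (altTerm 2) (zetaTerm 1) (2 * n)) atTop (𝓝 W) :=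
    exists_tendsto_nestedSum_of_abs ⟨Z, by
      simpa only [abs_altTerm, abs_zetaTerm] using hζ⟩
  have hWZ : Z / 8 ^ n = W := by
    have h := shuffle_limit_eq_stuffle_limit n hW hζ₃
    have hpow : (-2 : ℝ) ^ n = (-1) ^ n * (1 / 4) ^ n * 8 ^ n := by
      rw [← mul_pow, ← mul_pow]
      norm_num
    rw [hpow, mul_assoc, mul_assoc] at h
    rw [div_eq_iff (by positivity), mul_comm]
    exact (mul_left_cancel₀ (by positivity) (mul_left_cancel₀ (by simp) h)).symm
  exact ⟨Z, hζ, hWZ ▸ hW, hζ₃⟩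

/-- `∑_{k>m>p>q>0} 1/(k² m p² q) = 64 ∑_{k>m>p>q>0} (−1)^k (−1)^p/(k² m p² q)`,
and both equal `ζ(3,3) = ∑_{n>m>0} 1/(n³ m³)`. -/
theorem stmt_13 :
    (∑' t : {v : ℕ × ℕ × ℕ × ℕ //
          0 < v.2.2.2 ∧ v.2.2.2 < v.2.2.1 ∧ v.2.2.1 < v.2.1 ∧ v.2.1 < v.1},
        (1 : ℝ) / ((t.1.1 : ℝ) ^ 2 * (t.1.2.1 : ℝ) * (t.1.2.2.1 : ℝ) ^ 2 * (t.1.2.2.2 : ℝ)) =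
      64 * ∑' t : {v : ℕ × ℕ × ℕ × ℕ //
          0 < v.2.2.2 ∧ v.2.2.2 < v.2.2.1 ∧ v.2.2.1 < v.2.1 ∧ v.2.1 < v.1},
        ((-1 : ℝ) ^ t.1.1 * (-1 : ℝ) ^ t.1.2.2.1) /
          ((t.1.1 : ℝ) ^ 2 * (t.1.2.1 : ℝ) * (t.1.2.2.1 : ℝ) ^ 2 * (t.1.2.2.2 : ℝ))) ∧
    (∑' t : {v : ℕ × ℕ × ℕ × ℕ //
          0 < v.2.2.2 ∧ v.2.2.2 < v.2.2.1 ∧ v.2.2.1 < v.2.1 ∧ v.2.1 < v.1},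
        (1 : ℝ) / ((t.1.1 : ℝ) ^ 2 * (t.1.2.1 : ℝ) * (t.1.2.2.1 : ℝ) ^ 2 * (t.1.2.2.2 : ℝ)) =
      ∑' p : {v : ℕ × ℕ // 0 < v.2 ∧ v.2 < v.1},
        (1 : ℝ) / ((p.1.1 : ℝ) ^ 3 * (p.1.2 : ℝ) ^ 3)) := by
  obtain ⟨Z, hζ, hη, hζ₃⟩ := stmt_13_general 2
  have hsum := EulerSum.hasSum_quadruples ⟨Z, by simpa only [EulerSum.abs_zetaTerm] using hζ⟩ hζ
  have hsumAlt := EulerSum.hasSum_quadruples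
    ⟨Z, by simpa only [EulerSum.abs_altTerm, EulerSum.abs_zetaTerm] using hζ⟩ hη
  have hsumPairs := EulerSum.hasSum_pairs
    ⟨Z, by simpa only [EulerSum.abs_zetaTerm] using hζ₃⟩ hζ₃
  simp only [EulerSum.one_div_eq_mul_zetaTerm, EulerSum.neg_one_pow_div_eq_mul_altTerm,
    EulerSum.one_div_eq_zetaTerm_mul_zetaTerm, hsum.tsum_eq, hsumAlt.tsum_eq, hsumPairs.tsum_eq]
  exact ⟨by ring, trivial⟩
end
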